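/- As |S| → ∞ over finite simple groups S, 𝒥(S) → 1. Precisely: for every real ε > 0 there exists N such that every finite simple group S with |S| > N satisfies 𝒥(S) < 1 + ε. -/

import Mathlib

/-!
Let `d` be the least index of a proper subgroup of the finite simple group `S`, and `ℓ = ⌈log₂ d⌉`. As
`S` acts faithfully on `d` points, `|S|` divides `d!`, so `d → ∞`. All indices `m > 1` are divisors of
`|S|` with `m ≥ d`, and `𝒥(S) - 1` is shown to be at most `3 / ℓ`. The classification of the finite simple
groups is not needed.

*Few primes.* Rankin's trick (`sum_inv_divisors_le_pow`) bounds the sum of `1 / e` over the divisors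
`e ≥ E` of a number `w` with at most `W` prime factors by a negative power of `W + 1` as soon as `log E`
is a large multiple of `(log W) ^ 2`. This settles the case in which `|S|` has at most `exp (O((log ℓ) ^ 2))`
prime factors.

*Many primes.* Otherwise `S` has a subgroup `L`, of index at most `2 ^ (1 + (13 ℓ) ^ 4 ℓ ^ 2)`, mapping
onto some `Alt(k)` with `k` larger than any given power of `ℓ` (`extracts`,
`hasGiant_of_card_primeFactors`). Here one follows the primes `p` for which an element of order `p`
acts nontrivially. Imprimitive actions are replaced by the action on blocks or on a block, primitive but
not doubly transitive ones by a short suborbit (Jordan), and doubly transitive ones by a point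
stabilizer. As the degree can be halved only `ℓ` times, this leads to an action that is
`(13 ℓ) ^ 4`-transitive. A suitable power of an element with cycles of many prime lengths has small
support there (`exists_small_support`), and an element of minimal support is then a `3`-cycle
(`alternating_le_of_small_support`).

*Indices in the presence of `L`.* Indices `m > 2 ^ J`, where `J = 16 (ℓ + 1) ^ 2`, are handled by Rankin's
trick for `|S|`, and those sharing a large factor with `[S : L]` by Rankin's trick for `[S : L]`. For
the others consider the action of `L` on the `m` cosets. Some point stabilizer does not map onto
`Alt(k)` (`exists_affected`), so its image is a proper subgroup of small index in `Alt(k)` and has a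
short orbit (`alternating_le_or_small_orbit`). Hence `k` divides a small multiple of `m` (`key_dvd`), and
the reciprocals of such `m` have a small sum (`sum_inv_le_of_dvd`).

The existence of the affected point is the delicate step. If a group mapping onto a nonabelian simple
group acts on few points with all point stabilizers still mapping onto it, then so should the kernel of
the action. `unaffected` proves this along a chain `Alt(p₀) < Alt(p₁) < ⋯` of prime degrees, where the
number of points allowed doubles with every `w` steps in the chain.
-/

universe u v

/-- `𝒥(G)`: the sum of the reciprocals of the indices of the subgroups of a finite
group `G`, each distinct index counted exactly once. -/
noncomputable def HSJ (G : Type*) [Group G] [Finite G] : ℝ :=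
  ∑ᶠ m ∈ Set.range (fun H : Subgroup G => H.index), (1 : ℝ) / (m : ℝ)

/-! ### Rankin's trick for divisor sums -/

section
theorem sum_le_sum_range_of_antitone (f : ℕ → ℝ) (hf : ∀ a b, 2 ≤ a → a ≤ b → f b ≤ f a)
    (s : Finset ℕ) (hs : ∀ x ∈ s, 2 ≤ x) : ∑ x ∈ s, f x ≤ ∑ j ∈ Finset.range s.card, f (j + 2) := by
  induction s using Finset.induction_on_max with
  | empty => simp
  | insert a s ha ih =>
    have has : a ∉ s := fun h => lt_irrefl _ (ha a h)
    rw [Finset.sum_insert has, Finset.card_insert_of_notMem has, Finset.sum_range_succ]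
    have h1 := ih (fun x hx => hs x (Finset.mem_insert_of_mem hx))
    have h2 : s.card + 2 ≤ a := by
      have : s ⊆ Finset.Ico 2 a := fun x hx =>
        Finset.mem_Ico.2 ⟨hs x (Finset.mem_insert_of_mem hx), ha x hx⟩
      have h3 := Finset.card_le_card this
      have h4 := hs a (Finset.mem_insert_self _ _)
      simp at h3
      omega
    have := hf _ _ (by omega) h2
    linarith

/-- Rankin's trick: with `σ = 1 / log (W + 1)`, each divisor `e ≥ E` satisfies
`1 / e ≤ E ^ (-σ) * e ^ (σ - 1)`, and the sum of `e ^ (σ - 1)` over all divisors is at most the Euler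
product over the at most `W` primes dividing `w`. The exponent `σ` is small enough that replacing
these primes by `2, …, W + 1` bounds the product by a fixed power of `W + 1`. -/
theorem sum_inv_divisors_le {w : ℕ} (hw : w ≠ 0) {W : ℕ} (hW : 60 ≤ W)
    (hcard : w.primeFactors.card ≤ W) {E : ℝ} (hE : 0 < E) :
    ∑ e ∈ w.divisors with E ≤ (e : ℕ), (1 : ℝ) / e
      ≤ Real.exp (- Real.log E / Real.log (W + 1)) * (W + 1 : ℝ) ^ 7 := by
  set L := Real.log (W + 1) with hL
  have hWr : (60 : ℝ) ≤ W := by exact_mod_cast hW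
  have hL4 : 4 ≤ L := by
    rw [hL, Real.le_log_iff_exp_le (by linarith)]
    have h1 := Real.exp_one_lt_d9
    have h2 : Real.exp 4 = Real.exp 1 ^ 4 := by rw [← Real.exp_nat_mul]; norm_num
    rw [h2]
    calc Real.exp 1 ^ 4 ≤ 2.7182818286 ^ 4 := by gcongr
      _ ≤ 61 := by norm_num
      _ ≤ _ := by linarith
  set σ := 1 / L with hσ
  have hσ0 : 0 < σ := by positivity
  have hσ4 : σ ≤ 1/4 := by
    rw [hσ]; apply one_div_le_one_div_of_le <;> linarith
  have hσL : σ * L = 1 := by rw [hσ]; field_simp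
  let f : ℕ →* ℝ :=
    { toFun := fun m => (m : ℝ) ^ (σ - 1)
      map_one' := by simp
      map_mul' := fun a b => by
        push_cast
        rw [Real.mul_rpow (by positivity) (by positivity)] }
  have fdef : ∀ m : ℕ, f m = (m : ℝ) ^ (σ - 1) := fun m => rfl
  have fnn : ∀ m : ℕ, 0 ≤ f m := fun m => by rw [fdef]; positivity
  have fanti : ∀ a b : ℕ, 2 ≤ a → a ≤ b → f b ≤ f a := by
    intro a b ha hab
    rw [fdef, fdef]
    apply Real.rpow_le_rpow_of_nonpos
    · exact_mod_cast (by omega : 0 < a)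
    · exact_mod_cast hab
    · linarith
  have hf2 : f 2 ≤ 0.6 := by
    rw [fdef]
    have h1 : ((2 : ℕ) : ℝ) ^ (σ - 1) ≤ (2 : ℝ) ^ (-(3/4) : ℝ) := by
      push_cast
      apply Real.rpow_le_rpow_of_exponent_le <;> linarith
    refine h1.trans ?_
    have h3 : ((2 : ℝ) ^ (-(3/4) : ℝ)) ^ 4 = 1/8 := by
      rw [← Real.rpow_natCast, ← Real.rpow_mul (by norm_num)]
      norm_num
    by_contra! hcon
    have : (0.6 : ℝ) ^ 4 < ((2 : ℝ) ^ (-(3/4) : ℝ)) ^ 4 := by gcongr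
    rw [h3] at this
    norm_num at this
  have hflt : ∀ {p : ℕ}, p.Prime → f p ≤ 0.6 := fun {p} hp => (fanti 2 p le_rfl hp.two_le).trans hf2
  obtain ⟨hsum, hhas⟩ := EulerProduct.summable_and_hasSum_factoredNumbers_prod_filter_prime_geometric
    (f := f) (fun {p} hp => by
      rw [Real.norm_of_nonneg (fnn p)]; have := hflt hp; norm_num at this ⊢; linarith) w.primeFactors
  have hfilter : w.primeFactors.filter Nat.Prime = w.primeFactors := by
    apply Finset.filter_true_of_mem
    intro p hp; exact Nat.prime_of_mem_primeFactors hp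
  rw [hfilter] at hhas
  -- every divisor of `w` is a product of primes of `w`, so the Euler product dominates the sum
  have hdiv : ∑ e ∈ w.divisors, f e ≤ ∏ p ∈ w.primeFactors, (1 - f p)⁻¹ := by
    have hmem : ∀ e ∈ w.divisors, e ∈ Nat.factoredNumbers w.primeFactors := by
      intro e he
      rw [Nat.mem_factoredNumbers']
      intro p hp hpe
      exact Nat.mem_primeFactors.2 ⟨hp, hpe.trans (Nat.dvd_of_mem_divisors he), hw⟩
    rw [← Finset.sum_attach]
    have := sum_le_hasSum (f := fun m : Nat.factoredNumbers w.primeFactors => f m)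
      (w.divisors.attach.map ⟨fun e => ⟨e.1, hmem e.1 e.2⟩, fun a b h =>
        Subtype.ext (congrArg (fun z => z.1) h)⟩) (fun _ _ => fnn _) hhas
    rw [Finset.sum_map] at this
    exact this
  -- `f p ≤ 0.6` gives `(1 - f p)⁻¹ ≤ exp (2.5 * f p)`
  have hprod : ∏ p ∈ w.primeFactors, (1 - f p)⁻¹ ≤ (W + 1 : ℝ) ^ 7 := by
    have h1 : ∏ p ∈ w.primeFactors, (1 - f p)⁻¹ ≤ ∏ p ∈ w.primeFactors, Real.exp (2.5 * f p) := by
      apply Finset.prod_le_prod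
      · intro p hp
        have := hflt (Nat.prime_of_mem_primeFactors hp)
        have : 0 ≤ 1 - f p := by norm_num at this; linarith
        positivity
      · intro p hp
        have h2 := hflt (Nat.prime_of_mem_primeFactors hp)
        have h0 := fnn p
        norm_num at h2
        have h3 : (0:ℝ) < 1 - f p := by linarith
        have h4 := Real.add_one_le_exp (2.5 * f p)
        refine le_trans ?_ h4
        rw [inv_le_iff_one_le_mul₀ h3]
        nlinarith
    refine h1.trans ?_
    rw [← Real.exp_sum, ← Finset.mul_sum]
    have h5 : ∑ p ∈ w.primeFactors, f p ≤ Real.exp 1 * L := by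
      have h6 := sum_le_sum_range_of_antitone f fanti w.primeFactors
        (fun p hp => (Nat.prime_of_mem_primeFactors hp).two_le)
      refine h6.trans ?_
      have h7 : ∑ j ∈ Finset.range w.primeFactors.card, f (j + 2)
          ≤ ∑ j ∈ Finset.range W, f (j + 2) := by
        apply Finset.sum_le_sum_of_subset_of_nonneg
        · simpa using hcard
        · intros; exact fnn _
      refine h7.trans ?_
      have h8 : ∀ j ∈ Finset.range W, f (j + 2) ≤ Real.exp 1 * (1 / ((j : ℝ) + 1 + 1)) := by
        intro j hj
        have hj' : j < W := Finset.mem_range.1 hj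
        rw [fdef]
        have e1 : ((j + 2 : ℕ) : ℝ) = (j : ℝ) + 1 + 1 := by push_cast; ring
        have e0 : (0:ℝ) < (j : ℝ) + 1 + 1 := by positivity
        rw [e1, Real.rpow_sub_one e0.ne', div_eq_mul_one_div]
        gcongr
        -- `(W + 1) ^ σ = e`, so the factor `(j + 2) ^ σ` costs only a constant
        have : Real.exp 1 = (W + 1 : ℝ) ^ σ := by
          rw [Real.rpow_def_of_pos (by linarith), mul_comm, hσL]
        rw [this]
        apply Real.rpow_le_rpow e0.le _ hσ0.le
        have : (j : ℝ) + 1 ≤ W := by exact_mod_cast hj'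
        linarith
      refine (Finset.sum_le_sum h8).trans ?_
      rw [← Finset.mul_sum]
      gcongr
      have h9 := harmonic_le_one_add_log (W + 1)
      rw [harmonic, Finset.sum_range_succ'] at h9
      push_cast at h9
      simp only [inv_one] at h9
      simp only [one_div]
      linarith
    have h10 : (W + 1 : ℝ) ^ 7 = Real.exp (7 * L) := by
      rw [hL, mul_comm, Real.exp_mul, Real.exp_log (by linarith)]
      norm_cast
    rw [h10]
    apply Real.exp_le_exp.2
    have := Real.exp_one_lt_d9
    norm_num at this ⊢
    nlinarith
  have hfin : ∑ e ∈ w.divisors with E ≤ (e : ℕ), (1 : ℝ) / e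
      ≤ Real.exp (- Real.log E / L) * ∑ e ∈ w.divisors, f e := by
    rw [Finset.mul_sum, Finset.sum_filter]
    apply Finset.sum_le_sum
    intro e he
    have he0 : (0 : ℝ) < e := by exact_mod_cast Nat.pos_of_mem_divisors he
    split_ifs with h
    · rw [fdef, Real.rpow_sub_one he0.ne', ← mul_div_assoc]
      gcongr
      rw [Real.rpow_def_of_pos he0, ← Real.exp_add]
      apply Real.one_le_exp
      have h3 : Real.log E ≤ Real.log e := Real.log_le_log hE h
      have : -Real.log E / L = - Real.log E * σ := by rw [hσ]; ring
      rw [this]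
      nlinarith
    · have := fnn e; positivity
  refine hfin.trans ?_
  gcongr
  exact hdiv.trans hprod

end

/-! ### Three-cycles and alternating groups -/

section
open Equiv Equiv.Perm

/-- Two permutations whose supports meet in a single point `i` have a `3`-cycle as commutator. -/
theorem isThreeCycle_commutator {α : Type*} [Fintype α] [DecidableEq α] {σ τ : Perm α} {i : α}
    (h : ∀ x, σ x ≠ x → τ x ≠ x → x = i) (hσ : σ i ≠ i) (hτ : τ i ≠ i) :
    (σ * τ * σ⁻¹ * τ⁻¹).IsThreeCycle := by
  have hne : σ i ≠ τ i := by
    intro h1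
    apply hσ
    apply h
    · exact fun h2 => hσ (σ.injective h2)
    · rw [h1]; exact fun h2 => hτ (τ.injective h2)
  have hσ' : ∀ x, τ x ≠ x → x ≠ i → σ x = x := fun x h1 h2 => by
    by_contra h3; exact h2 (h x h3 h1)
  have hτ' : ∀ x, σ x ≠ x → x ≠ i → τ x = x := fun x h1 h2 => by
    by_contra h3; exact h2 (h x h1 h3)
  have key : σ * τ = (swap i (τ i) * swap i (σ i)) * (τ * σ) := by
    ext x
    simp only [Perm.mul_apply]
    by_cases hx : x = i
    · subst hx
      have : τ (σ x) = σ x := hτ' _ (fun h2 => hσ (σ.injective h2)) hσ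
      rw [this, swap_apply_right, swap_apply_left]
      exact hσ' _ (fun h2 => hτ (τ.injective h2)) hτ
    by_cases h1 : τ x = x
    · rw [h1]
      by_cases h2 : σ x = i
      · rw [h2, swap_apply_of_ne_of_ne hτ hne.symm, swap_apply_right]
      · by_cases h3 : σ x = x
        · rw [h3, h1, swap_apply_of_ne_of_ne hx (by
            intro h4; apply hx; apply σ.injective; rw [← h4, h3]),
            swap_apply_of_ne_of_ne hx (by
            intro h4; apply hx; apply τ.injective; rw [← h4, h1])]
        · have h4 : τ (σ x) = σ x := hτ' _ (fun h2 => h3 (σ.injective h2)) h2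
          rw [h4, swap_apply_of_ne_of_ne h2 (fun h5 => hx (σ.injective h5)),
            swap_apply_of_ne_of_ne h2]
          intro h5
          have : σ (τ i) = τ i := hσ' _ (fun h2 => hτ (τ.injective h2)) hτ
          rw [← this] at h5
          have h6 := σ.injective h5
          rw [h6] at h1
          exact hτ (τ.injective h1)
    · rw [hσ' x h1 hx]
      by_cases h2 : τ x = i
      · rw [h2, swap_apply_left, swap_apply_of_ne_of_ne hσ hne]
      · have h4 : σ (τ x) = τ x := hσ' _ (fun h2 => h1 (τ.injective h2)) h2
        rw [h4, swap_apply_of_ne_of_ne h2, swap_apply_of_ne_of_ne h2 (fun h5 => hx (τ.injective h5))]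
        intro h5
        have : τ (σ i) = σ i := hτ' _ (fun h2 => hσ (σ.injective h2)) hσ
        rw [← this] at h5
        have h6 := τ.injective h5
        have h7 := hσ' x h1 hx
        rw [h6] at h7
        exact hσ (σ.injective h7)
  have : σ * τ * σ⁻¹ * τ⁻¹ = swap i (τ i) * swap i (σ i) := by
    rw [key]; group
  rw [this]
  exact isThreeCycle_swap_mul_swap_same hτ.symm hσ.symm hne.symm

end

/-! ### Subgroups of small index in symmetric groups -/

section
open Equiv Equiv.Perm MulAction
open scoped Pointwise

theorem two_pow_le_choose_of_two_mul_le {k s : ℕ} (h : 2 * s ≤ k) : 2 ^ s ≤ k.choose s := by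
  induction s generalizing k with
  | zero => simp
  | succ s ih =>
    obtain ⟨k, rfl⟩ : ∃ k', k = k' + 1 := ⟨k - 1, by omega⟩
    have h1 := ih (k := k) (by omega)
    have h2 := Nat.add_one_mul_choose_eq k s
    have h3 : (2 * (s + 1)) * k.choose s ≤ (k + 1) * k.choose s := Nat.mul_le_mul_right _ h
    have h4 : (s + 1) * (2 * k.choose s) ≤ (s + 1) * (k + 1).choose (s + 1) := by
      rw [mul_comm (s + 1) ((k + 1).choose (s + 1)), ← h2]; linarith
    have h5 := Nat.le_of_mul_le_mul_left h4 (by omega)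
    rw [pow_succ]; omega

variable {α : Type*} [Fintype α] [DecidableEq α]

/-- If `Z` preserves `O`, permutations carrying `O` to different subsets lie in different cosets of
`Z`, so the index of `Z` is at least the number of `|O|`-element subsets. -/
theorem two_pow_le_index {Z : Subgroup (Perm α)} (O : Finset α) (hO : ∀ g ∈ Z, ∀ x ∈ O, g x ∈ O)
    (hc : 2 * O.card ≤ Fintype.card α) : 2 ^ O.card ≤ Z.index := by
  refine (two_pow_le_choose_of_two_mul_le hc).trans ?_
  have hex : ∀ t : {t : Finset α // t.card = O.card}, ∃ σ : Perm α, ∀ x, x ∈ O → σ x ∈ t.1 := by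
    rintro ⟨t, ht⟩
    have e : {x // x ∈ O} ≃ {x // x ∈ t} := (Finset.equivOfCardEq ht).symm
    refine ⟨e.extendSubtype, fun x hx => ?_⟩
    exact e.extendSubtype_mem x hx
  choose σ hσ using hex
  have himg : ∀ t, O.image (σ t) = t.1 := by
    intro t
    apply Finset.eq_of_subset_of_card_le
    · intro y hy
      obtain ⟨x, hx, rfl⟩ := Finset.mem_image.1 hy
      exact hσ t x hx
    · rw [Finset.card_image_of_injective _ (σ t).injective, t.2]
  have hinj : Function.Injective (fun t => (σ t : Perm α ⧸ Z)) := by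
    intro t t' h
    have h1 := QuotientGroup.eq.1 h
    apply Subtype.ext
    rw [← himg t, ← himg t']
    symm
    apply Finset.eq_of_subset_of_card_le
    · intro y hy
      obtain ⟨x, hx, rfl⟩ := Finset.mem_image.1 hy
      refine Finset.mem_image.2 ⟨_, hO _ h1 x hx, ?_⟩
      simp
    · rw [Finset.card_image_of_injective _ (σ t).injective,
        Finset.card_image_of_injective _ (σ t').injective]
  have h2 := Nat.card_le_card_of_injective _ hinj
  rw [Subgroup.index_eq_card]
  refine le_trans ?_ h2
  rw [Nat.card_eq_fintype_card, ← Fintype.card_finset_len]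

/-- A subgroup of index less than `v!` contains a nontrivial element supported in any given set of
`v` points: otherwise the permutations of that set would lie in pairwise distinct cosets. -/
theorem exists_ne_one_supported {Z : Subgroup (Perm α)} {v : ℕ} (hZ : Z.index < v.factorial)
    (V : Finset α) (hV : v ≤ V.card) : ∃ g ∈ Z, g ≠ 1 ∧ ∀ x, g x ≠ x → x ∈ V := by
  by_contra! hcon
  have hinj : Function.Injective (fun g : Perm {x // x ∈ V} => ((ofSubtype g : Perm α) : Perm α ⧸ Z)) := by
    intro g g' h
    have h1 := QuotientGroup.eq.1 h
    rw [← map_inv, ← map_mul] at h1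
    by_contra hne
    obtain ⟨x, hx1, hx2⟩ := hcon _ h1 (by
      intro h2
      exact hne (inv_mul_eq_one.1 (ofSubtype_injective (h2.trans (map_one _).symm))))
    exact hx1 (ofSubtype_apply_of_not_mem _ hx2)
  have h2 := Nat.card_le_card_of_injective _ hinj
  rw [← Subgroup.index_eq_card, Nat.card_eq_fintype_card, Fintype.card_perm, Fintype.card_coe] at h2
  have := Nat.factorial_le hV
  omega

/-- If `S` is a minimal set such that `V \ S` supports no nontrivial element of `Z`, then `|S| ≥ v`,
so some `g ∈ Z` is supported in `S` and moves a point `i`. By minimality some `g' ∈ Z` is supported in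
`(V \ S) ∪ {i}` and moves `i`; the commutator of `g` and `g'` is the required `3`-cycle. -/
theorem exists_threeCycle_supported {Z : Subgroup (Perm α)} {v : ℕ} (hZ : Z.index < v.factorial)
    (V : Finset α) (hV : 2 * v ≤ V.card) :
    ∃ g ∈ Z, g.IsThreeCycle ∧ ∀ x, g x ≠ x → x ∈ V := by
  classical
  -- `S` is minimal such that `V \ S` supports no nontrivial element of `Z`
  let P : Finset α → Prop := fun S => S ⊆ V ∧ ∀ g ∈ Z, (∀ x, g x ≠ x → x ∈ V \ S) → g = 1
  have hPV : P V := ⟨subset_rfl, fun g _ h => by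
    ext x; by_contra hx; simpa using h x hx⟩
  obtain ⟨S, hS, hmin⟩ := Finset.exists_min_image (Finset.univ.filter P) Finset.card
    ⟨V, by simpa using hPV⟩
  simp only [Finset.mem_filter, Finset.mem_univ, true_and] at hS hmin
  have hcard : v ≤ S.card := by
    by_contra! hlt
    obtain ⟨g, hg, hg1, hg2⟩ := exists_ne_one_supported hZ (V \ S) (by
      have := Finset.le_card_sdiff S V; omega)
    exact hg1 (hS.2 g hg hg2)
  obtain ⟨g, hg, hg1, hg2⟩ := exists_ne_one_supported hZ S hcard
  obtain ⟨i, hi⟩ : ∃ i, g i ≠ i := by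
    by_contra! h; exact hg1 (by ext x; simp [h x])
  have hiS := hg2 i hi
  have hnP : ¬ P (S.erase i) := fun h => by
    have := hmin _ h
    rw [Finset.card_erase_of_mem hiS] at this
    have := Finset.card_pos.2 ⟨i, hiS⟩
    omega
  have hnP' : ∃ g' ∈ Z, (∀ x, g' x ≠ x → x ∈ V \ S.erase i) ∧ g' ≠ 1 := by
    by_contra! h
    exact hnP ⟨(Finset.erase_subset _ _).trans hS.1, fun g' hg' h1 => h g' hg' h1⟩
  obtain ⟨g', hg', h1, h2⟩ := hnP'
  have hi' : g' i ≠ i := by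
    intro h3
    apply h2
    apply hS.2 g' hg'
    intro x hx
    have := h1 x hx
    simp only [Finset.mem_sdiff, Finset.mem_erase, not_and] at this ⊢
    refine ⟨this.1, this.2 ?_⟩
    rintro rfl; exact hx h3
  refine ⟨_, ?_, isThreeCycle_commutator (σ := g) (τ := g') (i := i) ?_ hi hi', ?_⟩
  · exact Z.mul_mem (Z.mul_mem (Z.mul_mem hg hg') (Z.inv_mem hg)) (Z.inv_mem hg')
  · intro x hx hx'
    have a := hg2 x hx
    have b := h1 x hx'
    simp only [Finset.mem_sdiff, Finset.mem_erase, not_and] at b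
    by_contra h; exact b.2 h a
  · intro x hx
    by_contra hxV
    apply hx
    have hgx : g x = x := by by_contra h; exact hxV (hS.1 (hg2 x h))
    have hgx' : g' x = x := by by_contra h; exact hxV (Finset.mem_sdiff.1 (h1 x h)).1
    have e1 : g⁻¹ x = x := by rw [inv_eq_iff_eq, hgx]
    have e2 : g'⁻¹ x = x := by rw [inv_eq_iff_eq, hgx']
    simp only [Perm.mul_apply, e1, e2, hgx, hgx']

/-- A subgroup of small index of a symmetric group contains the alternating group or has a short
orbit. If it is primitive, a `3`-cycle in it suffices (Jordan); a nontrivial block system is excluded,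
since a `3`-cycle supported on a transversal of the blocks would not preserve them. -/
theorem alternating_le_or_small_orbit {Z : Subgroup (Perm α)} {v Y : ℕ} (hv : 2 ≤ v) (hZ : Z.index ≤ Y)
    (hY : Y < v.factorial) (hk : 4 * v ^ 3 < Fintype.card α) :
    alternatingGroup α ≤ Z ∨ ∃ a : α, 2 ^ (orbit Z a).ncard ≤ Y := by
  classical
  have hv3 : v ≤ v ^ 3 := Nat.le_self_pow (by norm_num) v
  by_cases htr : IsPretransitive Z α
  · left
    by_cases hprim : IsPreprimitive Z α
    · obtain ⟨g, hg, h3, -⟩ := exists_threeCycle_supported (hZ.trans_lt hY) (Finset.univ) (by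
        rw [Finset.card_univ]; omega)
      exact alternatingGroup_le_of_isPreprimitive_of_isThreeCycle_mem hprim h3 hg
    exfalso
    obtain ⟨B, hB, hBt⟩ : ∃ B : Set α, IsBlock Z B ∧ ¬ IsTrivialBlock B := by
      by_contra! h; exact hprim (IsPreprimitive.mk (fun {B} hB => h B hB))
    rw [IsTrivialBlock, not_or, Set.not_subsingleton_iff] at hBt
    obtain ⟨hnt, huniv⟩ := hBt
    have hcard := hB.ncard_block_mul_ncard_orbit_eq hnt.nonempty
    rw [Nat.card_eq_fintype_card] at hcard
    set b := B.ncard with hb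
    set c := (orbit Z B).ncard with hc
    have hb2 : 1 < b := (Set.one_lt_ncard (Set.toFinite _)).2 hnt
    have hblk : ∀ C ∈ orbit Z B, C.Nonempty := by
      rintro _ ⟨g, rfl⟩; exact hnt.nonempty.smul_set
    have hblk2 : ∀ C ∈ orbit Z B, ∀ D ∈ orbit Z B, (C ∩ D).Nonempty → C = D := by
      rintro _ ⟨g, rfl⟩ _ ⟨g', rfl⟩ h
      exact hB.smul_eq_smul_of_nonempty h
    -- `p` chooses a point in each block
    let p : orbit Z B → α := fun C => (hblk C.1 C.2).some
    have hp : ∀ C, p C ∈ C.1 := fun C => (hblk C.1 C.2).some_mem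
    have hpinj : Function.Injective p := fun C D h =>
      Subtype.ext (hblk2 _ C.2 _ D.2 ⟨p C, hp C, h ▸ hp D⟩)
    have hc1 : c < 2 * v := by
      by_contra! hcv
      obtain ⟨g, hg, h3, hsup⟩ := exists_threeCycle_supported (hZ.trans_lt hY)
        (Finset.univ.image p) (by
          rw [Finset.card_image_of_injective _ hpinj, Finset.card_univ, ← Nat.card_eq_fintype_card]
          exact hcv)
      obtain ⟨i, hi⟩ : ∃ i, g i ≠ i := by
        by_contra! h
        exact h3.ne_one (by ext x; simp [h x])
      have memV : ∀ x, g x ≠ x → ∃ C, p C = x := fun x hx => by simpa using hsup x hx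
      obtain ⟨C, rfl⟩ := memV i hi
      obtain ⟨D, hD⟩ := memV (g (p C)) (fun h => hi (g.injective h))
      obtain ⟨y, hyC, hy⟩ : ∃ y ∈ C.1, y ≠ p C := by
        have : 1 < C.1.ncard := by
          obtain ⟨g', hg'⟩ := C.2
          have : C.1 = g' • B := hg'.symm
          rw [this, Set.ncard_smul_set]; exact hb2
        exact Set.exists_ne_of_one_lt_ncard this (p C)
      have hyf : g y = y := by
        by_contra h
        obtain ⟨C', rfl⟩ := memV y h
        have := hblk2 _ C.2 _ C'.2 ⟨_, hyC, hp C'⟩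
        exact hy (by rw [Subtype.ext this])
      have hgC : (⟨g, hg⟩ : Z) • C.1 = C.1 := by
        apply hblk2 _ (by
          obtain ⟨g', hg'⟩ := C.2
          rw [← hg']
          exact ⟨(⟨g, hg⟩ : Z) * g', by simp [mul_smul]⟩) _ C.2
        exact ⟨y, ⟨y, hyC, hyf⟩, hyC⟩
      have : g (p C) ∈ C.1 := by
        rw [← hgC]; exact ⟨p C, hp C, rfl⟩
      rw [← hD] at this
      have := hblk2 _ C.2 _ D.2 ⟨_, this, hp D⟩
      rw [← Subtype.ext this] at hD
      exact hi hD.symm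
    have hc2 : 2 ≤ c := by
      by_contra! hlt
      apply huniv
      apply Set.eq_of_subset_of_ncard_le (Set.subset_univ _)
      rw [Set.ncard_univ, Nat.card_eq_fintype_card, ← hcard]
      nlinarith
    -- the stabilizer of `B` has index `c * [Sym : Z]` and preserves `B`
    have h5 := two_pow_le_index (Z := (stabilizer Z B).map Z.subtype) B.toFinset (by
      rintro _ ⟨g, hg, rfl⟩ x hx
      rw [Set.mem_toFinset] at hx ⊢
      have : g • B = B := hg
      rw [← this]; exact ⟨x, hx, rfl⟩) (by
        rw [← Set.ncard_eq_toFinset_card', ← hb, ← hcard, mul_comm]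
        exact Nat.mul_le_mul_left _ hc2)
    rw [← Set.ncard_eq_toFinset_card', ← hb, Subgroup.index_map_subtype, index_stabilizer, ← hc] at h5
    have h6 : 2 ^ b ≤ 2 ^ (2 * v ^ 2) := by
      calc 2 ^ b ≤ c * Z.index := h5
        _ ≤ 2 * v * v.factorial := Nat.mul_le_mul hc1.le (hZ.trans hY.le)
        _ ≤ 2 ^ (v ^ 2) * 2 ^ (v ^ 2) := by
          gcongr
          · calc 2 * v ≤ v * v := by gcongr
              _ = v ^ 2 := (sq v).symm
              _ ≤ 2 ^ v ^ 2 := Nat.lt_two_pow_self.le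
          · calc v.factorial ≤ v ^ v := Nat.factorial_le_pow v
              _ ≤ (2 ^ v) ^ v := by gcongr; exact Nat.lt_two_pow_self.le
              _ = 2 ^ v ^ 2 := by rw [← pow_mul, sq]
        _ = 2 ^ (2 * v ^ 2) := by rw [← pow_add]; ring_nf
    have h7 : b ≤ 2 * v ^ 2 := (Nat.pow_le_pow_iff_right (by norm_num)).1 h6
    have : b * c ≤ (2 * v ^ 2) * (2 * v) := Nat.mul_le_mul h7 hc1.le
    have : (2 * v ^ 2) * (2 * v) = 4 * v ^ 3 := by ring
    omega
  · right
    have : ∃ a b : α, ∀ g : Z, g • a ≠ b := by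
      by_contra! h; exact htr ⟨h⟩
    obtain ⟨a, b, hab⟩ := this
    have hdisj : Disjoint (orbit Z a) (orbit Z b) := by
      rcases orbit.eq_or_disjoint (G := Z) a b with h | h
      · exfalso
        have : b ∈ orbit Z a := h ▸ mem_orbit_self b
        obtain ⟨g, hg⟩ := this
        exact hab g hg
      · exact h
    have hle : (orbit Z a).ncard + (orbit Z b).ncard ≤ Fintype.card α := by
      rw [← Set.ncard_union_eq hdisj, ← Nat.card_eq_fintype_card, ← Set.ncard_univ]
      exact Set.ncard_le_ncard (Set.subset_univ _)
    have main : ∀ c : α, 2 * (orbit Z c).ncard ≤ Fintype.card α → 2 ^ (orbit Z c).ncard ≤ Y := by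
      intro c hc
      refine le_trans ?_ hZ
      have := two_pow_le_index (Z := Z) (orbit Z c).toFinset (by
        intro g hg x hx
        rw [Set.mem_toFinset] at hx ⊢
        obtain ⟨z, rfl⟩ := hx
        exact ⟨⟨g, hg⟩ * z, mul_smul _ _ _⟩) (by
          rw [← Set.ncard_eq_toFinset_card']; exact hc)
      rwa [← Set.ncard_eq_toFinset_card'] at this
    rcases le_total (orbit Z a).ncard (orbit Z b).ncard with h | h
    · exact ⟨a, main a (by omega)⟩
    · exact ⟨b, main b (by omega)⟩

end

/-! ### Highly transitive groups contain the alternating group -/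

section
open Equiv Equiv.Perm MulAction
open scoped Pointwise

theorem card_primes_dvd_le_log (Q : Finset ℕ) (hQ : ∀ p ∈ Q, p.Prime) {m : ℕ} (hm : m ≠ 0)
    (hd : ∀ p ∈ Q, p ∣ m) : Q.card ≤ Nat.log 2 m := by
  apply Nat.le_log_of_pow_le (by norm_num)
  have h1 : ∏ p ∈ Q, p ∣ m := Finset.prod_primes_dvd m (fun p hp => (hQ p hp).prime) hd
  refine le_trans ?_ (Nat.le_of_dvd (Nat.pos_of_ne_zero hm) h1)
  rw [← Finset.prod_const]
  exact Finset.prod_le_prod' fun p hp => (hQ p hp).two_le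

theorem exists_perm_of_four {α : Type*} {G : Subgroup (Perm α)} (h4 : IsMultiplyPretransitive G α 4)
    {a b c d a' b' c' d' : α} (h : [a, b, c, d].Nodup) (h' : [a', b', c', d'].Nodup) :
    ∃ g ∈ G, g a = a' ∧ g b = b' ∧ g c = c' ∧ g d = d' := by
  let e : Fin 4 ↪ α := ⟨[a, b, c, d].get, List.nodup_iff_injective_get.1 h⟩
  let e' : Fin 4 ↪ α := ⟨[a', b', c', d'].get, List.nodup_iff_injective_get.1 h'⟩
  obtain ⟨⟨g, hg⟩, hge⟩ := h4.exists_smul_eq e e'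
  exact ⟨g, hg, DFunLike.congr_fun hge 0, DFunLike.congr_fun hge 1, DFunLike.congr_fun hge 2,
    DFunLike.congr_fun hge 3⟩

section
variable {α : Type*} [Fintype α] [DecidableEq α]

/-- A highly transitive group contains an element `g` agreeing on its support with a permutation `σ`
whose cycle lengths are the primes in `Q`. Each `p ∈ Q` divides the order `o` of `g`, and `g ^ (o / p)`
moves only points whose cycle length is divisible by `p`. A point has at most `log₂ n` such primes, so
on average over `p ∈ Q` these powers have small support. -/
theorem exists_small_support {G : Subgroup (Perm α)} {t : ℕ} (ht : IsMultiplyPretransitive G α t)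
    (htc : t ≤ Fintype.card α) (Q : Finset ℕ) (hQ : ∀ p ∈ Q, p.Prime) (hsum : ∑ p ∈ Q, p ≤ t)
    (h0 : Q.Nonempty) {C : ℕ} (hcard : C * Nat.log 2 (Fintype.card α) ≤ Q.card) :
    ∃ g ∈ G, g ≠ 1 ∧ C * g.support.card ≤ Fintype.card α := by
  set n := Fintype.card α with hn
  obtain ⟨σ, hσ⟩ := (Equiv.Perm.exists_with_cycleType_iff α (m := Q.val)).2
    ⟨by
      have : Q.val.sum = ∑ p ∈ Q, p := Finset.sum_val Q
      omega, fun a ha => (hQ a ha).two_le⟩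
  have hsupp : σ.support.card ≤ t := by
    rw [← sum_cycleType, hσ]
    have : Q.val.sum = ∑ p ∈ Q, p := Finset.sum_val Q
    omega
  have htr : IsMultiplyPretransitive G α σ.support.card :=
    isMultiplyPretransitive_of_le hsupp (by rwa [Nat.card_eq_fintype_card])
  let e : Fin σ.support.card ↪ α := (σ.support.equivFin.symm.toEmbedding).trans (Function.Embedding.subtype _)
  obtain ⟨⟨g, hgG⟩, hg⟩ := htr.exists_smul_eq e (e.trans σ.toEmbedding)
  have hgσ : ∀ x ∈ σ.support, g x = σ x := by
    intro x hx
    have := DFunLike.congr_fun hg (σ.support.equivFin ⟨x, hx⟩)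
    simpa [e] using this
  have hpow : ∀ m : ℕ, ∀ x ∈ σ.support, (g ^ m) x = (σ ^ m) x := by
    intro m
    induction m with
    | zero => simp
    | succ m ih =>
      intro x hx
      rw [pow_succ, pow_succ, Perm.mul_apply, Perm.mul_apply, hgσ x hx]
      exact ih _ (apply_mem_support.2 hx)
  set o := orderOf g with ho
  have ho0 : 0 < o := orderOf_pos g
  have hdvd : ∀ p ∈ Q, p ∣ o := by
    intro p hp
    refine dvd_trans (dvd_of_mem_cycleType (σ := σ) (n := p) (by rw [hσ]; exact hp)) ?_
    apply orderOf_dvd_of_pow_eq_one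
    ext x
    by_cases hx : x ∈ σ.support
    · rw [← hpow o x hx, pow_orderOf_eq_one]
    · rw [notMem_support] at hx
      rw [Perm.pow_apply_eq_self_of_apply_eq_self hx]; rfl
  have hne : ∀ p ∈ Q, g ^ (o / p) ≠ 1 := by
    intro p hp h
    have h1 := orderOf_dvd_of_pow_eq_one h
    have hlt : o / p < o := Nat.div_lt_self ho0 (hQ p hp).one_lt
    have hpos : 0 < o / p := Nat.div_pos (Nat.le_of_dvd ho0 (hdvd p hp)) (hQ p hp).pos
    exact absurd (Nat.le_of_dvd hpos h1) (by omega)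
  have hmoved : ∀ a : α, ∀ p ∈ Q, (g ^ (o / p)) a ≠ a → p ∣ period g a := by
    intro a p hp h
    by_contra hnd
    apply h
    have h1 : period g a ∣ o := period_dvd_orderOf g a
    have h2 : o = p * (o / p) := (Nat.mul_div_cancel' (hdvd p hp)).symm
    have h3 : Nat.Coprime (period g a) p := ((Nat.Prime.coprime_iff_not_dvd (hQ p hp)).2 hnd).symm
    have h4 : period g a ∣ o / p := h3.dvd_of_dvd_mul_left (h2 ▸ h1)
    exact pow_smul_eq_iff_period_dvd.2 h4
  have hcnt : ∀ a : α, (Q.filter fun p => (g ^ (o / p)) a ≠ a).card ≤ Nat.log 2 n := by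
    intro a
    have hpp : period g a ≠ 0 := (period_pos_of_orderOf_pos ho0 a).ne'
    refine (card_primes_dvd_le_log _ (fun p hp => hQ p (Finset.mem_filter.1 hp).1) hpp ?_).trans ?_
    · intro p hp
      exact hmoved a p (Finset.mem_filter.1 hp).1 (Finset.mem_filter.1 hp).2
    · exact Nat.log_mono_right Function.minimalPeriod_le_card
  by_contra! hcon
  have hbig : ∀ p ∈ Q, n + 1 ≤ C * (g ^ (o / p)).support.card :=
    fun p hp => hcon _ (G.pow_mem hgG _) (hne p hp)
  have h1 : Q.card * (n + 1) ≤ C * ∑ p ∈ Q, (g ^ (o / p)).support.card := by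
    rw [Finset.mul_sum, ← smul_eq_mul]
    exact Finset.card_nsmul_le_sum _ _ _ hbig
  have h2 : ∑ p ∈ Q, (g ^ (o / p)).support.card = ∑ a : α, (Q.filter fun p => (g ^ (o / p)) a ≠ a).card := by
    simp only [Finset.card_eq_sum_ones, Finset.sum_filter, support]
    rw [Finset.sum_comm]
  have h3 : ∑ a : α, (Q.filter fun p => (g ^ (o / p)) a ≠ a).card ≤ n * Nat.log 2 n := by
    have := Finset.sum_le_card_nsmul (Finset.univ : Finset α) _ _ (fun a _ => hcnt a)
    simpa [← hn] using this
  have h4 : 0 < Q.card := h0.card_pos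
  have h5 : C * (n * Nat.log 2 n) ≤ n * Q.card := by nlinarith
  rw [h2] at h1
  have h6 := Nat.mul_le_mul_left C h3
  nlinarith

/-- Let `g` be a nontrivial element of `G` of minimal support `S`, with `c` points. For `x ∈ G` fixing
`a` and moving `b = g a` outside `S`, the commutator of `g` and `x g x⁻¹` is nontrivial, and its
support has at most `3 |S ∩ x S|` points. Averaging over `x` gives an `x` for which the intersection
has at most `1 + (c - 2)² / (n - 3)` points, and minimality forces `c ≤ 3`. -/
theorem alternating_le_of_small_support {G : Subgroup (Perm α)} (h4 : IsMultiplyPretransitive G α 4)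
    (hn4 : 5 ≤ Fintype.card α)
    (hsm : ∃ g ∈ G, g ≠ 1 ∧ 12 * g.support.card ≤ Fintype.card α) : alternatingGroup α ≤ G := by
  classical
  set n := Fintype.card α with hn
  have hprim : IsPreprimitive G α := isPreprimitive_of_is_two_pretransitive
    (isMultiplyPretransitive_of_le (n := 4) (by norm_num) (by rw [Nat.card_eq_fintype_card]; omega))
  obtain ⟨g, hg, hmin⟩ := Finset.exists_min_image
    (Finset.univ.filter fun g : Perm α => g ∈ G ∧ g ≠ 1) (fun g => g.support.card)
    (by obtain ⟨g, h1, h2, -⟩ := hsm; exact ⟨g, by simp [h1, h2]⟩)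
  simp only [Finset.mem_filter, Finset.mem_univ, true_and] at hg hmin
  obtain ⟨hgG, hg1⟩ := hg
  have hc12 : 12 * g.support.card ≤ n := by
    obtain ⟨g', h1, h2, h3⟩ := hsm
    have := hmin g' ⟨h1, h2⟩; omega
  set S := g.support with hS
  set c := S.card with hc
  have hc2 : 2 ≤ c := two_le_card_support_of_ne_one hg1
  suffices hc3 : c ≤ 3 by
    rcases (by omega : c = 2 ∨ c = 3) with h | h
    · rw [subgroup_eq_top_of_isPreprimitive_of_isSwap_mem hprim g (card_support_eq_two.1 h) hgG]
      exact le_top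
    · exact alternatingGroup_le_of_isPreprimitive_of_isThreeCycle_mem hprim
        (card_support_eq_three_iff.1 h) hgG
  obtain ⟨a, ha⟩ : S.Nonempty := Finset.card_pos.1 (by omega)
  set b := g a with hb
  have hbS : b ∈ S := apply_mem_support.2 ha
  have hab : b ≠ a := mem_support.1 ha
  obtain ⟨z, hz⟩ : ∃ z, z ∉ S := by
    by_contra! h
    have : S = Finset.univ := Finset.eq_univ_iff_forall.2 h
    rw [hc, this, Finset.card_univ] at hc12
    omega
  have hza : z ≠ a := fun h => hz (h ▸ ha)
  have hzb : z ≠ b := fun h => hz (h ▸ hbS)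
  -- the elements of `G` that fix `a` and exchange `b` and `z`
  let H : Finset (Perm α) := Finset.univ.filter fun x => x ∈ G ∧ x a = a ∧ x b = z ∧ x z = b
  have hH : ∀ x, x ∈ H ↔ x ∈ G ∧ x a = a ∧ x b = z ∧ x z = b := fun x => by simp [H]
  let R : Finset α := Finset.univ \ {a, b, z}
  have hR : ∀ s, s ∈ R ↔ s ≠ a ∧ s ≠ b ∧ s ≠ z := fun s => by simp [R]
  have hRc : R.card = n - 3 := by
    rw [Finset.card_sdiff_of_subset (Finset.subset_univ _), Finset.card_univ, Finset.card_eq_three.2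
      ⟨a, b, z, hab.symm, hza.symm, hzb.symm, rfl⟩]
  -- the number of `x ∈ H` with `x s = s'`; by `4`-transitivity it does not depend on `s' ∈ R`
  let A : α → α → ℕ := fun s s' => (H.filter fun x => x s = s').card
  have hA1 : ∀ s, ∀ s' ∈ R, ∀ s'' ∈ R, A s s' ≤ A s s'' := by
    intro s s' hs' s'' hs''
    rw [hR] at hs' hs''
    obtain ⟨u, hu, hua, hub, huz, hus⟩ := exists_perm_of_four h4 (a := a) (b := b) (c := z) (d := s')
      (a' := a) (b' := b) (c' := z) (d' := s'') (by simp [hab.symm, hza.symm, hzb.symm, hs'.1.symm, hs'.2.1.symm, hs'.2.2.symm])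
      (by simp [hab.symm, hza.symm, hzb.symm, hs''.1.symm, hs''.2.1.symm, hs''.2.2.symm])
    apply Finset.card_le_card_of_injOn (fun x => u * x)
    · intro x hx
      simp only [Finset.coe_filter, Set.mem_ofPred_eq, hH] at hx ⊢
      obtain ⟨⟨h1, h2, h3, h4⟩, h5⟩ := hx
      exact ⟨⟨G.mul_mem hu h1, by simp [h2, hua], by simp [h3, huz], by simp [h4, hub]⟩, by simp [h5, hus]⟩
    · intro x _ y _ h; exact mul_left_cancel h
  have hA2 : ∀ s ∈ R, ∑ s' ∈ R, A s s' = H.card := by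
    intro s hs
    symm
    apply Finset.card_eq_sum_card_fiberwise
    intro x hx
    have hx' := (hH x).1 hx
    rw [hR] at hs
    simp only [Finset.mem_coe, hR]
    refine ⟨fun h => hs.1 ?_, fun h => hs.2.2 ?_, fun h => hs.2.1 ?_⟩
    · apply x.injective; rw [h, hx'.2.1]
    · apply x.injective; rw [h, hx'.2.2.2]
    · apply x.injective; rw [h, hx'.2.2.1]
  have hA3 : ∀ s ∈ R, ∀ s' ∈ R, (n - 3) * A s s' ≤ H.card := by
    intro s hs s' hs'
    rw [← hA2 s hs, ← hRc, ← smul_eq_mul]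
    exact Finset.card_nsmul_le_sum _ _ _ (fun s'' hs'' => hA1 s s' hs' s'' hs'')
  let T : Finset α := S \ {a, b}
  have hT : ∀ s, s ∈ T ↔ s ∈ S ∧ s ≠ a ∧ s ≠ b := fun s => by simp [T]
  have hTc : T.card = c - 2 := by
    rw [Finset.card_sdiff_of_subset (by intro x; simp; rintro (rfl | rfl) <;> assumption), Finset.card_pair hab.symm]
  have hTR : T ⊆ R := fun s hs => by
    rw [hT] at hs; rw [hR]; exact ⟨hs.2.1, hs.2.2, fun h => hz (h ▸ hs.1)⟩
  have hHne : H.Nonempty := by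
    obtain ⟨s, hs⟩ : R.Nonempty := Finset.card_pos.1 (by omega)
    rw [hR] at hs
    obtain ⟨u, hu, hua, hub, huz, hus⟩ := exists_perm_of_four h4 (a := a) (b := b) (c := z) (d := s)
      (a' := a) (b' := z) (c' := b) (d' := s) (by simp [hab.symm, hza.symm, hzb.symm, hs.1.symm, hs.2.1.symm, hs.2.2.symm])
      (by simp [hab.symm, hza.symm, hzb, hs.1.symm, hs.2.1.symm, hs.2.2.symm])
    exact ⟨u, (hH u).2 ⟨hu, hua, hub, huz⟩⟩
  obtain ⟨x, hx, hxk⟩ : ∃ x ∈ H, (n - 3) * (T.filter fun s => x s ∈ T).card ≤ (c - 2) ^ 2 := by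
    by_contra! hcon
    have h1 := Finset.card_nsmul_le_sum H (fun x => (n - 3) * (T.filter fun s => x s ∈ T).card)
      ((c - 2) ^ 2 + 1) hcon
    have h2 : ∑ x ∈ H, (T.filter fun s => x s ∈ T).card = ∑ s ∈ T, ∑ s' ∈ T, A s s' := by
      simp only [A, Finset.card_eq_sum_ones, Finset.sum_filter]
      rw [Finset.sum_comm]
      apply Finset.sum_congr rfl
      intro s _
      rw [Finset.sum_comm]
      apply Finset.sum_congr rfl
      intro x _
      simp
    have h3 : (n - 3) * ∑ s ∈ T, ∑ s' ∈ T, A s s' ≤ (c - 2) ^ 2 * H.card := by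
      rw [Finset.mul_sum]
      have : ∀ s ∈ T, (n - 3) * ∑ s' ∈ T, A s s' ≤ (c - 2) * H.card := by
        intro s hs
        rw [Finset.mul_sum, ← hTc, ← smul_eq_mul]
        exact Finset.sum_le_card_nsmul _ _ _ (fun s' hs' => hA3 s (hTR hs) s' (hTR hs'))
      have := Finset.sum_le_card_nsmul _ _ _ this
      rw [hTc, smul_eq_mul] at this
      rwa [sq, mul_assoc]
    rw [← Finset.mul_sum, h2, smul_eq_mul] at h1
    have := hHne.card_pos
    nlinarith
  rw [hH] at hx
  obtain ⟨hxG, hxa, hxb, hxz⟩ := hx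
  set k := (T.filter fun s => x s ∈ T).card with hk
  set w := x * g * x⁻¹ with hw
  have hsw : ∀ y, w y ≠ y ↔ ∃ s ∈ S, x s = y := by
    intro y
    constructor
    · intro h
      refine ⟨x⁻¹ y, ?_, by simp⟩
      rw [hS, mem_support]
      intro h1
      apply h
      rw [hw, Perm.mul_apply, Perm.mul_apply, h1, show x (x⁻¹ y) = y from Equiv.apply_symm_apply x y]
    · rintro ⟨s, hs, rfl⟩ h
      rw [hS, mem_support] at hs
      apply hs
      apply x.injective
      simpa [hw] using h
  -- `I` contains all common points of the supports of `g` and `w`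
  let I : Finset α := insert a ((T.filter fun s => x s ∈ T).image x)
  have hIc : I.card ≤ k + 1 := (Finset.card_insert_le _ _).trans (by gcongr; exact Finset.card_image_le)
  have hI : ∀ y, g y ≠ y → w y ≠ y → y ∈ I := by
    intro y h1 h2
    obtain ⟨s, hs, rfl⟩ := (hsw y).1 h2
    by_cases h3 : s = a
    · rw [h3, hxa]; exact Finset.mem_insert_self _ _
    apply Finset.mem_insert_of_mem
    apply Finset.mem_image_of_mem
    have hxs : x s ∈ S := mem_support.2 h1
    rw [Finset.mem_filter, hT, hT]
    refine ⟨⟨hs, h3, ?_⟩, hxs, ?_, ?_⟩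
    · rintro rfl; rw [hxb] at hxs; exact hz hxs
    · intro h; apply h3; apply x.injective; rw [h, hxa]
    · intro h; apply hz
      have : s = z := by apply x.injective; rw [h, hxz]
      rwa [← this]
  set r := g * w * g⁻¹ * w⁻¹ with hr
  have hrG : r ∈ G := by
    have hwG : w ∈ G := G.mul_mem (G.mul_mem hxG hgG) (G.inv_mem hxG)
    exact G.mul_mem (G.mul_mem (G.mul_mem hgG hwG) (G.inv_mem hgG)) (G.inv_mem hwG)
  have hr1 : r ≠ 1 := by
    intro h
    have h1 : g * w = w * g := by
      rw [hr, mul_inv_eq_one, mul_inv_eq_iff_eq_mul] at h; exact h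
    have h2 := DFunLike.congr_fun h1 a
    have hxia : x⁻¹ a = a := by rw [inv_eq_iff_eq, hxa]
    have hwa : w a = z := by simp only [hw, Perm.mul_apply, hxia, ← hb, hxb]
    have hgz : g z = z := notMem_support.1 hz
    simp only [Perm.mul_apply, hwa, hgz] at h2
    apply hab
    apply w.injective
    rw [hwa, ← h2]
  have hrs : r.support ⊆ I ∪ (I.image g ∪ I.image w) := by
    intro y hy
    rw [mem_support] at hy
    by_contra hn
    simp only [Finset.mem_union, Finset.mem_image, not_or, not_exists, not_and] at hn
    obtain ⟨n1, n2, n3⟩ := hn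
    apply hy
    simp only [hr, Perm.mul_apply]
    by_cases h1 : w y = y
    · have e1 : w⁻¹ y = y := by rw [inv_eq_iff_eq, h1]
      rw [e1]
      by_cases h2 : w (g⁻¹ y) = g⁻¹ y
      · rw [h2]; simp
      · exfalso
        apply n2 (g⁻¹ y) _ (by simp)
        apply hI _ _ h2
        intro h3
        rw [show g (g⁻¹ y) = y from Equiv.apply_symm_apply g y] at h3
        rw [← h3] at h2
        exact h2 h1
    · have h2 : g y = y := by
        by_contra h2; exact n1 (hI y h2 h1)
      have h3 : g (w⁻¹ y) = w⁻¹ y := by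
        by_contra h3
        apply n3 (w⁻¹ y) _ (by simp)
        apply hI _ h3
        intro h4
        rw [show w (w⁻¹ y) = y from Equiv.apply_symm_apply w y] at h4
        rw [← h4] at h3
        exact h3 h2
      have e2 : g⁻¹ (w⁻¹ y) = w⁻¹ y := by rw [inv_eq_iff_eq, h3]
      rw [e2]; simp [h2]
  have hfin : c ≤ 3 * (k + 1) := by
    refine (hmin r ⟨hrG, hr1⟩).trans ((Finset.card_le_card hrs).trans ?_)
    have e1 := Finset.card_union_le I (I.image g ∪ I.image w)
    have e2 := Finset.card_union_le (I.image g) (I.image w)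
    have e3 : (I.image g).card ≤ I.card := Finset.card_image_le
    have e4 : (I.image w).card ≤ I.card := Finset.card_image_le
    omega
  by_contra! hc4
  obtain ⟨m, hm⟩ : ∃ m, n = m + 3 := ⟨n - 3, by omega⟩
  obtain ⟨c', hc'⟩ : ∃ c', c = c' + 4 := ⟨c - 4, by omega⟩
  have f1 : n - 3 = m := by omega
  have f2 : c - 2 = c' + 2 := by omega
  rw [f1, f2] at hxk
  have f3 : c' + 1 ≤ 3 * k := by omega
  have f4 : 12 * c' + 45 ≤ m := by omega
  have f5 : (12 * c' + 45) * (c' + 1) ≤ m * (3 * k) := Nat.mul_le_mul f4 f3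
  nlinarith

theorem alternating_le_of_multiplyPretransitive {G : Subgroup (Perm α)} {t : ℕ}
    (ht : IsMultiplyPretransitive G α t) (h4 : 5 ≤ t)
    (htc : t ≤ Fintype.card α) (Q : Finset ℕ) (hQ : ∀ p ∈ Q, p.Prime) (hsum : ∑ p ∈ Q, p ≤ t)
    (h0 : Q.Nonempty) (hcard : 12 * Nat.log 2 (Fintype.card α) ≤ Q.card) :
    alternatingGroup α ≤ G :=
  alternating_le_of_small_support
    (isMultiplyPretransitive_of_le (n := t) (by omega) (by rw [Nat.card_eq_fintype_card]; omega))
    (by omega) (exists_small_support ht htc Q hQ hsum h0 hcard)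
end

end

/-! ### Extracting an alternating section -/

section
open Equiv Equiv.Perm MulAction
open scoped Pointwise

/-- The prime `p` moves points of `Δ`: some `x : X` acts nontrivially on `Δ` while `x ^ p` acts
trivially. -/
def MovP (X : Type*) (Δ : Type*) [Group X] [MulAction X Δ] (p : ℕ) : Prop :=
  ∃ x : X, (∃ a : Δ, x • a ≠ a) ∧ ∀ a : Δ, x ^ p • a = a

/-- Some subgroup of `X` of index at most `N` maps onto an alternating group of degree at least `V`. -/
def HasGiant (X : Type*) [Group X] (N V : ℕ) : Prop :=
  ∃ k, V ≤ k ∧ ∃ L : Subgroup X, L.index ≤ N ∧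
    ∃ φ : L →* alternatingGroup (Fin k), Function.Surjective φ

theorem HasGiant.mono {X : Type*} [Group X] {N N' V : ℕ} (h : HasGiant X N V) (hN : N ≤ N') :
    HasGiant X N' V := by
  obtain ⟨k, hk, L, hL, h⟩ := h
  exact ⟨k, hk, L, hL.trans hN, h⟩

theorem HasGiant.of_subgroup {X : Type*} [Group X] {H : Subgroup X} {N V : ℕ} (h : HasGiant H N V) :
    HasGiant X (N * H.index) V := by
  obtain ⟨k, hk, L, hL, φ, hφ⟩ := h
  refine ⟨k, hk, L.map H.subtype, ?_,
    φ.comp (L.equivMapOfInjective H.subtype H.subtype_injective).symm.toMonoidHom, ?_⟩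
  · rw [Subgroup.index_map_subtype]; exact Nat.mul_le_mul_right _ hL
  · exact hφ.comp (MulEquiv.surjective _)

section
variable {X : Type u} {Δ : Type v} [Group X] [MulAction X Δ]

/-- A permutation of order `p` of a set of size prime to `p` has a fixed point, which a conjugation
moves to `a`. -/
theorem MovP.conj_fix [Finite Δ] [IsPretransitive X Δ] {p : ℕ} (hp : p.Prime)
    (hd : ¬ p ∣ Nat.card Δ) (h : MovP X Δ p) (a : Δ) :
    ∃ x : X, x • a = a ∧ (∃ c : Δ, x • c ≠ c) ∧ ∀ c : Δ, x ^ p • c = c := by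
  have := Fintype.ofFinite Δ
  obtain ⟨x, ⟨c, hc⟩, hx⟩ := h
  have := Fact.mk hp
  obtain ⟨b, hb⟩ := Equiv.Perm.exists_fixed_point_of_prime (α := Δ) (p := p) (n := 1)
    (by rwa [← Nat.card_eq_fintype_card]) (σ := toPerm x) (by
      ext d
      rw [pow_one]
      have h2 : (toPerm x : Perm Δ) ^ p = toPerm (x ^ p) := (map_pow (toPermHom X Δ) x p).symm
      rw [h2]
      exact hx d)
  obtain ⟨g, rfl⟩ := exists_smul_eq X b a
  refine ⟨g * x * g⁻¹, ?_, ⟨g • c, ?_⟩, fun d => ?_⟩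
  · simp only [mul_smul, inv_smul_smul]; congr 1
  · simp only [mul_smul, inv_smul_smul]
    intro h; exact hc (smul_left_cancel g h)
  · rw [conj_pow]; simp [mul_smul, hx]

/-- Jordan's theorem on suborbits: in a primitive group, a prime that moves points and does not divide
the degree moves points of every nontrivial suborbit. Otherwise the set `A a` of elements fixing `a`
whose `p`-th power is trivial satisfies `A a = A b`, and by primitivity `A` is constant. -/
theorem MovP.suborbit [Finite X] [Finite Δ] [IsPreprimitive X Δ] {p : ℕ} (hp : p.Prime)
    (hd : ¬ p ∣ Nat.card Δ) (h : MovP X Δ p) {a b : Δ} (hab : b ≠ a) :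
    MovP (stabilizer X a) (orbit (stabilizer X a) b) p := by
  by_contra hcon
  let A : Δ → Set X := fun c => {x | x • c = c ∧ ∀ d : Δ, x ^ p • d = d}
  have hA : ∀ (g : X) (c : Δ) (x : X), x ∈ A (g • c) ↔ g⁻¹ * x * g ∈ A c := by
    intro g c x
    have h1 : (g⁻¹ * x * g) ^ p = g⁻¹ * x ^ p * g := by
      have := conj_pow (a := g⁻¹) (b := x) (i := p)
      rwa [inv_inv] at this
    show (x • g • c = g • c ∧ _) ↔ ((g⁻¹ * x * g) • c = c ∧ ∀ d, (g⁻¹ * x * g) ^ p • d = d)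
    rw [h1]
    simp only [mul_smul, inv_smul_eq_iff]
    refine and_congr Iff.rfl ⟨fun h d => h _, fun h d => ?_⟩
    have := h (g⁻¹ • d)
    simpa using this
  have hsub : A a ⊆ A b := by
    intro x hx
    refine ⟨?_, hx.2⟩
    by_contra hxb
    apply hcon
    refine ⟨⟨x, hx.1⟩, ⟨⟨b, mem_orbit_self _⟩, ?_⟩, ?_⟩
    · intro h; apply hxb; exact congrArg Subtype.val h
    · rintro ⟨d, hd⟩; apply Subtype.ext; exact hx.2 d
  obtain ⟨g, hg⟩ := exists_smul_eq X a b
  have heq : A a = A b := by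
    apply Set.eq_of_subset_of_ncard_le hsub
    refine Set.ncard_le_ncard_of_injOn (fun x => g⁻¹ * x * g) ?_ ?_
    · intro x hx
      rw [← hg] at hx
      exact (hA g a x).1 hx
    · intro x _ y _ h; simpa using h
  have hstep : ∀ (g : X) (c d : Δ), A c = A d → A (g • c) = A (g • d) := by
    intro g c d h; ext x; rw [hA, hA, h]
  have hblock : IsBlock X {c | A c = A a} := by
    rw [isBlock_iff_smul_eq_of_mem]
    intro g c hc hgc
    apply Set.eq_of_subset_of_ncard_le
    · rintro _ ⟨d, hd, rfl⟩
      show A (g • d) = A a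
      rw [hstep g d c (by rw [hd, hc])]; exact hgc
    · rw [Set.ncard_smul_set]
    · exact Set.toFinite _
  rcases IsPreprimitive.isTrivialBlock_of_isBlock hblock with h1 | h1
  · exact hab (h1 heq.symm rfl)
  · obtain ⟨x, hxa, ⟨c, hc⟩, hx⟩ := h.conj_fix hp hd a
    have h2 : A c = A a := by
      have : c ∈ {c | A c = A a} := by rw [h1]; trivial
      exact this
    have : x ∈ A c := by rw [h2]; exact ⟨hxa, hx⟩
    exact hc this.1

/-- The element fixing `a` given by `MovP.conj_fix` moves a point other than `a`. -/
theorem MovP.ofStabilizer [Finite Δ] [IsPretransitive X Δ] {p : ℕ} (hp : p.Prime)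
    (hd : ¬ p ∣ Nat.card Δ) (h : MovP X Δ p) (a : Δ) :
    MovP (stabilizer X a) (SubMulAction.ofStabilizer X a) p := by
  obtain ⟨x, hxa, ⟨c, hc⟩, hx⟩ := h.conj_fix hp hd a
  refine ⟨⟨x, hxa⟩, ⟨⟨c, ?_⟩, ?_⟩, ?_⟩
  · rw [SubMulAction.mem_ofStabilizer_iff]; rintro rfl; exact hc hxa
  · intro h; exact hc (congrArg Subtype.val h)
  · rintro ⟨d, hd⟩; apply Subtype.ext; exact hx d

/-- A prime that moves points of `Δ` moves blocks, or moves points inside a block. -/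
theorem MovP.block [IsPretransitive X Δ] {p : ℕ} (h : MovP X Δ p)
    (B : Set Δ) (a : Δ) :
    MovP X (orbit X B) p ∨ MovP (stabilizer X B) (orbit (stabilizer X B) a) p := by
  obtain ⟨x, ⟨c, hc⟩, hx⟩ := h
  by_cases hmov : ∃ C : orbit X B, x • C ≠ C
  · left
    refine ⟨x, hmov, ?_⟩
    rintro ⟨C, hC⟩
    apply Subtype.ext
    show (x ^ p • C : Set Δ) = C
    ext d
    constructor
    · rintro ⟨e, he, rfl⟩; simpa [hx] using he
    · intro hd; exact ⟨d, hd, hx d⟩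
  · right
    push Not at hmov
    obtain ⟨g, hg⟩ := exists_smul_eq X a c
    have h1 : (g⁻¹ * x * g) • B = B := by
      have := congrArg Subtype.val (hmov ⟨g • B, ⟨g, rfl⟩⟩)
      have h2 : x • g • B = g • B := this
      rw [mul_smul, mul_smul, h2, inv_smul_smul]
    refine ⟨⟨_, h1⟩, ⟨⟨a, mem_orbit_self _⟩, ?_⟩, ?_⟩
    · intro h
      have h3 : (g⁻¹ * x * g) • a = a := congrArg Subtype.val h
      rw [mul_smul, mul_smul, hg, inv_smul_eq_iff, hg] at h3
      exact hc h3
    · rintro ⟨d, hd⟩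
      apply Subtype.ext
      show (g⁻¹ * x * g) ^ p • d = d
      have h3 : (g⁻¹ * x * g) ^ p = g⁻¹ * x ^ p * g := by
        have := conj_pow (a := g⁻¹) (b := x) (i := p)
        rwa [inv_inv] at this
      rw [h3]; simp [mul_smul, hx]

/-- A prime moving points of `Δ` occurs as the length of a cycle on `Δ`. -/
theorem MovP.le_card [Finite Δ] {p : ℕ} (hp : p.Prime) (h : MovP X Δ p) : p ∈ Finset.Ioc 1 (Nat.card Δ) := by
  have := Fintype.ofFinite Δ
  obtain ⟨x, ⟨c, hc⟩, hx⟩ := h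
  rw [Finset.mem_Ioc]
  refine ⟨hp.one_lt, ?_⟩
  have h1 : period x c ∣ p := pow_smul_eq_iff_period_dvd.1 (hx c)
  rcases (Nat.dvd_prime hp).1 h1 with h2 | h2
  · exfalso; apply hc
    have := pow_period_smul x c
    rwa [h2, pow_one] at this
  · rw [← h2, Nat.card_eq_fintype_card]
    exact Function.minimalPeriod_le_card

theorem card_le_of_movP [Finite Δ] {Q : Finset ℕ} (hQ : ∀ p ∈ Q, p.Prime ∧ MovP X Δ p) :
    Q.card ≤ Nat.card Δ - 1 := by
  have : Q ⊆ Finset.Ioc 1 (Nat.card Δ) := fun p hp => (hQ p hp).2.le_card (hQ p hp).1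
  simpa using Finset.card_le_card this

/-- A highly transitive action whose degree of transitivity accommodates disjoint cycles of
`12 log₂ D` distinct prime lengths has an image containing the alternating group. -/
theorem hasGiant_of_multiplyPretransitive [Finite Δ] {τ V D : ℕ}
    (ht : IsMultiplyPretransitive X Δ τ) (hτ : 5 ≤ τ) (hτΔ : τ ≤ Nat.card Δ) (hV : V ≤ Nat.card Δ)
    (hD : Nat.card Δ ≤ D) (R : Finset ℕ) (hR : ∀ p ∈ R, p.Prime) (hsum : ∑ p ∈ R, p ≤ τ)
    (hcard : 12 * Nat.log 2 D ≤ R.card) : HasGiant X 2 V := by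
  classical
  have := Fintype.ofFinite Δ
  have hn := Nat.card_eq_fintype_card (α := Δ)
  set G := (toPermHom X Δ).range with hG
  have htG : IsMultiplyPretransitive G Δ τ := by
    constructor
    intro x y
    obtain ⟨g, hg⟩ := ht.exists_smul_eq x y
    exact ⟨⟨toPermHom X Δ g, g, rfl⟩, hg⟩
  have hlog : 12 * Nat.log 2 (Fintype.card Δ) ≤ 12 * Nat.log 2 D := by
    gcongr; rwa [← hn]
  have hR0 : R.Nonempty := by
    rw [← Finset.card_pos]
    have : 0 < Nat.log 2 D := Nat.log_pos (by norm_num) (by omega)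
    omega
  have hle := alternating_le_of_multiplyPretransitive htG hτ (by omega) R hR hsum hR0 (hlog.trans hcard)
  have : Nontrivial Δ := Finite.one_lt_card_iff_nontrivial.1 (by omega)
  refine ⟨Nat.card Δ, hV, (alternatingGroup Δ).comap (toPermHom X Δ), ?_, ?_⟩
  · rw [Subgroup.index_comap]
    apply Nat.le_of_dvd (by norm_num)
    rw [← alternatingGroup.index_eq_two (α := Δ)]
    exact Subgroup.relIndex_dvd_index_of_normal _ _
  · refine ⟨(altCongrHom (Finite.equivFin Δ)).toMonoidHom.comp
      ((toPermHom X Δ).subgroupComap (alternatingGroup Δ)), ?_⟩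
    refine (altCongrHom (Finite.equivFin Δ)).surjective.comp ?_
    rintro ⟨σ, hσ⟩
    obtain ⟨x, hx⟩ := hle hσ
    exact ⟨⟨x, by rw [Subgroup.mem_comap, hx]; exact hσ⟩, Subtype.ext hx⟩

end

/-- Every finite group acting transitively with degree at most `2 ^ j` and at most `D`, for which more
than `log₂ |Δ| * (V + j τ)` primes move points, has a subgroup of index at most `2 * D ^ (τ j)` mapping
onto an alternating group of degree at least `V`. -/
def ExtractsAt (V D τ j : ℕ) : Prop :=
  ∀ (X : Type u) (Δ : Type v) [Group X] [Finite X] [MulAction X Δ] [Finite Δ] [IsPretransitive X Δ]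
    (Q : Finset ℕ), (∀ p ∈ Q, p.Prime ∧ MovP X Δ p) → Nat.card Δ ≤ 2 ^ j → Nat.card Δ ≤ D →
    Real.logb 2 (Nat.card Δ) * (V + j * τ) < Q.card → HasGiant X (2 * D ^ (τ * j)) V

theorem natLog_le_logb' (n : ℕ) : (Nat.log 2 n : ℝ) ≤ Real.logb 2 n := by
  have := Real.natLog_le_logb n 2; exact_mod_cast this

theorem logb_nonneg' (n : ℕ) : 0 ≤ Real.logb 2 n := by
  rcases Nat.eq_zero_or_pos n with rfl | h
  · simp
  · exact Real.logb_nonneg (by norm_num) (by exact_mod_cast h)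

theorem logb_mono' {m n : ℕ} (h : m ≤ n) : Real.logb 2 m ≤ Real.logb 2 n := by
  rcases Nat.eq_zero_or_pos m with rfl | hm
  · simpa using logb_nonneg' n
  · exact Real.logb_le_logb_of_le (by norm_num) (by exact_mod_cast hm) (by exact_mod_cast h)

theorem card_filter_not_dvd (Q : Finset ℕ) (hQ : ∀ p ∈ Q, p.Prime) {n : ℕ} (hn : n ≠ 0) :
    (Q.card : ℝ) - Real.logb 2 n ≤ (Q.filter fun p => ¬ p ∣ n).card := by
  have h1 := Finset.card_filter_add_card_filter_not (s := Q) (fun p => p ∣ n)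
  have h2 := card_primes_dvd_le_log (Q.filter fun p => p ∣ n)
    (fun p hp => hQ p (Finset.mem_filter.1 hp).1) hn (fun p hp => (Finset.mem_filter.1 hp).2)
  have h3 := natLog_le_logb' n
  have h4 : ((Q.filter fun p => p ∣ n).card : ℝ) ≤ Nat.log 2 n := by exact_mod_cast h2
  have h5 : ((Q.filter fun p => p ∣ n).card : ℝ) + (Q.filter fun p => ¬ p ∣ n).card = Q.card := by
    exact_mod_cast h1
  linarith

/-- The action is `(t + 1)`-transitive unless a subgroup acting with smaller degree can be used. An
imprimitive action splits the moving primes between the blocks and a block; a primitive action which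
is not doubly transitive has a suborbit of at most half the degree, with the same moving primes up to
those dividing the degree; a doubly transitive action is replaced by a point stabilizer. -/
theorem extract_desc {V D τ j : ℕ} (hD : 1 ≤ D) (hC : ExtractsAt.{u, v} V D τ j) (t : ℕ) :
    ∀ (X : Type u) (Δ : Type v) [Group X] [Finite X] [MulAction X Δ] [Finite Δ] [IsPretransitive X Δ]
    (Q : Finset ℕ) (_ : ∀ p ∈ Q, p.Prime ∧ MovP X Δ p) (K : ℕ) (_ : Nat.card Δ ≤ K)
    (_ : K ≤ 2 ^ (j + 1)) (_ : K ≤ D)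
    (_ : Real.logb 2 (Nat.card Δ) * (V + j * τ) + t * Real.logb 2 K < Q.card),
    IsMultiplyPretransitive X Δ (t + 1) ∨ HasGiant X (2 * D ^ (τ * j) * D ^ t) V := by
  induction t with
  | zero =>
    intro X Δ _ _ _ _ hT Q _ K _ _ _ _
    left
    exact is_one_pretransitive_iff.2 hT
  | succ t ih =>
    intro X Δ _ _ _ _ hT Q hQ K hK hKj hKD hcard
    have hone : 2 * D ^ (τ * j) * D ≤ 2 * D ^ (τ * j) * D ^ (t + 1) := by
      gcongr; exact Nat.le_self_pow (by omega) D
    have hU : (0 : ℝ) ≤ V + j * τ := by positivity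
    have hK0 := logb_nonneg' K
    push_cast at hcard
    have hQ1 : Q.Nonempty := by
      rw [← Finset.card_pos]
      have h1 := logb_nonneg' (Nat.card Δ)
      have : (0 : ℝ) < Q.card := lt_of_le_of_lt (by positivity) hcard
      exact_mod_cast this
    obtain ⟨p0, hp0⟩ := hQ1
    obtain ⟨x0, ⟨a, ha⟩, -⟩ := (hQ p0 hp0).2
    have hΔ0 : Nat.card Δ ≠ 0 := (Nat.card_pos_iff.2 ⟨⟨a⟩, inferInstance⟩).ne'
    have hΔK := logb_mono' hK
    have hlogΔ := logb_nonneg' (Nat.card Δ)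
    have horb : ∀ (Y : Subgroup X), IsPretransitive Y (orbit Y a) := fun Y => inferInstance
    by_cases hprim : IsPreprimitive X Δ
    · by_cases hst : IsPretransitive (stabilizer X a) (SubMulAction.ofStabilizer X a)
      · have hc1 := SubMulAction.nat_card_ofStabilizer_add_one_eq X a
        have hle : Real.logb 2 (Nat.card (SubMulAction.ofStabilizer X a)) ≤ Real.logb 2 (Nat.card Δ) :=
          logb_mono' (by omega)
        have hf := card_filter_not_dvd Q (fun p hp => (hQ p hp).1) hΔ0
        rcases ih (stabilizer X a) (SubMulAction.ofStabilizer X a) (Q.filter fun p => ¬ p ∣ Nat.card Δ)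
          (fun p hp => by
            obtain ⟨h1, h2⟩ := Finset.mem_filter.1 hp
            exact ⟨(hQ p h1).1, (hQ p h1).2.ofStabilizer (hQ p h1).1 h2 a⟩) K (by omega) hKj hKD
          (by
            have := mul_le_mul_of_nonneg_right hle hU
            linarith) with h | h
        · left
          exact SubMulAction.ofStabilizer.isMultiplyPretransitive.2 h
        · right
          refine h.of_subgroup.mono ?_
          rw [index_stabilizer_of_transitive, pow_succ, ← mul_assoc]
          gcongr
          omega
      · right
        -- two suborbits exist besides `{a}`, so one of them has at most half of the points
        have : ∃ b c : SubMulAction.ofStabilizer X a, ∀ g : stabilizer X a, g • b ≠ c := by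
          by_contra! h; exact hst ⟨h⟩
        obtain ⟨⟨b, hb⟩, ⟨c, hc⟩, hbc⟩ := this
        rw [SubMulAction.mem_ofStabilizer_iff] at hb hc
        have hdisj : Disjoint (orbit (stabilizer X a) b) (orbit (stabilizer X a) c) := by
          rcases orbit.eq_or_disjoint (G := stabilizer X a) b c with h | h
          · exfalso
            have : c ∈ orbit (stabilizer X a) b := h ▸ mem_orbit_self c
            obtain ⟨g, hg⟩ := this
            exact hbc g (Subtype.ext hg)
          · exact h
        have hle : (orbit (stabilizer X a) b).ncard + (orbit (stabilizer X a) c).ncard ≤ Nat.card Δ := by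
          rw [← Set.ncard_union_eq hdisj, ← Set.ncard_univ]
          exact Set.ncard_le_ncard (Set.subset_univ _)
        have hf := card_filter_not_dvd Q (fun p hp => (hQ p hp).1) hΔ0
        have main : ∀ e : Δ, e ≠ a → 2 * (orbit (stabilizer X a) e).ncard ≤ Nat.card Δ →
            HasGiant X (2 * D ^ (τ * j) * D ^ (t + 1)) V := by
          intro e he h2
          have hce : Nat.card (orbit (stabilizer X a) e) = (orbit (stabilizer X a) e).ncard := rfl
          have hle2 : Real.logb 2 (Nat.card (orbit (stabilizer X a) e)) ≤ Real.logb 2 (Nat.card Δ) :=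
            logb_mono' (by omega)
          have := hC (stabilizer X a) (orbit (stabilizer X a) e) (Q.filter fun p => ¬ p ∣ Nat.card Δ)
            (fun p hp => by
              obtain ⟨h1, h2⟩ := Finset.mem_filter.1 hp
              exact ⟨(hQ p h1).1, (hQ p h1).2.suborbit (hQ p h1).1 h2 he⟩)
            (by rw [pow_succ] at hKj; omega) (by omega)
            (by
              have := mul_le_mul_of_nonneg_right hle2 hU
              have : 0 ≤ (t : ℝ) * Real.logb 2 K := by positivity
              linarith)
          refine (this.of_subgroup).mono (le_trans ?_ hone)
          rw [index_stabilizer_of_transitive]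
          gcongr
          omega
        rcases le_total (orbit (stabilizer X a) b).ncard (orbit (stabilizer X a) c).ncard with h | h
        · exact main b hb (by omega)
        · exact main c hc (by omega)
    · right
      obtain ⟨B, hB, hBt⟩ : ∃ B : Set Δ, IsBlock X B ∧ ¬ IsTrivialBlock B := by
        by_contra! h; exact hprim (IsPreprimitive.mk (fun {B} hB => h B hB))
      rw [IsTrivialBlock, not_or, Set.not_subsingleton_iff] at hBt
      obtain ⟨hnt, huniv⟩ := hBt
      obtain ⟨a, ha⟩ := hnt.nonempty
      have hcd := hB.ncard_block_mul_ncard_orbit_eq hnt.nonempty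
      have hb2 : 1 < B.ncard := (Set.one_lt_ncard (Set.toFinite _)).2 hnt
      have hc2 : 2 ≤ (orbit X B).ncard := by
        by_contra! hlt
        apply huniv
        apply Set.eq_of_subset_of_ncard_le (Set.subset_univ _)
        rw [Set.ncard_univ, ← hcd]
        nlinarith
      classical
      let Q1 := Q.filter fun p => MovP X (orbit X B) p
      let Q2 := Q.filter fun p => ¬ MovP X (orbit X B) p
      have hQ12 : (Q1.card : ℝ) + Q2.card = Q.card := by
        exact_mod_cast Finset.card_filter_add_card_filter_not (s := Q) (fun p => MovP X (orbit X B) p)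
      have hlogs : Real.logb 2 B.ncard + Real.logb 2 (orbit X B).ncard = Real.logb 2 (Nat.card Δ) := by
        rw [← hcd]; push_cast
        rw [Real.logb_mul] <;> norm_cast <;> omega
      have horbB : orbit (stabilizer X B) a = B := hB.orbit_stabilizer_eq ha
      have htK : 0 ≤ ((t : ℝ) + 1) * Real.logb 2 K := by positivity
      have hsplit : Real.logb 2 (orbit X B).ncard * (V + j * τ) < Q1.card ∨
          Real.logb 2 B.ncard * (V + j * τ) < Q2.card := by
        by_contra! h
        have : Real.logb 2 (Nat.card Δ) * (V + j * τ) =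
          Real.logb 2 B.ncard * (V + j * τ) + Real.logb 2 (orbit X B).ncard * (V + j * τ) := by
          rw [← hlogs]; ring
        linarith [h.1, h.2]
      have hcΔ : (orbit X B).ncard ≤ Nat.card Δ := by rw [← hcd]; exact Nat.le_mul_of_pos_left _ (by omega)
      rw [pow_succ] at hKj
      rcases hsplit with h | h
      · have := hC X (orbit X B) Q1 (fun p hp => by
            obtain ⟨h1, h2⟩ := Finset.mem_filter.1 hp
            exact ⟨(hQ p h1).1, h2⟩)
          (by
            have : Nat.card (orbit X B) = (orbit X B).ncard := rfl
            nlinarith)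
          (by
            have : Nat.card (orbit X B) = (orbit X B).ncard := rfl
            omega) h
        refine this.mono (le_trans ?_ hone)
        exact Nat.le_mul_of_pos_right _ hD
      · have hcB : Nat.card (orbit (stabilizer X B) a) = B.ncard := by
          rw [horbB]; rfl
        have := hC (stabilizer X B) (orbit (stabilizer X B) a) Q2 (fun p hp => by
            obtain ⟨h1, h2⟩ := Finset.mem_filter.1 hp
            exact ⟨(hQ p h1).1, ((hQ p h1).2.block B a).resolve_left h2⟩)
          (by rw [hcB]; nlinarith)
          (by rw [hcB]; nlinarith) (by rw [hcB]; exact h)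
        refine this.of_subgroup.mono (le_trans ?_ hone)
        rw [index_stabilizer]
        gcongr
        omega

/-- Induction on `j`: `extract_desc` produces a `τ`-transitive action, whose image contains the
alternating group, unless it reduces the claim to `j`. -/
theorem extracts {V D τ : ℕ} (hD : 1 ≤ D) (hτ : 5 ≤ τ) (hV : τ ≤ V)
    (R : Finset ℕ) (hR : ∀ p ∈ R, p.Prime) (hsum : ∑ p ∈ R, p ≤ τ)
    (hcard : 12 * Nat.log 2 D ≤ R.card) (j : ℕ) : ExtractsAt.{u, v} V D τ j := by
  induction j with
  | zero =>
    intro X Δ _ _ _ _ hT Q hQ h1 h2 h3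
    exfalso
    have h4 := card_le_of_movP hQ
    rw [pow_zero] at h1
    have h5 : Q.card = 0 := by omega
    rw [h5] at h3
    have := mul_nonneg (logb_nonneg' (Nat.card Δ)) (by positivity : (0:ℝ) ≤ V + (0 : ℕ) * τ)
    push_cast at h3 this
    linarith
  | succ j ih =>
    intro X Δ _ _ _ _ hT Q hQ h1 h2 h3
    have h4 := card_le_of_movP hQ
    have hl := logb_nonneg' (Nat.card Δ)
    push_cast at h3
    have hτr : (5 : ℝ) ≤ τ := by exact_mod_cast hτ
    have hVΔ : V ≤ Nat.card Δ := by
      have hlt : 0 < Q.card := by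
        have : (0 : ℝ) < Q.card := lt_of_le_of_lt (by positivity) h3
        exact_mod_cast this
      have h5 : 1 ≤ Real.logb 2 (Nat.card Δ) := by
        rw [Real.le_logb_iff_rpow_le (by norm_num) (by norm_cast; omega)]
        norm_num; omega
      have : (V : ℝ) ≤ Q.card := by
        have : (0:ℝ) ≤ (j + 1) * τ := by positivity
        nlinarith [(Nat.cast_nonneg V : (0:ℝ) ≤ V)]
      have : V ≤ Q.card := by exact_mod_cast this
      omega
    obtain ⟨t, rfl⟩ : ∃ t, τ = t + 1 := ⟨τ - 1, by omega⟩
    rcases extract_desc hD ih t X Δ Q hQ (Nat.card Δ) le_rfl h1 h2 (by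
      push_cast at h3 ⊢
      nlinarith) with h | h
    · refine (hasGiant_of_multiplyPretransitive h hτ (by omega) hVΔ h2 R hR hsum hcard).mono ?_
      exact Nat.le_mul_of_pos_right _ (by positivity)
    · refine h.mono ?_
      rw [mul_assoc, ← pow_add]
      gcongr
      nlinarith

end

/-! ### Unaffected points: classes in a transitive action -/

section
open MulAction
open scoped Pointwise

section
variable {B : Type} [Group B] {Y : Type*} [Group Y] {φ : Y →* B} {A : Subgroup B}

/-- Two subgroups that normalize each other and both map onto a perfect group `A` have an
intersection mapping onto `A`: it contains `⁅N1, N2⁆`, whose image is `⁅A, A⁆ = A`. -/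
theorem map_inf_eq_of_normalize (hA : ⁅A, A⁆ = A) {N1 N2 : Subgroup Y}
    (h12 : ∀ x ∈ N1, ∀ y ∈ N2, x * y * x⁻¹ ∈ N2) (h21 : ∀ y ∈ N2, ∀ x ∈ N1, y * x * y⁻¹ ∈ N1)
    (h1 : N1.map φ = A) (h2 : N2.map φ = A) : (N1 ⊓ N2).map φ = A := by
  apply le_antisymm
  · exact h1 ▸ Subgroup.map_mono inf_le_left
  · have h3 : (⁅N1, N2⁆).map φ = A := by
      rw [Subgroup.map_commutator, h1, h2, hA]
    rw [← h3]
    apply Subgroup.map_mono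
    rw [Subgroup.commutator_le]
    intro x hx y hy
    rw [commutatorElement_def]
    refine ⟨?_, N2.mul_mem (h12 x hx y hy) (N2.inv_mem hy)⟩
    have := N1.mul_mem hx (h21 y hy _ (N1.inv_mem hx))
    simpa [mul_assoc] using this

/-- The same for finitely many normal subgroups of a group `W` that maps onto `A`. -/
theorem map_iInf_eq_of_normalize (hA : ⁅A, A⁆ = A) {W : Subgroup Y} (hW : W.map φ = A)
    {ι : Type*} (s : Finset ι) (N : ι → Subgroup Y)
    (hN : ∀ i ∈ s, N i ≤ W ∧ (∀ x ∈ W, ∀ y ∈ N i, x * y * x⁻¹ ∈ N i) ∧ (N i).map φ = A) :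
    ∃ K : Subgroup Y, K ≤ W ∧ (∀ i ∈ s, K ≤ N i) ∧ K.map φ = A := by
  classical
  suffices h : ∃ K : Subgroup Y, K ≤ W ∧ (∀ x ∈ W, ∀ y ∈ K, x * y * x⁻¹ ∈ K) ∧
      (∀ i ∈ s, K ≤ N i) ∧ K.map φ = A by
    obtain ⟨K, h1, -, h2, h3⟩ := h; exact ⟨K, h1, h2, h3⟩
  induction s using Finset.induction_on with
  | empty => exact ⟨W, le_rfl, fun x hx y hy => W.mul_mem (W.mul_mem hx hy) (W.inv_mem hx), by simp, hW⟩
  | insert i s hi ih =>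
    obtain ⟨K, h1, h2, h3, h4⟩ := ih (fun j hj => hN j (Finset.mem_insert_of_mem hj))
    obtain ⟨k1, k2, k3⟩ := hN i (Finset.mem_insert_self _ _)
    refine ⟨K ⊓ N i, inf_le_left.trans h1, fun x hx y hy => ⟨h2 x hx y hy.1, k2 x hx y hy.2⟩, ?_, ?_⟩
    · intro j hj
      rcases Finset.mem_insert.1 hj with rfl | hj
      · exact inf_le_right
      · exact inf_le_left.trans (h3 j hj)
    · exact map_inf_eq_of_normalize hA (fun x hx => k2 x (h1 hx)) (fun x hx => h2 x (k1 hx)) h4 k3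

end

/-- The property of `A` used to pass from points to sets of at most `M` points: whenever `S ≤ Y` maps onto `A` under `φ` and acts on a set `T` of at most `M` points so
that every point stabilizer in `S` still maps onto `A`, the pointwise stabilizer of `T` in `S` maps
onto `A` too. A point whose stabilizer maps onto `A` is called unaffected below. -/
def UP {B : Type} [Group B] (A : Subgroup B) (M : ℕ) : Prop :=
  ∀ (Y Γ : Type u) [Group Y] [Finite Y] [MulAction Y Γ] [Finite Γ] (φ : Y →* B)
    (S : Subgroup Y) (T : Set Γ), (∀ s ∈ S, ∀ t ∈ T, s • t ∈ T) → S.map φ = A → T.ncard ≤ M →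
    (∀ t ∈ T, (S ⊓ stabilizer Y t).map φ = A) → (S ⊓ fixingSubgroup Y T).map φ = A

/-- The prime `p` divides `|A|`, and no proper subgroup of `A` of index at most `M` has order
divisible by `p`. -/
def Good {B : Type} [Group B] (A : Subgroup B) (p M : ℕ) : Prop :=
  p.Prime ∧ p ∣ Nat.card A ∧ ∀ H ≤ A, p ∣ Nat.card H → H.relIndex A ≤ M → H = A

section
variable {B : Type} [Group B] {Y Γ : Type u} [Group Y] [MulAction Y Γ]
  {φ : Y →* B} {A : Subgroup B} {S : Subgroup Y} {T : Set Γ}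

theorem mem_inf_fixingSubgroup {x : Y} :
    x ∈ S ⊓ fixingSubgroup Y T ↔ x ∈ S ∧ ∀ t ∈ T, x • t = t := by
  rw [Subgroup.mem_inf, mem_fixingSubgroup_iff]

theorem map_conj_eq (hS : S.map φ = A) {H K : Subgroup Y} (hH : H.map φ = A)
    {s : Y} (hs : s ∈ S) (hK : ∀ h ∈ H, s * h * s⁻¹ ∈ K) (hKS : K ≤ S) : K.map φ = A := by
  apply le_antisymm
  · rw [← hS]; exact Subgroup.map_mono hKS
  · intro a ha
    have hsA : φ s ∈ A := hS ▸ Subgroup.mem_map_of_mem φ hs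
    have : (φ s)⁻¹ * a * φ s ∈ A := A.mul_mem (A.mul_mem (A.inv_mem hsA) ha) hsA
    rw [← hH] at this
    obtain ⟨h, hh, hha⟩ := this
    refine ⟨s * h * s⁻¹, hK h hh, ?_⟩
    simp only [map_mul, map_inv, hha]; group

/-- The class of `γ`: the points `γ'` of `T` for which the stabilizer of both `γ` and `γ'` in `S`
maps onto `A`. -/
def Ublk (φ : Y →* B) (A : Subgroup B) (S : Subgroup Y) (T : Set Γ) (γ : Γ) : Set Γ :=
  {γ' | γ' ∈ T ∧ (S ⊓ stabilizer Y γ ⊓ stabilizer Y γ').map φ = A}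

theorem mem_Ublk_smul (hinv : ∀ s ∈ S, ∀ t ∈ T, s • t ∈ T) (hS : S.map φ = A) {γ γ' : Γ}
    {s : Y} (hs : s ∈ S) (h : γ' ∈ Ublk φ A S T γ) : s • γ' ∈ Ublk φ A S T (s • γ) := by
  refine ⟨hinv s hs _ h.1, map_conj_eq hS h.2 hs ?_ (inf_le_left.trans inf_le_left)⟩
  rintro x ⟨⟨hx, hx1⟩, hx2⟩
  replace hx1 : x • γ = γ := hx1
  replace hx2 : x • γ' = γ' := hx2
  refine ⟨⟨S.mul_mem (S.mul_mem hs hx) (S.inv_mem hs), ?_⟩, ?_⟩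
  · show (s * x * s⁻¹) • s • γ = s • γ
    rw [mul_smul, inv_smul_smul, mul_smul, hx1]
  · show (s * x * s⁻¹) • s • γ' = s • γ'
    rw [mul_smul, inv_smul_smul, mul_smul, hx2]

theorem smul_Ublk (hinv : ∀ s ∈ S, ∀ t ∈ T, s • t ∈ T) (hS : S.map φ = A) (γ : Γ)
    {s : Y} (hs : s ∈ S) : s • Ublk φ A S T γ = Ublk φ A S T (s • γ) := by
  ext δ
  constructor
  · rintro ⟨γ', h, rfl⟩; exact mem_Ublk_smul hinv hS hs h
  · intro h
    have := mem_Ublk_smul hinv hS (S.inv_mem hs) h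
    rw [inv_smul_smul] at this
    exact ⟨_, this, smul_inv_smul _ _⟩

/-- Suppose `S` is transitive on a set `T` of at most `2 * M` unaffected points, and that the class
of `γ₀` has at least two points and a pointwise stabilizer mapping onto `A`. Then the classes form a
partition of `T` into at most `M` sets permuted by `S`. Each of them, as a point of the action on
sets, is unaffected, so by `UP A M` the subgroup `W` fixing every class maps onto `A`. It normalizes
the pointwise stabilizer of each class, and the intersection of all of these with `W` maps onto `A`
because `A` is perfect. -/
theorem unaffected_main [Finite Y] [Finite Γ] (hA : ⁅A, A⁆ = A) (hinv : ∀ s ∈ S, ∀ t ∈ T, s • t ∈ T)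
    (htr : ∀ a ∈ T, ∀ b ∈ T, ∃ s ∈ S, s • a = b) (hS : S.map φ = A) {M : ℕ}
    (hT : T.ncard ≤ 2 * M) (hUP : UP.{u} A M) (hun : ∀ t ∈ T, (S ⊓ stabilizer Y t).map φ = A)
    {γ₀ : Γ} (hγ₀ : γ₀ ∈ T) (H : (S ⊓ fixingSubgroup Y (Ublk φ A S T γ₀)).map φ = A)
    (H2 : ∃ γ' ∈ Ublk φ A S T γ₀, γ' ≠ γ₀) : (S ⊓ fixingSubgroup Y T).map φ = A := by
  classical
  have hle : ∀ K : Subgroup Y, K ≤ S → K.map φ ≤ A := fun K hK => hS ▸ Subgroup.map_mono hK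
  set U := Ublk φ A S T with hU
  have hself : ∀ γ ∈ T, γ ∈ U γ := by
    intro γ hγ
    refine ⟨hγ, ?_⟩
    rw [inf_assoc, inf_idem]; exact hun γ hγ
  have hsymm : ∀ γ ∈ T, ∀ γ' ∈ U γ, γ ∈ U γ' := by
    intro γ hγ γ' h
    refine ⟨hγ, ?_⟩
    rw [inf_right_comm]; exact h.2
  have hF : ∀ γ ∈ T, (S ⊓ fixingSubgroup Y (U γ)).map φ = A := by
    intro γ hγ
    obtain ⟨s, hs, rfl⟩ := htr γ₀ hγ₀ γ hγ
    refine map_conj_eq hS H hs ?_ inf_le_left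
    intro x hx
    obtain ⟨hx, hx2⟩ := mem_inf_fixingSubgroup.1 hx
    refine mem_inf_fixingSubgroup.2 ⟨S.mul_mem (S.mul_mem hs hx) (S.inv_mem hs), ?_⟩
    rw [hU, ← smul_Ublk hinv hS γ₀ hs]
    rintro _ ⟨δ, hδ, rfl⟩
    show (s * x * s⁻¹) • s • δ = s • δ
    rw [mul_smul, inv_smul_smul, mul_smul, hx2 δ hδ]
  have hsub : ∀ γ ∈ T, ∀ γ' ∈ U γ, U γ' ⊆ U γ := by
    intro γ hγ γ' h δ hδ
    refine ⟨hδ.1, le_antisymm (hle _ (inf_le_left.trans inf_le_left)) ?_⟩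
    rw [← hF γ' h.1]
    apply Subgroup.map_mono
    intro x hx
    obtain ⟨hx, hx2⟩ := mem_inf_fixingSubgroup.1 hx
    exact ⟨⟨hx, hx2 γ (hsymm γ hγ γ' h)⟩, hx2 δ hδ⟩
  have heq : ∀ γ ∈ T, ∀ γ' ∈ U γ, U γ' = U γ := fun γ hγ γ' h =>
    (hsub γ hγ γ' h).antisymm (hsub γ' h.1 γ (hsymm γ hγ γ' h))
  have hUT : ∀ γ, U γ ⊆ T := fun γ δ h => h.1
  -- by transitivity each class has at least two points, and `|T| ≤ 2 * M`
  have hcard : (U '' T).ncard ≤ M := by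
    have hTfin := Set.toFinite T
    have h1 : (U '' T).ncard = (hTfin.toFinset.image U).card := by
      rw [← Set.ncard_coe_finset, Finset.coe_image, Set.Finite.coe_toFinset]
    have h2 : T.ncard = hTfin.toFinset.card := Set.ncard_eq_toFinset_card _ _
    have h3 : 2 * (hTfin.toFinset.image U).card ≤ hTfin.toFinset.card := by
      apply Finset.mul_card_image_le_card
      intro C hC
      obtain ⟨γ, hγ, rfl⟩ := Finset.mem_image.1 hC
      rw [Set.Finite.mem_toFinset] at hγ
      obtain ⟨s, hs, hsγ⟩ := htr γ₀ hγ₀ γ hγ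
      obtain ⟨γ', h', hne⟩ := H2
      apply Finset.one_lt_card.2
      have h4 : s • γ' ∈ U γ := by rw [← hsγ]; exact mem_Ublk_smul hinv hS hs h'
      refine ⟨γ, by simp [hγ], s • γ', ?_, ?_⟩
      · rw [Finset.mem_filter, Set.Finite.mem_toFinset]
        exact ⟨hUT _ h4, heq γ hγ _ h4⟩
      · rw [← hsγ]; intro h; exact hne (smul_left_cancel s h.symm)
    omega
  have hW := hUP Y (Set Γ) φ S (U '' T) (by
    rintro s hs _ ⟨γ, hγ, rfl⟩
    exact ⟨s • γ, hinv s hs γ hγ, (smul_Ublk hinv hS γ hs).symm⟩) hS hcard (by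
    rintro _ ⟨γ, hγ, rfl⟩
    refine le_antisymm (hle _ inf_le_left) ?_
    rw [← hun γ hγ]
    apply Subgroup.map_mono
    rintro x ⟨hx, hx2⟩
    refine ⟨hx, ?_⟩
    replace hx2 : x • γ = γ := hx2
    show x • U γ = U γ
    rw [hU, smul_Ublk hinv hS γ hx, hx2])
  set W := S ⊓ fixingSubgroup Y (U '' T) with hWdef
  have hWn : ∀ x ∈ S, ∀ y ∈ W, x * y * x⁻¹ ∈ W := by
    intro x hx y hy
    obtain ⟨hy, hy2⟩ := mem_inf_fixingSubgroup.1 hy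
    refine mem_inf_fixingSubgroup.2 ⟨S.mul_mem (S.mul_mem hx hy) (S.inv_mem hx), ?_⟩
    rintro _ ⟨γ, hγ, rfl⟩
    have h1 : x⁻¹ • U γ = U (x⁻¹ • γ) := smul_Ublk hinv hS γ (S.inv_mem hx)
    rw [mul_smul, mul_smul, h1, hy2 _ ⟨_, hinv _ (S.inv_mem hx) γ hγ, rfl⟩, ← h1, smul_inv_smul]
  have hFn : ∀ γ ∈ T, ∀ x ∈ W, ∀ y ∈ S ⊓ fixingSubgroup Y (U γ),
      x * y * x⁻¹ ∈ S ⊓ fixingSubgroup Y (U γ) := by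
    intro γ hγ x hx y hy
    obtain ⟨hx, hx2⟩ := mem_inf_fixingSubgroup.1 hx
    obtain ⟨hy, hy2⟩ := mem_inf_fixingSubgroup.1 hy
    refine mem_inf_fixingSubgroup.2 ⟨S.mul_mem (S.mul_mem hx hy) (S.inv_mem hx), ?_⟩
    intro δ hδ
    have h1 : x⁻¹ • U γ = U γ := by rw [inv_smul_eq_iff]; exact (hx2 _ ⟨γ, hγ, rfl⟩).symm
    have h2 : x⁻¹ • δ ∈ U γ := by rw [← h1]; exact ⟨δ, hδ, rfl⟩
    rw [mul_smul, mul_smul, hy2 _ h2, smul_inv_smul]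
  obtain ⟨K, hK1, hK2, hK3⟩ := map_iInf_eq_of_normalize hA hW (Set.toFinite T).toFinset
    (fun γ => W ⊓ (S ⊓ fixingSubgroup Y (U γ))) (fun γ hγ => by
      rw [Set.Finite.mem_toFinset] at hγ
      refine ⟨inf_le_left, fun x hx y hy => ⟨hWn x hx.1 y hy.1, hFn γ hγ x hx y hy.2⟩, ?_⟩
      exact map_inf_eq_of_normalize hA (hFn γ hγ) (fun y hy => hWn y hy.1) hW (hF γ hγ))
  refine le_antisymm (hle _ inf_le_left) ?_
  rw [← hK3]
  apply Subgroup.map_mono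
  intro x hx
  refine mem_inf_fixingSubgroup.2 ⟨(hK1 hx).1, fun γ hγ => ?_⟩
  have := (hK2 γ ((Set.Finite.mem_toFinset _).2 hγ) hx).2
  exact (mem_inf_fixingSubgroup.1 this).2 γ (hself γ hγ)

end

end

/-! ### Unaffected points: orbits of the kernel and a Sylow argument -/

section
open MulAction
open scoped Pointwise

section
variable {B : Type} [Group B] {Y Γ : Type u} [Group Y] [MulAction Y Γ]
  {φ : Y →* B} {A : Subgroup B} {S : Subgroup Y} {T : Set Γ}

theorem conj_mem_inf_fixingSubgroup (hinv : ∀ s ∈ S, ∀ t ∈ T, s • t ∈ T) :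
    ∀ x ∈ S, ∀ y ∈ S ⊓ fixingSubgroup Y T, x * y * x⁻¹ ∈ S ⊓ fixingSubgroup Y T := by
  intro x hx y hy
  obtain ⟨hy, hy2⟩ := mem_inf_fixingSubgroup.1 hy
  refine mem_inf_fixingSubgroup.2 ⟨S.mul_mem (S.mul_mem hx hy) (S.inv_mem hx), fun t ht => ?_⟩
  rw [mul_smul, mul_smul, hy2 _ (hinv _ (S.inv_mem hx) t ht), smul_inv_smul]

/-- If `S ∩ ker φ` is transitive on `T`, every point of `T` is unaffected. -/
theorem map_inf_stabilizer_eq (hS : S.map φ = A)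
    (htr : ∀ a ∈ T, ∀ b ∈ T, ∃ r ∈ S, φ r = 1 ∧ r • a = b) (hinv : ∀ s ∈ S, ∀ t ∈ T, s • t ∈ T) :
    ∀ t ∈ T, (S ⊓ stabilizer Y t).map φ = A := by
  intro t ht
  apply le_antisymm (hS ▸ Subgroup.map_mono inf_le_left)
  intro a ha
  rw [← hS] at ha
  obtain ⟨x, hx, rfl⟩ := ha
  obtain ⟨r, hr, hr1, hr2⟩ := htr _ (hinv x hx t ht) t ht
  refine ⟨r * x, ⟨S.mul_mem hr hx, ?_⟩, by rw [map_mul, hr1, one_mul]⟩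
  show (r * x) • t = t
  rw [mul_smul, hr2]

/-- The orbit of `δ` under the part of `ker φ` in `S`. -/
def kerOrb (φ : Y →* B) (S : Subgroup Y) (δ : Γ) : Set Γ := {x | ∃ r ∈ S, φ r = 1 ∧ r • δ = x}

theorem mem_kerOrb_self (δ : Γ) : δ ∈ kerOrb φ S δ := ⟨1, S.one_mem, map_one φ, one_smul _ _⟩

theorem kerOrb_tr {δ a b : Γ} (ha : a ∈ kerOrb φ S δ) (hb : b ∈ kerOrb φ S δ) :
    ∃ r ∈ S, φ r = 1 ∧ r • a = b := by
  obtain ⟨r, hr, hr1, rfl⟩ := ha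
  obtain ⟨q, hq, hq1, rfl⟩ := hb
  exact ⟨q * r⁻¹, S.mul_mem hq (S.inv_mem hr), by simp [hr1, hq1], by simp [mul_smul]⟩

theorem smul_mem_kerOrb_smul {δ a : Γ} {s : Y} (hs : s ∈ S) (ha : a ∈ kerOrb φ S δ) :
    s • a ∈ kerOrb φ S (s • δ) := by
  obtain ⟨r, hr, hr1, rfl⟩ := ha
  exact ⟨s * r * s⁻¹, S.mul_mem (S.mul_mem hs hr) (S.inv_mem hs), by simp [hr1], by simp [mul_smul]⟩

theorem kerOrb_trans {δ a b : Γ} (ha : a ∈ kerOrb φ S δ) (hb : b ∈ kerOrb φ S a) :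
    b ∈ kerOrb φ S δ := by
  obtain ⟨r, hr, hr1, rfl⟩ := ha
  obtain ⟨q, hq, hq1, rfl⟩ := hb
  exact ⟨q * r, S.mul_mem hq hr, by simp [hr1, hq1], by simp [mul_smul]⟩

theorem kerOrb_symm {δ a : Γ} (ha : a ∈ kerOrb φ S δ) : δ ∈ kerOrb φ S a := by
  obtain ⟨r, hr, hr1, rfl⟩ := ha
  exact ⟨r⁻¹, S.inv_mem hr, by simp [hr1], by simp⟩

theorem map_inf_comap (h : A ≤ S.map φ) : (S ⊓ A.comap φ).map φ = A := by
  apply le_antisymm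
  · rintro _ ⟨x, hx, rfl⟩; exact hx.2
  · intro a ha
    obtain ⟨x, hx, rfl⟩ := h ha
    exact ⟨x, ⟨hx, ha⟩, rfl⟩

theorem relIndex_map_dvd (φ : Y →* B) (H K : Subgroup Y) :
    (H.map φ).relIndex (K.map φ) ∣ H.relIndex K := by
  rw [← Subgroup.relIndex_comap]
  exact Subgroup.relIndex_dvd_of_le_left _ (Subgroup.le_comap_map _ _)

theorem relIndex_stabilizer_le [Finite Γ] (hinv : ∀ s ∈ S, ∀ t ∈ T, s • t ∈ T) {γ : Γ} (hγ : γ ∈ T) :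
    (stabilizer Y γ).relIndex S ≤ T.ncard := by
  have h1 : (stabilizer Y γ).relIndex S = (stabilizer S γ).index := rfl
  rw [h1, index_stabilizer]
  refine Set.ncard_le_ncard ?_ (Set.toFinite _)
  rintro _ ⟨s, rfl⟩
  exact hinv s s.2 γ hγ

/-- A Sylow `p`-subgroup of the stabilizer of `γ` fixes a further point `γ'` of `T`, because `p` does
not divide `|T| - 1`. Its image in `A` has order divisible by `p`, so `Good A p M` forces the
stabilizer of `γ` and `γ'`, of index at most `M`, to map onto `A`. -/
theorem exists_mem_Ublk [Finite Y] [Finite Γ] (hinv : ∀ s ∈ S, ∀ t ∈ T, s • t ∈ T) {γ : Γ}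
    (hγ : γ ∈ T) (hSγ : (S ⊓ stabilizer Y γ).map φ = A) {p M : ℕ} (hG : Good A p M)
    (hT : T.ncard ≤ M) (hp : ¬ p ∣ T.ncard - 1) (hT1 : 1 < T.ncard) :
    ∃ γ' ∈ Ublk φ A S T γ, γ' ≠ γ := by
  obtain ⟨hpp, hpA, hgood⟩ := hG
  have := Fact.mk hpp
  set S' := S ⊓ stabilizer Y γ with hS'
  let P : Sylow p S' := default
  let P' : Subgroup Y := (P : Subgroup S').map S'.subtype
  have hP'S : P' ≤ S' := Subgroup.map_subtype_le _
  have hidx : P'.relIndex S' = (P : Subgroup S').index := by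
    rw [Subgroup.relIndex]
    congr 1
    exact Subgroup.comap_map_eq_self_of_injective S'.subtype_injective _
  -- the image of the Sylow subgroup has index prime to `p` in `A`, so its order is divisible by `p`
  have hPA : p ∣ Nat.card (P'.map φ) := by
    have h1 : (P'.map φ).relIndex A ∣ P'.relIndex S' := by
      rw [← hSγ]; exact relIndex_map_dvd φ P' S'
    have h2 : ¬ p ∣ (P'.map φ).relIndex A := by
      intro h
      have := h.trans h1
      rw [hidx] at this
      exact P.not_dvd_index this
    have h3 : Nat.card (P'.map φ) * (P'.map φ).relIndex A = Nat.card A := by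
      rw [← Subgroup.relIndex_bot_left, ← Subgroup.relIndex_bot_left]
      exact Subgroup.relIndex_mul_relIndex _ _ _ bot_le (hSγ ▸ Subgroup.map_mono hP'S)
    rw [← h3] at hpA
    exact (hpp.dvd_mul.1 hpA).resolve_right h2
  have hP'p : IsPGroup p P' := P.2.map _
  let T' : SubMulAction P' Γ := ⟨T, fun g {t} ht => hinv g (hP'S g.2).1 t ht⟩
  have hT'c : Nat.card T' = T.ncard := rfl
  have hmod := hP'p.card_modEq_card_fixedPoints T'
  have hγf : (⟨γ, hγ⟩ : T') ∈ fixedPoints P' T' := by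
    intro g
    apply Subtype.ext
    exact (hP'S g.2).2
  have hex : ∃ x ∈ fixedPoints P' T', x ≠ ⟨γ, hγ⟩ := by
    by_contra! hcon
    have h1 : fixedPoints P' T' = {⟨γ, hγ⟩} := by
      ext x; constructor
      · exact hcon x
      · rintro rfl; exact hγf
    have h2 : Nat.card (fixedPoints P' T') = 1 := by rw [h1]; simp
    rw [h2, hT'c] at hmod
    exact hp ((Nat.modEq_iff_dvd' hT1.le).1 hmod.symm)
  obtain ⟨⟨γ', hγ'T⟩, hfix, hne⟩ := hex
  refine ⟨γ', ⟨hγ'T, ?_⟩, fun h => hne (Subtype.ext h)⟩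
  have hPle : P' ≤ S' ⊓ stabilizer Y γ' := by
    intro x hx
    exact ⟨hP'S hx, congrArg Subtype.val (hfix ⟨x, hx⟩)⟩
  apply hgood
  · rw [← hSγ]; exact Subgroup.map_mono inf_le_left
  · exact hPA.trans (Subgroup.card_dvd_of_le (Subgroup.map_mono hPle))
  · have h1 : ((S' ⊓ stabilizer Y γ').map φ).relIndex A ∣ (S' ⊓ stabilizer Y γ').relIndex S' := by
      conv_lhs => rw [← hSγ]
      exact relIndex_map_dvd φ _ S'
    refine (Nat.le_of_dvd ?_ h1).trans ?_
    · exact Nat.pos_of_ne_zero (Subgroup.index_ne_zero_of_finite)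
    · rw [Subgroup.inf_relIndex_left]
      refine le_trans ?_ hT
      exact relIndex_stabilizer_le (fun s hs => hinv s (Subgroup.mem_inf.1 hs).1) hγ'T

end

end

/-! ### Unaffected points: doubling the number of points -/

section
open MulAction
open scoped Pointwise

section
variable {B : Type} [Group B] {Y Γ : Type u} [Group Y] [Finite Y] [MulAction Y Γ] [Finite Γ]

/-- If `S ∩ ker φ` is transitive on `T`, where `|T| ≤ 2 * M`, there is a number `b ≤ 2 * M`,
depending only on the action, such that the pointwise stabilizer of `T` covers every perfect
`A ≤ φ(S)` with `UP A M` and `Good A p (2 * M)` for some prime `p` not dividing `b`.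

The proof is by induction on `|T|` and applies `unaffected_main`. Let `S'` be the stabilizer of a
point `γ`. If some orbit of `S' ∩ ker φ` has more than `M` points, it is unique and contained in the
class of `γ`; the induction hypothesis handles it, and `UP A M` handles the rest of the class. If all
these orbits have at most `M` points, take `b = |T| - 1`; then `exists_mem_Ublk` provides a second
point of the class, and `UP A M` applies to each orbit in the class. -/
theorem inner_step (φ : Y →* B) {M : ℕ} (hM : 1 ≤ M) (n : ℕ) : ∀ (S : Subgroup Y) (T : Set Γ),
    (∀ s ∈ S, ∀ t ∈ T, s • t ∈ T) → (∀ a ∈ T, ∀ b ∈ T, ∃ r ∈ S, φ r = 1 ∧ r • a = b) →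
    T.ncard = n → n ≤ 2 * M → ∃ b : ℕ, 0 < b ∧ b ≤ 2 * M ∧ ∀ (A : Subgroup B) (p : ℕ),
      ⁅A, A⁆ = A → A ≤ S.map φ → UP.{u} A M → Good A p (2 * M) → ¬ p ∣ b →
      A ≤ (S ⊓ fixingSubgroup Y T).map φ := by
  classical
  induction n using Nat.strong_induction_on with
  | _ n ih =>
  intro S T hinv htr hTn hnM
  by_cases hT1 : T.ncard ≤ 1
  · refine ⟨1, one_pos, by omega, fun A p _ hAS _ _ _ => hAS.trans (Subgroup.map_mono ?_)⟩
    intro x hx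
    refine mem_inf_fixingSubgroup.2 ⟨hx, fun t ht => ?_⟩
    exact (Set.ncard_le_one (Set.toFinite _)).1 hT1 _ (hinv x hx t ht) _ ht
  push Not at hT1
  obtain ⟨γ, hγ⟩ : T.Nonempty := Set.nonempty_of_ncard_ne_zero (by omega)
  set S' := S ⊓ stabilizer Y γ with hS'
  have hS'S : S' ≤ S := inf_le_left
  have hS'γ : ∀ s ∈ S', s • γ = γ := fun s hs => (Subgroup.mem_inf.1 hs).2
  -- `S ∩ φ⁻¹(A)` maps onto `A`, and `T` is a single orbit of its intersection with the kernel, so all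
  -- points of `T` are unaffected
  have hX : ∀ A ≤ S.map φ, (S ⊓ A.comap φ).map φ = A := fun A h => map_inf_comap h
  have hXinv : ∀ A : Subgroup B, ∀ s ∈ S ⊓ A.comap φ, ∀ t ∈ T, s • t ∈ T :=
    fun A s hs => hinv s (Subgroup.mem_inf.1 hs).1
  have hXtr : ∀ A : Subgroup B, ∀ a ∈ T, ∀ b ∈ T, ∃ r ∈ S ⊓ A.comap φ, φ r = 1 ∧ r • a = b := by
    intro A a ha b hb
    obtain ⟨r, hr, hr1, hr2⟩ := htr a ha b hb
    exact ⟨r, ⟨hr, by show φ r ∈ A; rw [hr1]; exact A.one_mem⟩, hr1, hr2⟩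
  have hXtr' : ∀ A : Subgroup B, ∀ a ∈ T, ∀ b ∈ T, ∃ r ∈ S ⊓ A.comap φ, r • a = b := by
    intro A a ha b hb
    obtain ⟨r, hr, hr1, hr2⟩ := hXtr A a ha b hb
    exact ⟨r, hr, hr2⟩
  have hXst : ∀ A ≤ S.map φ, ∀ t ∈ T, (S ⊓ A.comap φ ⊓ stabilizer Y t).map φ = A := fun A h =>
    map_inf_stabilizer_eq (hX A h) (hXtr A) (hXinv A)
  have hfinal : ∀ A : Subgroup B, (S ⊓ A.comap φ ⊓ fixingSubgroup Y T).map φ = A →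
      A ≤ (S ⊓ fixingSubgroup Y T).map φ := by
    intro A h
    rw (occs := .pos [1]) [← h]
    exact Subgroup.map_mono (inf_le_inf_right _ inf_le_left)
  by_cases hcase : ∃ δ ∈ T, δ ≠ γ ∧ M < (kerOrb φ S' δ).ncard
  · obtain ⟨δ, hδT, hδγ, hδM⟩ := hcase
    set O := kerOrb φ S' δ with hO
    have hOT : O ⊆ T := by
      rintro _ ⟨r, hr, -, rfl⟩; exact hinv r (hS'S hr) δ hδT
    have hγO : γ ∉ O := by
      rintro ⟨r, hr, -, hrγ⟩
      apply hδγ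
      rw [← smul_left_cancel_iff r, hrγ, hS'γ r hr]
    have hcardO : O.ncard < T.ncard := Set.ncard_lt_ncard (Set.ssubset_iff_of_subset hOT |>.2 ⟨γ, hγ, hγO⟩)
    -- otherwise `O` and `s • O` would be disjoint subsets of `T` with more than `M` points each
    have hOinv : ∀ s ∈ S', ∀ t ∈ O, s • t ∈ O := by
      intro s hs t ht
      by_contra hst
      have hdisj : Disjoint O (s • O) := by
        rw [Set.disjoint_left]
        rintro _ hx ⟨y, hy, rfl⟩
        apply hst
        have h1 : s • y ∈ kerOrb φ S' (s • t) :=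
          smul_mem_kerOrb_smul hs (kerOrb_trans (kerOrb_symm ht) hy)
        exact kerOrb_trans hx (kerOrb_symm h1)
      have h2 : (O ∪ s • O).ncard = O.ncard + O.ncard := by
        rw [Set.ncard_union_eq hdisj, Set.ncard_smul_set]
      have h3 : (O ∪ s • O).ncard ≤ T.ncard := by
        refine Set.ncard_le_ncard (Set.union_subset hOT ?_)
        rintro _ ⟨y, hy, rfl⟩; exact hinv s (hS'S hs) y (hOT hy)
      omega
    obtain ⟨b, hb0, hbM, hb⟩ := ih O.ncard (by omega) S' O hOinv
      (fun x hx y hy => kerOrb_tr hx hy) rfl (by omega)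
    refine ⟨b, hb0, hbM, fun A p hA hAS hUP hG hpb => hfinal A ?_⟩
    set X := S ⊓ A.comap φ with hXdef
    have hXst' := hXst A hAS
    have hAS' : A ≤ S'.map φ := by
      rw [← hXst' γ hγ]; exact Subgroup.map_mono (inf_le_inf_right _ inf_le_left)
    have hO1 : (X ⊓ stabilizer Y γ ⊓ fixingSubgroup Y O).map φ = A := by
      apply le_antisymm
      · rw [← hX A hAS]; exact Subgroup.map_mono (inf_le_left.trans inf_le_left)
      · intro a ha
        obtain ⟨x, hx, rfl⟩ := hb A p hA hAS' hUP hG hpb ha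
        have hx' := Subgroup.mem_inf.1 hx
        have hx'' := Subgroup.mem_inf.1 hx'.1
        exact ⟨x, ⟨⟨⟨hx''.1, ha⟩, hx''.2⟩, hx'.2⟩, rfl⟩
    -- `O` is part of the class of `γ`; the rest of the class has at most `M` points
    have hOU : O ⊆ Ublk φ A X T γ := by
      intro t ht
      refine ⟨hOT ht, le_antisymm ?_ ?_⟩
      · rw [← hX A hAS]; exact Subgroup.map_mono (inf_le_left.trans inf_le_left)
      · rw (occs := .pos [1]) [← hO1]
        apply Subgroup.map_mono
        intro x hx
        obtain ⟨hx1, hx2⟩ := mem_inf_fixingSubgroup.1 hx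
        exact ⟨hx1, hx2 t ht⟩
    have hX'inv : ∀ s ∈ X ⊓ stabilizer Y γ, ∀ t ∈ Ublk φ A X T γ \ O,
        s • t ∈ Ublk φ A X T γ \ O := by
      rintro s hs t ⟨ht, htO⟩
      have hs' := Subgroup.mem_inf.1 hs
      constructor
      · have := mem_Ublk_smul (hXinv A) (hX A hAS) hs'.1 ht
        rwa [show s • γ = γ from hs'.2] at this
      · intro h
        apply htO
        have h4 : s⁻¹ ∈ S' := S'.inv_mem ⟨(Subgroup.mem_inf.1 hs'.1).1, hs'.2⟩
        have := hOinv _ h4 _ h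
        rwa [inv_smul_smul] at this
    have hrest := hUP Y Γ φ (X ⊓ stabilizer Y γ) (Ublk φ A X T γ \ O) hX'inv (hXst' γ hγ) (by
        have h1 : (Ublk φ A X T γ \ O).ncard ≤ (T \ O).ncard :=
          Set.ncard_le_ncard (Set.sdiff_subset_sdiff_left (fun x hx => hx.1))
        have h2 := Set.ncard_sdiff_add_ncard_of_subset hOT
        omega) (fun t ht => ht.1.2)
    have hboth := map_inf_eq_of_normalize hA
      (fun x hx => conj_mem_inf_fixingSubgroup hX'inv x (Subgroup.mem_inf.1 hx).1)
      (fun y hy => conj_mem_inf_fixingSubgroup (S := X ⊓ stabilizer Y γ) (T := O)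
        (fun s hs => hOinv s ⟨(Subgroup.mem_inf.1 (Subgroup.mem_inf.1 hs).1).1, (Subgroup.mem_inf.1 hs).2⟩) y
        (Subgroup.mem_inf.1 hy).1) hO1 hrest
    refine unaffected_main hA (hXinv A) (hXtr' A) (hX A hAS) (by omega) hUP hXst' hγ ?_
      ⟨δ, hOU (mem_kerOrb_self _), hδγ⟩
    refine le_antisymm ?_ ?_
    · rw [← hX A hAS]; exact Subgroup.map_mono inf_le_left
    · rw (occs := .pos [1]) [← hboth]
      apply Subgroup.map_mono
      intro x hx
      obtain ⟨hx1, hx2⟩ := Subgroup.mem_inf.1 hx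
      obtain ⟨hx3, hx4⟩ := mem_inf_fixingSubgroup.1 hx1
      obtain ⟨-, hx5⟩ := mem_inf_fixingSubgroup.1 hx2
      refine mem_inf_fixingSubgroup.2 ⟨(Subgroup.mem_inf.1 hx3).1, fun t ht => ?_⟩
      by_cases htO : t ∈ O
      · exact hx4 t htO
      · exact hx5 t ⟨ht, htO⟩
  · push Not at hcase
    refine ⟨T.ncard - 1, by omega, by omega, fun A p hA hAS hUP hG hpb => hfinal A ?_⟩
    set X := S ⊓ A.comap φ with hXdef
    have hXst' := hXst A hAS
    have hX'γ : ∀ s ∈ X ⊓ stabilizer Y γ, s • γ = γ := fun s hs => (Subgroup.mem_inf.1 hs).2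
    refine unaffected_main hA (hXinv A) (hXtr' A) (hX A hAS) (by omega) hUP hXst' hγ ?_
      (exists_mem_Ublk (hXinv A) hγ (hXst' γ hγ) hG (by omega) hpb hT1)
    set X' := X ⊓ stabilizer Y γ with hX'
    have hX'map : X'.map φ = A := hXst' γ hγ
    have hUinv : ∀ s ∈ X', ∀ t ∈ Ublk φ A X T γ, s • t ∈ Ublk φ A X T γ := by
      intro s hs t ht
      have := mem_Ublk_smul (hXinv A) (hX A hAS) (Subgroup.mem_inf.1 hs).1 ht
      rwa [hX'γ s hs] at this
    -- the `X'`-orbit of a point of the class lies in an orbit of `S' ∩ ker φ`, since the stabilizer of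
    -- that point already maps onto `A`
    let Ob : Γ → Set Γ := fun t => {y | ∃ s ∈ X', s • t = y}
    have hObinv : ∀ t, ∀ s ∈ X', ∀ y ∈ Ob t, s • y ∈ Ob t := by
      rintro t s hs _ ⟨q, hq, rfl⟩
      exact ⟨s * q, X'.mul_mem hs hq, mul_smul _ _ _⟩
    have hObU : ∀ t ∈ Ublk φ A X T γ, Ob t ⊆ Ublk φ A X T γ := by
      rintro t ht _ ⟨s, hs, rfl⟩; exact hUinv s hs t ht
    have hObM : ∀ t ∈ Ublk φ A X T γ, (Ob t).ncard ≤ M := by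
      intro t ht
      by_cases htγ : t = γ
      · refine le_trans ((Set.ncard_le_one (Set.toFinite _)).2 ?_) hM
        rintro _ ⟨s, hs, rfl⟩ _ ⟨q, hq, rfl⟩
        rw [htγ, hX'γ s hs, hX'γ q hq]
      · refine (Set.ncard_le_ncard ?_).trans (hcase t ht.1 htγ)
        rintro _ ⟨s, hs, rfl⟩
        have h1 : φ s ∈ A := hX'map ▸ Subgroup.mem_map_of_mem φ hs
        rw [← ht.2] at h1
        obtain ⟨q, hq, hqs⟩ := h1
        obtain ⟨hq1, hq2⟩ := Subgroup.mem_inf.1 hq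
        have h2 := Subgroup.mem_inf.1 (X'.mul_mem hs (X'.inv_mem hq1))
        refine ⟨s * q⁻¹, ⟨(Subgroup.mem_inf.1 h2.1).1, h2.2⟩, by simp [hqs], ?_⟩
        rw [mul_smul]
        congr 1
        rw [inv_smul_eq_iff]; exact (show q • t = t from hq2).symm
    obtain ⟨K, hK1, hK2, hK3⟩ := map_iInf_eq_of_normalize hA hX'map
      (Set.toFinite (Ublk φ A X T γ)).toFinset (fun t => X' ⊓ fixingSubgroup Y (Ob t)) (fun t ht => by
        rw [Set.Finite.mem_toFinset] at ht
        refine ⟨inf_le_left, conj_mem_inf_fixingSubgroup (hObinv t), ?_⟩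
        exact hUP Y Γ φ X' (Ob t) (hObinv t) hX'map (hObM t ht) (fun y hy => (hObU t ht hy).2))
    refine le_antisymm ?_ ?_
    · rw [← hX A hAS]; exact Subgroup.map_mono inf_le_left
    · rw (occs := .pos [1]) [← hK3]
      apply Subgroup.map_mono
      intro x hx
      refine mem_inf_fixingSubgroup.2 ⟨(Subgroup.mem_inf.1 (hK1 hx)).1, fun t ht => ?_⟩
      exact (mem_inf_fixingSubgroup.1 (hK2 t ((Set.Finite.mem_toFinset _).2 ht) hx)).2 t
        ⟨1, X'.one_mem, one_smul _ _⟩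

end

/-- Only trivial normal subgroups, in terms of subgroups of an ambient group. -/
def SimpleIn {B : Type} [Group B] (A : Subgroup B) : Prop :=
  ∀ N ≤ A, (∀ a ∈ A, ∀ x ∈ N, a * x * a⁻¹ ∈ N) → N ≠ ⊥ → N = A

theorem Good.mono {B : Type} [Group B] {A : Subgroup B} {p M M' : ℕ} (h : Good A p M) (hM : M' ≤ M) :
    Good A p M' :=
  ⟨h.1, h.2.1, fun H hH hp hi => h.2.2 H hH hp (hi.trans hM)⟩

/-- The bound `M` in `UP` can be doubled at the expense of passing further along a chain of perfect,
simple groups `A i` with increasing primes `p i`. Given `T` with at most `2 ^ (j + 1)` points, all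
unaffected for `A i`, `inner_step` gives for each orbit a number `b ≤ 2 ^ (j + 1)`. Among the `w > j + 1`
preceding primes one, `p k`, does not divide `b`, so the pointwise stabilizer of the orbit covers
`A k ≠ 1`. Its image is normal in the simple group `A i`, hence all of it. -/
theorem unaffected {B : Type} [Group B] {w n J : ℕ} (A : ℕ → Subgroup B) (p : ℕ → ℕ)
    (hp : StrictMono p) (hJ : J < w) (hA : ∀ i < n, ⁅A i, A i⁆ = A i)
    (hs : ∀ i < n, SimpleIn (A i)) (hg : ∀ i < n, Good (A i) (p i) (2 ^ J))
    (hmono : ∀ i j, i ≤ j → j < n → A i ≤ A j) (j : ℕ) :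
    j ≤ J → ∀ i, w * j ≤ i → i < n → UP.{u} (A i) (2 ^ j) := by
  classical
  induction j with
  | zero =>
    intro _ i _ _ Y Γ _ _ _ _ φ S T hinv hS hT hun
    rw [← hS]
    congr 1
    refine le_antisymm inf_le_left fun x hx => mem_inf_fixingSubgroup.2 ⟨hx, fun t ht => ?_⟩
    exact (Set.ncard_le_one (Set.toFinite _)).1 hT _ (hinv x hx t ht) _ ht
  | succ j ih =>
    intro hjJ i hi hin Y Γ _ _ _ _ φ S T hinv hS hT hun
    -- it suffices to treat a single orbit: the pointwise stabilizers of the orbits are normal in `S`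
    let Ob : Γ → Set Γ := fun t => {y | ∃ s ∈ S, s • t = y}
    have hObinv : ∀ t, ∀ s ∈ S, ∀ y ∈ Ob t, s • y ∈ Ob t := by
      rintro t s hs _ ⟨q, hq, rfl⟩
      exact ⟨s * q, S.mul_mem hs hq, mul_smul _ _ _⟩
    have hOb : ∀ t ∈ T, (S ⊓ fixingSubgroup Y (Ob t)).map φ = A i := by
      intro t ht
      have hObT : Ob t ⊆ T := by rintro _ ⟨s, hs, rfl⟩; exact hinv s hs t ht
      obtain ⟨b, hb0, hbM, hb⟩ := inner_step φ (Nat.one_le_two_pow (n := j)) _ S (Ob t) (hObinv t) (by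
        rintro a ⟨s, hs, rfl⟩ b ⟨q, hq, rfl⟩
        -- correcting by an element of the stabilizer of `q • t` shows that, all points being
        -- unaffected, each `S`-orbit is a single orbit of the kernel
        have h1 : φ (q * s⁻¹) ∈ A i :=
          hS ▸ Subgroup.mem_map_of_mem φ (S.mul_mem hq (S.inv_mem hs))
        rw [← hun (q • t) (hinv q hq t ht)] at h1
        obtain ⟨r, hr, hrs⟩ := h1
        obtain ⟨hr1, hr2⟩ := Subgroup.mem_inf.1 hr
        refine ⟨r⁻¹ * (q * s⁻¹), S.mul_mem (S.inv_mem hr1) (S.mul_mem hq (S.inv_mem hs)),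
          by rw [map_mul, map_inv, hrs, inv_mul_cancel], ?_⟩
        rw [mul_smul, mul_smul, inv_smul_smul, inv_smul_eq_iff]
        exact (show r • q • t = q • t from hr2).symm) rfl
        (((Set.ncard_le_ncard hObT).trans hT).trans (by rw [pow_succ, mul_comm]))
      -- one of `w` consecutive primes does not divide `b`
      obtain ⟨k, hk1, hk2⟩ : ∃ k ∈ Finset.Ico (i - w) i, ¬ p k ∣ b := by
        by_contra! hcon
        have hwi : w ≤ i := by
          rw [Nat.mul_add_one] at hi; omega
        have h1 := card_primes_dvd_le_log ((Finset.Ico (i - w) i).image p) (by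
          intro q hq
          obtain ⟨k, hk, rfl⟩ := Finset.mem_image.1 hq
          exact (hg k (by rw [Finset.mem_Ico] at hk; omega)).1) hb0.ne' (by
          intro q hq
          obtain ⟨k, hk, rfl⟩ := Finset.mem_image.1 hq
          exact hcon k hk)
        rw [Finset.card_image_of_injective _ hp.injective, Nat.card_Ico] at h1
        have h2 : Nat.log 2 b ≤ j + 1 := by
          have h3 : b ≤ 2 ^ (j + 1) := by rw [pow_succ, mul_comm]; exact hbM
          calc Nat.log 2 b ≤ Nat.log 2 (2 ^ (j + 1)) := Nat.log_mono_right h3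
            _ = j + 1 := Nat.log_pow (by norm_num) _
        omega
      rw [Finset.mem_Ico] at hk1
      have hkn : k < n := by omega
      have hle := hb (A k) (p k) (hA k hkn) (by rw [hS]; exact hmono k i hk1.2.le hin)
        (ih (by omega) k (by rw [Nat.mul_add_one] at hi; omega) hkn)
        ((hg k hkn).mono (by
          rw [mul_comm, ← pow_succ]; exact Nat.pow_le_pow_right (by norm_num) hjJ)) hk2
      refine hs i hin _ (hS ▸ Subgroup.map_mono inf_le_left) ?_ ?_
      · intro a ha x hx
        rw [← hS] at ha
        obtain ⟨y, hy, rfl⟩ := ha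
        obtain ⟨z, hz, rfl⟩ := hx
        exact ⟨y * z * y⁻¹, conj_mem_inf_fixingSubgroup (hObinv t) y hy z hz, by simp⟩
      · intro h
        rw [h, le_bot_iff] at hle
        have := (hg k hkn).2.1
        rw [hle, Subgroup.card_bot] at this
        exact (hg k hkn).1.one_lt.ne' (Nat.dvd_one.1 this)
    obtain ⟨K, hK1, hK2, hK3⟩ := map_iInf_eq_of_normalize (hA i hin) hS
      (Set.toFinite T).toFinset (fun t => S ⊓ fixingSubgroup Y (Ob t)) (fun t ht => by
        rw [Set.Finite.mem_toFinset] at ht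
        exact ⟨inf_le_left, conj_mem_inf_fixingSubgroup (hObinv t), hOb t ht⟩)
    refine le_antisymm ?_ ?_
    · rw [← hS]; exact Subgroup.map_mono inf_le_left
    · rw (occs := .pos [1]) [← hK3]
      apply Subgroup.map_mono
      intro x hx
      refine mem_inf_fixingSubgroup.2 ⟨hK1 hx, fun t ht => ?_⟩
      exact (mem_inf_fixingSubgroup.1 (hK2 t ((Set.Finite.mem_toFinset _).2 ht) hx)).2 t
        ⟨1, S.one_mem, one_smul _ _⟩

end

/-! ### A lower bound for the number of primes -/

section
open Filter Asymptotics

/-- A weak consequence of Chebyshev's lower bound `ψ(n) ≥ n log 2 - log (n + 1)`. -/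
theorem sqrt_le_primeCounting : ∃ n₀ : ℕ, ∀ n ≥ n₀, Nat.sqrt n ≤ Nat.primeCounting n := by
  have h1 : ∀ᶠ x : ℝ in atTop, ‖Real.log x‖ ≤ 1 / 8 * ‖x ^ (1 / 2 : ℝ)‖ :=
    (isLittleO_log_rpow_atTop (by norm_num)).bound (by norm_num)
  have h2 := (tendsto_natCast_atTop_atTop (R := ℝ)).eventually h1
  obtain ⟨n₀, hn₀⟩ := eventually_atTop.1 h2
  refine ⟨max n₀ 100, fun n hn => ?_⟩
  have hn1 : n₀ ≤ n := (le_max_left _ _).trans hn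
  have hn2 : 100 ≤ n := (le_max_right _ _).trans hn
  have hnr : (100 : ℝ) ≤ n := by exact_mod_cast hn2
  have h3 := hn₀ n hn1
  have hs0 := Real.sqrt_nonneg (n : ℝ)
  have hs2 := Real.mul_self_sqrt (by linarith : (0 : ℝ) ≤ n)
  have hs10 : (10 : ℝ) ≤ √(n : ℝ) := by
    apply Real.le_sqrt_of_sq_le; linarith
  rw [← Real.sqrt_eq_rpow, Real.norm_of_nonneg hs0,
    Real.norm_of_nonneg (Real.log_nonneg (by linarith))] at h3
  have hlog1 : Real.log (n + 1) ≤ Real.log n + 1 := by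
    have : Real.log (n + 1) ≤ Real.log (n * 2) := Real.log_le_log (by linarith) (by linarith)
    rw [Real.log_mul (by linarith) (by norm_num)] at this
    linarith [Real.log_two_lt_d9]
  have h4 := Chebyshev.psi_ge n
  have h5 := Chebyshev.psi_le_primeCounting_mul_log n
  have hl0 : 0 < Real.log n := Real.log_pos (by linarith)
  have hl2 := Real.log_two_gt_d9
  have h6 : √(n : ℝ) * Real.log n ≤ Nat.primeCounting n * Real.log n := by
    nlinarith
  have h7 := le_of_mul_le_mul_right h6 hl0
  have h8 : (Nat.sqrt n : ℝ) ≤ √(n : ℝ) := Real.nat_sqrt_le_real_sqrt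
  exact_mod_cast h8.trans h7

end

/-! ### Affected points in actions of groups over alternating groups -/

section
open Equiv Equiv.Perm MulAction

section transport
variable {q : ℕ} {B : Type} [Group B] {f : Perm (Fin q) →* B}

theorem commutator_map_alternating (hq : 5 ≤ q) :
    ⁅(alternatingGroup (Fin q)).map f, (alternatingGroup (Fin q)).map f⁆ =
      (alternatingGroup (Fin q)).map f := by
  have h1 := commutator_alternatingGroup_eq_top (α := Fin q) (by simpa using hq)
  have h2 : ⁅alternatingGroup (Fin q), alternatingGroup (Fin q)⁆ = alternatingGroup (Fin q) := by
    have := congrArg (Subgroup.map (alternatingGroup (Fin q)).subtype) h1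
    rw [commutator_def, Subgroup.map_commutator] at this
    simpa [← MonoidHom.range_eq_map] using this
  rw [← Subgroup.map_commutator, h2]

theorem simpleIn_map_alternating (hq : 5 ≤ q) :
    SimpleIn ((alternatingGroup (Fin q)).map f) := by
  intro N hN hconj hne
  have hsimp : IsSimpleGroup (alternatingGroup (Fin q)) :=
    alternatingGroup.isSimpleGroup (by simpa using hq)
  let N' : Subgroup (alternatingGroup (Fin q)) := (N.comap f).subgroupOf _
  have hmem : ∀ x : alternatingGroup (Fin q), x ∈ N' ↔ f x ∈ N := fun x => Iff.rfl
  have hnor : N'.Normal := ⟨fun x hx g => by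
    rw [hmem] at hx ⊢
    have := hconj (f g) (Subgroup.mem_map_of_mem f g.2) _ hx
    simpa using this⟩
  rcases hnor.eq_bot_or_eq_top with h | h
  · exfalso
    apply hne
    rw [eq_bot_iff]
    intro y hy
    obtain ⟨x, hx, rfl⟩ := hN hy
    have h1 : (⟨x, hx⟩ : alternatingGroup (Fin q)) ∈ N' := (hmem _).2 hy
    rw [h, Subgroup.mem_bot] at h1
    have : x = 1 := congrArg Subtype.val h1
    rw [this, map_one]; exact Subgroup.one_mem _
  · refine le_antisymm hN ?_
    rintro _ ⟨x, hx, rfl⟩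
    have h1 : (⟨x, hx⟩ : alternatingGroup (Fin q)) ∈ N' := by rw [h]; trivial
    exact (hmem _).1 h1

/-- A copy of `Alt(q)`, `q` prime, is `Good`: a subgroup of order divisible by `q` contains a
`q`-cycle and so is transitive, whereas a proper subgroup of small index has a short orbit by
`alternating_le_or_small_orbit`. -/
theorem good_map_alternating (hf : Function.Injective f) (hq : 5 ≤ q) (hp : q.Prime) {M v : ℕ}
    (hv : 2 ≤ v) (hM : 2 * M < v.factorial) (hMq : 2 * M < 2 ^ q) (hvq : 4 * v ^ 3 < q) :
    Good ((alternatingGroup (Fin q)).map f) q M := by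
  have : Nontrivial (Fin q) := Fin.nontrivial_iff_two_le.2 (by omega)
  refine ⟨hp, ?_, ?_⟩
  · rw [Subgroup.card_map_of_injective hf]
    have h1 : 2 * Nat.card (alternatingGroup (Fin q)) = q.factorial := by
      rw [nat_card_alternatingGroup]
      simp only [Nat.card_eq_fintype_card, Fintype.card_fin]
      exact Nat.mul_div_cancel' (Nat.dvd_factorial (by norm_num) (by omega))
    have h2 : q ∣ 2 * Nat.card (alternatingGroup (Fin q)) := by
      rw [h1]; exact Nat.dvd_factorial (by omega) le_rfl
    refine (hp.dvd_mul.1 h2).resolve_left fun h => ?_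
    have := Nat.le_of_dvd (by norm_num) h
    omega
  · intro H hH hpH hidx
    have hHr : H ≤ f.range := hH.trans (f.range_eq_map ▸ Subgroup.map_mono le_top)
    set Z := H.comap f with hZ
    have hZH : Z.map f = H := Subgroup.map_comap_eq_self hHr
    have hZA : Z ≤ alternatingGroup (Fin q) := by
      rw [← Subgroup.map_le_map_iff_of_injective hf, hZH]; exact hH
    have hZcard : Nat.card Z = Nat.card H := by
      rw [← hZH, Subgroup.card_map_of_injective hf]
    have hrel : Z.relIndex (alternatingGroup (Fin q)) ≤ M := by
      rw [← Subgroup.relIndex_map_map_of_injective _ _ hf, hZH]; exact hidx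
    have hidxZ : Z.index ≤ 2 * M := by
      rw [← Subgroup.relIndex_mul_index hZA, alternatingGroup.index_eq_two]; omega
    rcases alternating_le_or_small_orbit hv hidxZ hM (by simpa using hvq) with h | ⟨a, ha⟩
    · rw [← hZH, le_antisymm hZA h]
    · exfalso
      have := Fact.mk hp
      rw [← hZcard] at hpH
      obtain ⟨g, hg⟩ := exists_prime_orderOf_dvd_card' q hpH
      have hg' : orderOf (g : Perm (Fin q)) = q := by rw [Subgroup.orderOf_coe, hg]
      have hcyc : (g : Perm (Fin q)).IsCycle :=
        isCycle_of_prime_order'' (by simpa using hp) (by simpa using hg')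
      have hsupp : (g : Perm (Fin q)).support = Finset.univ := by
        rw [← Finset.card_eq_iff_eq_univ, ← hcyc.orderOf, hg', Fintype.card_fin]
      have horb : orbit Z a = Set.univ := by
        rw [Set.eq_univ_iff_forall]
        intro b
        have hne : ∀ c, (g : Perm (Fin q)) c ≠ c := fun c => by
          rw [← Perm.mem_support, hsupp]; exact Finset.mem_univ _
        obtain ⟨i, hi⟩ := hcyc.exists_zpow_eq (hne a) (hne b)
        exact ⟨g ^ i, hi⟩
      rw [horb, Set.ncard_univ, Nat.card_eq_fintype_card, Fintype.card_fin] at ha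
      omega

end transport

/-- The even permutations of `Fin k` fixing all points from `q` on. -/
def altFix (k q : ℕ) : Subgroup (Perm (Fin k)) :=
  alternatingGroup (Fin k) ⊓ fixingSubgroup (Perm (Fin k)) {i : Fin k | q ≤ (i : ℕ)}

theorem altFix_mono {k q q' : ℕ} (h : q ≤ q') : altFix k q ≤ altFix k q' := by
  intro g hg
  obtain ⟨h1, h2⟩ := mem_inf_fixingSubgroup.1 hg
  exact mem_inf_fixingSubgroup.2 ⟨h1, fun t ht => h2 t (le_trans h ht)⟩

/-- `altFix k q` is a copy of `Alt(q)`. -/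
theorem exists_altFix_eq {k q : ℕ} (h : q ≤ k) :
    ∃ f : Perm (Fin q) →* Perm (Fin k), Function.Injective f ∧
      (alternatingGroup (Fin q)).map f = altFix k q := by
  let e : Fin q ≃ {i : Fin k // (i : ℕ) < q} := (Fin.castLEOrderIso h).toEquiv
  refine ⟨extendDomainHom e, extendDomainHom_injective e, le_antisymm ?_ ?_⟩
  · rintro _ ⟨g, hg, rfl⟩
    refine mem_inf_fixingSubgroup.2 ⟨?_, fun t ht => ?_⟩
    · rw [mem_alternatingGroup, extendDomainHom_apply, sign_extendDomain]; exact hg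
    · show (g.extendDomain e) t = t
      exact extendDomain_apply_not_subtype _ _ (not_lt.2 ht)
  · intro g hg
    obtain ⟨h1, h2⟩ := mem_inf_fixingSubgroup.1 hg
    have h3 : ∀ x : Fin k, (g x : ℕ) < q ↔ (x : ℕ) < q := by
      intro x
      constructor
      · intro hx
        by_contra hx'
        have : g x = x := h2 x (not_lt.1 hx')
        rw [this] at hx; exact hx' hx
      · intro hx
        by_contra hx'
        have : g (g x) = g x := h2 (g x) (not_lt.1 hx')
        rw [g.injective this] at hx'; exact hx' hx
    have h4 : extendDomainHom e (e.symm.permCongr (g.subtypePerm h3)) = g := by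
      refine Equiv.ext fun x => ?_
      rw [extendDomainHom_apply]
      by_cases hx : (x : ℕ) < q
      · rw [extendDomain_apply_subtype (p := fun i : Fin k => (i : ℕ) < q) _ e hx]
        simp [Equiv.permCongr_apply]
      · rw [extendDomain_apply_not_subtype (p := fun i : Fin k => (i : ℕ) < q) _ e hx]
        have : g x = x := h2 x (not_lt.1 hx)
        rw [this]
    refine ⟨_, ?_, h4⟩
    have h5 := congrArg sign h4
    rw [extendDomainHom_apply, sign_extendDomain] at h5
    show sign _ = 1
    rw [h5]; exact h1

theorem two_mul_two_pow_lt_factorial {J : ℕ} (hJ : 1 ≤ J) : 2 * 2 ^ J < (J + 2).factorial := by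
  induction J, hJ using Nat.le_induction with
  | base => decide
  | succ J hJ ih =>
    rw [Nat.factorial_succ (J + 2), pow_succ]
    nlinarith

/-- If a group maps onto `Alt(k)` and acts faithfully on at most `2 ^ J` points, some point stabilizer
does not map onto `Alt(k)`. Otherwise all points are unaffected for every member of the chain
`altFix k q`, `q` running over primes with `4 * (J + 2) ^ 3 < q ≤ k`, so by `unaffected` the kernel of
the action, which is trivial, maps onto a nontrivial member of the chain. -/
theorem exists_affected {X Γ : Type u} [Group X] [Finite X] [MulAction X Γ] [Finite Γ]
    [FaithfulSMul X Γ] {k J : ℕ} (hJ : 1 ≤ J) (φ : X →* Perm (Fin k))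
    (hφ : φ.range = alternatingGroup (Fin k)) (hΓ : Nat.card Γ ≤ 2 ^ J)
    (hk : 4 * (J + 2) ^ 3 + (J + 1) * J + 2 ≤ Nat.primeCounting k) :
    ∃ γ : Γ, ¬ alternatingGroup (Fin k) ≤ (stabilizer X γ).map φ := by
  by_contra! hcon
  set c := 4 * (J + 2) ^ 3 with hc
  let p : ℕ → ℕ := fun i => Nat.nth Nat.Prime (i + c)
  have hpm : StrictMono p := fun a b hab =>
    Nat.nth_strictMono Nat.infinite_setOfPred_prime (Nat.add_lt_add_right hab c)
  have hpp : ∀ i, (p i).Prime := fun i => Nat.prime_nth_prime _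
  have hpc : ∀ i, c < p i := by
    intro i
    have := Nat.add_two_le_nth_prime (i + c)
    show c < Nat.nth Nat.Prime (i + c)
    omega
  set n := (J + 1) * J + 1 with hn
  have hpk : ∀ i < n, p i ≤ k := by
    intro i hi
    have h1 : i + c < Nat.count Nat.Prime (k + 1) := by
      have : Nat.primeCounting k = Nat.count Nat.Prime (k + 1) := rfl
      rw [← this]; omega
    have := Nat.nth_lt_of_lt_count h1
    show Nat.nth Nat.Prime (i + c) ≤ k
    omega
  have hc3 : J + 2 ≤ c := by
    have : (J + 2) ^ 1 ≤ (J + 2) ^ 3 := Nat.pow_le_pow_right (by omega) (by norm_num)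
    rw [pow_one] at this
    omega
  have hc5 : 5 ≤ c := by
    have : 3 ^ 3 ≤ (J + 2) ^ 3 := Nat.pow_le_pow_left (by omega) _
    omega
  have hfac := two_mul_two_pow_lt_factorial hJ
  have hf : ∀ i < n, ∃ f : Perm (Fin (p i)) →* Perm (Fin k), Function.Injective f ∧
      (alternatingGroup (Fin (p i))).map f = altFix k (p i) := fun i hi => exists_altFix_eq (hpk i hi)
  have hp5 : ∀ i, 5 ≤ p i := fun i => hc5.trans (hpc i).le
  have hgood : ∀ i < n, Good (altFix k (p i)) (p i) (2 ^ J) := by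
    intro i hi
    obtain ⟨f, hf1, hf2⟩ := hf i hi
    rw [← hf2]
    refine good_map_alternating hf1 (hp5 i) (hpp i) (by omega) hfac ?_ (hpc i)
    rw [mul_comm, ← pow_succ]
    exact Nat.pow_lt_pow_right (by norm_num) (by have := hpc i; omega)
  have hper : ∀ i < n, ⁅altFix k (p i), altFix k (p i)⁆ = altFix k (p i) := by
    intro i hi
    obtain ⟨f, hf1, hf2⟩ := hf i hi
    rw [← hf2]; exact commutator_map_alternating (hp5 i)
  have hup := unaffected.{u} (w := J + 1) (n := n) (J := J) (fun i => altFix k (p i)) p hpm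
    (by omega) hper (by
      intro i hi
      obtain ⟨f, hf1, hf2⟩ := hf i hi
      show SimpleIn (altFix k (p i))
      rw [← hf2]; exact simpleIn_map_alternating (hp5 i)) hgood
    (fun i j hij hj => altFix_mono (hpm.monotone hij)) J le_rfl ((J + 1) * J) le_rfl (by omega)
  set A := altFix k (p ((J + 1) * J)) with hA
  have hAle : ∀ S : Subgroup X, alternatingGroup (Fin k) ≤ S.map φ → (S ⊓ A.comap φ).map φ = A :=
    fun S h => map_inf_comap (inf_le_left.trans h)
  have htop : (A.comap φ).map φ = A := by
    have := hAle ⊤ (by rw [← hφ, MonoidHom.range_eq_map])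
    rwa [top_inf_eq] at this
  have hker := hup X Γ φ (A.comap φ) Set.univ (fun _ _ _ _ => Set.mem_univ _) htop
    (by rwa [Set.ncard_univ]) (fun t _ => by
      rw [inf_comm]; exact hAle _ (hcon t))
  have hbot : A.comap φ ⊓ fixingSubgroup X (Set.univ : Set Γ) = ⊥ := by
    rw [eq_bot_iff]
    intro x hx
    have h := (mem_inf_fixingSubgroup.1 hx).2
    rw [Subgroup.mem_bot]
    apply FaithfulSMul.eq_of_smul_eq_smul (α := Γ)
    intro a; rw [h a trivial, one_smul]
  rw [hbot, Subgroup.map_bot] at hker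
  have h1 := (hgood ((J + 1) * J) (by omega)).2.1
  rw [← hA, ← hker, Subgroup.card_bot, Nat.dvd_one] at h1
  have := hp5 ((J + 1) * J)
  omega

end

/-! ### Divisibility of indices by the degree -/

section
open Equiv Equiv.Perm MulAction

/-- The stabilizer of `a` in `Alt(k)` has index `k`, and it contains the stabilizer of `a` in `Z`, of
index `|orbit| * [Alt(k) : Z]`. -/
theorem dvd_ncard_orbit_mul {k : ℕ} (hk : 3 ≤ k) {Z : Subgroup (Perm (Fin k))}
    (hZ : Z ≤ alternatingGroup (Fin k)) (a : Fin k) :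
    k ∣ (orbit Z a).ncard * Z.relIndex (alternatingGroup (Fin k)) := by
  have h1 : k = (stabilizer (alternatingGroup (Fin k)) a).index := by
    have := alternatingGroup.isPretransitive_of_three_le_card (Fin k) (by simpa using hk)
    rw [index_stabilizer_of_transitive, Nat.card_eq_fintype_card, Fintype.card_fin]
  set A := alternatingGroup (Fin k) with hA
  set Z' := Z.subgroupOf A with hZ'
  have h2 : (orbit Z a).ncard = (stabilizer Z a).index := (index_stabilizer Z a).symm
  have h3 : (stabilizer Z' a).index = (stabilizer Z a).index := by
    rw [index_stabilizer, index_stabilizer]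
    congr 1
    ext b
    constructor
    · rintro ⟨g, rfl⟩
      exact ⟨⟨g, g.2⟩, rfl⟩
    · rintro ⟨g, rfl⟩
      exact ⟨⟨⟨g, hZ g.2⟩, g.2⟩, rfl⟩
  have h4 : ((stabilizer Z' a).map Z'.subtype).index = (stabilizer Z' a).index * Z'.index :=
    Subgroup.index_map_subtype _
  have h5 : (stabilizer Z' a).map Z'.subtype ≤ stabilizer A a := by
    rintro _ ⟨g, hg, rfl⟩
    exact hg
  have h6 := Subgroup.index_dvd_of_le h5
  rw [h4, ← h1, h3, ← h2] at h6
  exact h6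

theorem faithful_quotient {G : Type u} [Group G] [IsSimpleGroup G] {M : Subgroup G} (hM : M ≠ ⊤) :
    FaithfulSMul G (G ⧸ M) := by
  have h1 : M.normalCore = ⊥ := by
    refine M.normalCore_normal.eq_bot_or_eq_top.resolve_right fun h => hM ?_
    rw [eq_top_iff, ← h]; exact M.normalCore_le
  rw [Subgroup.normalCore_eq_ker, MonoidHom.ker_eq_bot_iff] at h1
  exact ⟨fun {a b} h => h1 (Equiv.ext h)⟩

/-- If `L` maps onto `Alt(k)`, then `k` divides a small multiple of the index `m` of any proper
subgroup `M` with `m ≤ 2 ^ J`. Indeed let `P` be the stabilizer in `L` of a point of `G ⧸ M` affected by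
the action. Its image in `Alt(k)` is a proper subgroup of index at most `2 ^ J`, hence has an orbit of
length `s ≤ J + 1`, and so `k ∣ s * [L : P]`. Since `[L : P] ≤ m` and `m ∣ [L : P] * [G : L]`, the index
`[L : P]` is `c * (m / g)` with `c ≤ g`, where `g = gcd(m, [G : L])`; the multiplier is `s * c`. -/
theorem key_dvd {G : Type u} [Group G] [Finite G] [IsSimpleGroup G] {L : Subgroup G} {k J : ℕ}
    (hJ : 1 ≤ J) (φ : L →* alternatingGroup (Fin k)) (hφ : Function.Surjective φ)
    (hk : 4 * (J + 2) ^ 3 + (J + 1) * J + 2 ≤ Nat.primeCounting k)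
    {M : Subgroup G} (hM : M ≠ ⊤) (hMJ : M.index ≤ 2 ^ J) :
    ∃ b, 1 ≤ b ∧ b ≤ (J + 1) * Nat.gcd M.index L.index ∧ k ∣ b * M.index := by
  have hkk : 4 * (J + 2) ^ 3 < k := by
    have h1 : Nat.primeCounting k ≤ k + 1 := Nat.count_le _
    have : 0 ≤ (J + 1) * J := Nat.zero_le _
    omega
  have hk3 : 3 ≤ k := by
    have : 3 ^ 3 ≤ (J + 2) ^ 3 := Nat.pow_le_pow_left (by omega) _
    omega
  have hm0 : M.index ≠ 0 := M.index_ne_zero_of_finite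
  have hfaithG : FaithfulSMul G (G ⧸ M) := faithful_quotient hM
  have hfaith : FaithfulSMul L (G ⧸ M) := ⟨fun {g h} H => Subtype.ext (hfaithG.eq_of_smul_eq_smul H)⟩
  set ψ : L →* Perm (Fin k) := (alternatingGroup (Fin k)).subtype.comp φ with hψ
  have hψr : ψ.range = alternatingGroup (Fin k) := by
    rw [hψ, MonoidHom.range_comp, MonoidHom.range_eq_top.2 hφ, ← MonoidHom.range_eq_map,
      Subgroup.range_subtype]
  obtain ⟨γ, hγ⟩ := exists_affected (Γ := G ⧸ M) hJ ψ hψr hMJ hk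
  set P := stabilizer L γ with hP
  set Z := P.map ψ with hZ
  have hZA : Z ≤ alternatingGroup (Fin k) := by
    rw [← hψr]; exact (Subgroup.map_mono le_top).trans (MonoidHom.range_eq_map ψ).ge
  have hrel : Z.relIndex (alternatingGroup (Fin k)) ∣ P.index := by
    have := relIndex_map_dvd ψ P ⊤
    rwa [← MonoidHom.range_eq_map, hψr, Subgroup.relIndex_top_right] at this
  have hPidx : P.index ≤ M.index := by
    rw [hP, index_stabilizer]
    exact (Set.ncard_le_ncard (Set.subset_univ _) (Set.toFinite _)).trans (by
      rw [Set.ncard_univ]; rfl)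
  have hP0 : P.index ≠ 0 := P.index_ne_zero_of_finite
  have hnt : Nontrivial (Fin k) := Fin.nontrivial_iff_two_le.2 (by omega)
  have hZidx : Z.index ≤ 2 * 2 ^ J := by
    rw [← Subgroup.relIndex_mul_index hZA, alternatingGroup.index_eq_two]
    have := Nat.le_of_dvd (Nat.pos_of_ne_zero hP0) hrel
    omega
  rcases alternating_le_or_small_orbit (v := J + 2) (by omega) hZidx
    (two_mul_two_pow_lt_factorial hJ) (by simpa using hkk) with h | ⟨a, ha⟩
  · exact absurd h hγ
  have hs : (orbit Z a).ncard ≤ J + 1 := by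
    rw [mul_comm, ← pow_succ] at ha
    exact (Nat.pow_le_pow_iff_right (by norm_num)).1 ha
  have hs0 : 1 ≤ (orbit Z a).ncard :=
    (Set.ncard_pos (Set.toFinite _)).2 ⟨a, mem_orbit_self a⟩
  have hdvd : k ∣ (orbit Z a).ncard * P.index :=
    (dvd_ncard_orbit_mul hk3 hZA a).trans (Nat.mul_dvd_mul_left _ hrel)
  have hmd : M.index ∣ P.index * L.index := by
    have h1 : (P.map L.subtype).index = P.index * L.index := Subgroup.index_map_subtype _
    have h2 : (stabilizer G γ).index = M.index := by
      rw [index_stabilizer_of_transitive]; rfl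
    rw [← h1, ← h2]
    refine Subgroup.index_dvd_of_le ?_
    rintro _ ⟨g, hg, rfl⟩
    exact hg
  set g := Nat.gcd M.index L.index with hg
  have hg0 : 0 < g := Nat.gcd_pos_of_pos_left _ (Nat.pos_of_ne_zero hm0)
  obtain ⟨m₁, hm₁⟩ : g ∣ M.index := Nat.gcd_dvd_left _ _
  have hmp : m₁ ∣ P.index := by
    obtain ⟨n₁, hn₁⟩ : g ∣ L.index := Nat.gcd_dvd_right _ _
    have hco : Nat.Coprime m₁ n₁ := by
      have := Nat.coprime_div_gcd_div_gcd (m := M.index) (n := L.index) hg0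
      rwa [← hg, Nat.div_eq_of_eq_mul_right hg0 hm₁, Nat.div_eq_of_eq_mul_right hg0 hn₁] at this
    rw [hm₁, hn₁, mul_left_comm] at hmd
    exact hco.dvd_of_dvd_mul_right (Nat.dvd_of_mul_dvd_mul_left hg0 hmd)
  obtain ⟨c, hc⟩ := hmp
  have hm₁0 : 0 < m₁ := Nat.pos_of_ne_zero fun h => hm0 (by rw [hm₁, h, mul_zero])
  have hc0 : 1 ≤ c := Nat.pos_of_ne_zero fun h => hP0 (by rw [hc, h, mul_zero])
  have hcg : c ≤ g := by
    rw [hc, hm₁, mul_comm g] at hPidx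
    exact Nat.le_of_mul_le_mul_left hPidx hm₁0
  refine ⟨(orbit Z a).ncard * c, Nat.mul_pos hs0 hc0, Nat.mul_le_mul hs hcg, ?_⟩
  refine hdvd.trans ?_
  rw [mul_assoc]
  refine Nat.mul_dvd_mul_left _ ?_
  rw [hc, mul_comm m₁]
  refine Nat.mul_dvd_mul_left _ ⟨g, by rw [hm₁, mul_comm]⟩

end

/-! ### Choice of parameters -/

section
open Filter Asymptotics

theorem eventually_log_pow : ∃ ℓ₀ : ℕ, ∀ ℓ ≥ ℓ₀, 16 * 9001 ^ 2 * Real.log (ℓ : ℝ) ^ 4 ≤ ℓ := by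
  have h1 : ∀ᶠ x : ℝ in atTop, ‖Real.log x ^ 4‖ ≤ 1 / (16 * 9001 ^ 2) * ‖x‖ := by
    have := isLittleO_log_rpow_rpow_atTop (s := 1) 4 (by norm_num)
    have h := this.bound (c := 1 / (16 * 9001 ^ 2)) (by norm_num)
    filter_upwards [h] with x hx
    rw [Real.rpow_one] at hx
    exact_mod_cast hx
  have h2 := (tendsto_natCast_atTop_atTop (R := ℝ)).eventually h1
  obtain ⟨n₀, hn₀⟩ := eventually_atTop.1 h2
  refine ⟨n₀, fun ℓ hℓ => ?_⟩
  have h := hn₀ ℓ hℓ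
  rw [Real.norm_natCast] at h
  have h' := (le_abs_self _).trans h
  linarith

/-- The main term in the bound for the indices with a small multiple divisible by some `k ≥ V`, with
`x = exp y`, `E` about `exp (2000 y²)` and `V` at least `exp (9000 y²)`: the numerator is
`exp (4008 y² + O(y))`. -/
theorem params_aux {x y : ℝ} {j E V : ℕ} (hx : 10 ^ 9 ≤ x) (hy2 : 4 ≤ y) (hexp : x = Real.exp y)
    (hlog4 : 16 * 9001 ^ 2 * y ^ 4 ≤ x) (hjx : (j : ℝ) + 2 ≤ x ^ 3) (hE1 : 1 ≤ E)
    (hEe2 : (E : ℝ) ≤ 2 * Real.exp (2000 * y ^ 2)) (hVv : Real.exp (9000 * y ^ 2) ≤ V) :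
    ((((j + 1) * E : ℕ) : ℝ)) ^ 2 * (1 + Real.log (((j + 1) * E * 2 ^ j : ℕ))) / V ≤ 1 / x := by
  have hx0 : 0 < x := by linarith
  have hpow : ∀ n : ℕ, x ^ n = Real.exp (n * y) := fun n => by rw [hexp, ← Real.exp_nat_mul]
  set e := Real.exp (2000 * y ^ 2) with he
  have he1 : 0 < e := Real.exp_pos _
  have hB : (((j + 1) * E : ℕ) : ℝ) ≤ Real.exp (2004 * y ^ 2) := by
    calc (((j + 1) * E : ℕ) : ℝ) = (j + 1) * E := by push_cast; rfl
      _ ≤ x ^ 3 * (2 * e) := by gcongr; linarith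
      _ ≤ x ^ 3 * (x * e) := by gcongr; linarith
      _ = Real.exp (4 * y + 2000 * y ^ 2) := by
        rw [← mul_assoc, ← pow_succ, hpow, he, ← Real.exp_add]; norm_num
      _ ≤ _ := Real.exp_le_exp.2 (by nlinarith)
  have hB1 : (1 : ℝ) ≤ (((j + 1) * E : ℕ) : ℝ) := by
    exact_mod_cast Nat.mul_pos (Nat.succ_pos j) hE1
  have hlogB := Real.log_le_log (by linarith) hB
  rw [Real.log_exp] at hlogB
  have hlog : 1 + Real.log (((j + 1) * E * 2 ^ j : ℕ)) ≤ x ^ 4 := by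
    rw [Nat.cast_mul, Real.log_mul (by linarith) (by positivity), Nat.cast_pow, Real.log_pow]
    have h2 := Real.log_two_lt_d9
    have h3 : (j : ℝ) * Real.log ((2 : ℕ) : ℝ) ≤ j := by
      have : (0 : ℝ) ≤ j := Nat.cast_nonneg _
      push_cast
      nlinarith
    have h4 : 2004 * y ^ 2 ≤ x := by
      have h5 : y ^ 2 * 1 ≤ y ^ 2 * y ^ 2 :=
        mul_le_mul_of_nonneg_left (by nlinarith) (sq_nonneg y)
      have h6 : y ^ 4 = y ^ 2 * y ^ 2 := by ring
      linarith [sq_nonneg y]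
    have h5 : x ^ 3 + x ≤ x ^ 4 := by
      have : 1 ≤ x ^ 2 := by nlinarith
      nlinarith [pow_pos hx0 3]
    linarith
  have hlog0 : 0 ≤ 1 + Real.log (((j + 1) * E * 2 ^ j : ℕ)) := by
    have := Real.log_natCast_nonneg ((j + 1) * E * 2 ^ j)
    linarith
  have hV0 : (0 : ℝ) < V := (Real.exp_pos _).trans_le hVv
  rw [div_le_div_iff₀ hV0 hx0, one_mul]
  calc (((j + 1) * E : ℕ) : ℝ) ^ 2 * (1 + Real.log (((j + 1) * E * 2 ^ j : ℕ))) * x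
      ≤ Real.exp (2004 * y ^ 2) ^ 2 * x ^ 4 * x :=
        mul_le_mul_of_nonneg_right (mul_le_mul (pow_le_pow_left₀ (by linarith) hB 2) hlog
          hlog0 (by positivity)) hx0.le
    _ = Real.exp (4008 * y ^ 2 + 5 * y) := by
      rw [mul_assoc, ← pow_succ, hpow, ← Real.exp_nat_mul, ← Real.exp_add]; congr 1; push_cast; ring
    _ ≤ Real.exp (9000 * y ^ 2) := Real.exp_le_exp.2 (by nlinarith)
    _ ≤ V := hVv

set_option maxHeartbeats 1000000 in
/-- The choice of parameters, with `y = log ℓ`: `E = ⌈exp (2000 y²)⌉` and `V = ⌈exp (9000 y²)⌉`. Both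
exceed every fixed power of `ℓ`, `V` exceeds `E ^ 2` by far, and still `(log V) ^ 2 = O(y⁴)` is small
compared with `ℓ`. -/
theorem params (n₀ : ℕ) : ∃ ℓ₀ : ℕ, ∀ ℓ ≥ ℓ₀, ∃ V E : ℕ, 60 ≤ ℓ ∧ 1 ≤ E ∧ (13 * ℓ) ^ 4 ≤ V ∧ n₀ ≤ V ∧
    (4 * (16 * (ℓ + 1) ^ 2 + 2) ^ 3 + (16 * (ℓ + 1) ^ 2 + 1) * (16 * (ℓ + 1) ^ 2) + 2) ^ 2 ≤ V ∧
    8 * Real.log ((ℓ * (V + ℓ * (13 * ℓ) ^ 4) : ℕ) + 1) ^ 2 ≤ (ℓ : ℝ) / 2 ∧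
    20 * Real.log ((1 + (13 * ℓ) ^ 4 * ℓ ^ 2 : ℕ) + 1) ^ 2 ≤ Real.log E ∧
    ((((16 * (ℓ + 1) ^ 2 + 1) * E : ℕ) : ℝ)) ^ 2 *
      (1 + Real.log (((16 * (ℓ + 1) ^ 2 + 1) * E * 2 ^ (16 * (ℓ + 1) ^ 2) : ℕ))) / V ≤ 1 / ℓ := by
  obtain ⟨ℓ₁, h₁⟩ := eventually_log_pow
  refine ⟨max (max ℓ₁ n₀) (10 ^ 9), fun ℓ hℓ => ?_⟩
  have hℓ1 : ℓ₁ ≤ ℓ := (le_max_left _ _).trans ((le_max_left _ _).trans hℓ)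
  have hℓ2 : n₀ ≤ ℓ := (le_max_right _ _).trans ((le_max_left _ _).trans hℓ)
  have hℓ3 : 10 ^ 9 ≤ ℓ := (le_max_right _ _).trans hℓ
  have hlog4 := h₁ ℓ hℓ1
  have hx : (10 ^ 9 : ℝ) ≤ ℓ := by exact_mod_cast hℓ3
  set x : ℝ := (ℓ : ℝ) with hxdef
  set y := Real.log x with hy
  have hx0 : 0 < x := by linarith
  have hexp : x = Real.exp y := (Real.exp_log hx0).symm
  have hpow : ∀ n : ℕ, x ^ n = Real.exp (n * y) := fun n => by rw [hexp, ← Real.exp_nat_mul]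
  have hy2 : 4 ≤ y := by
    rw [hy, Real.le_log_iff_exp_le hx0]
    have : Real.exp 4 = Real.exp 1 ^ 4 := by rw [← Real.exp_nat_mul]; norm_num
    rw [this]
    have h := Real.exp_one_lt_d9
    calc Real.exp 1 ^ 4 ≤ (2.7182818286 : ℝ) ^ 4 := by gcongr
      _ ≤ x := by norm_num at *; linarith
  have hJ : (16 * (ℓ + 1) ^ 2 + 2 : ℕ) ≤ ℓ ^ 3 := by nlinarith
  have hP : 4 * (16 * (ℓ + 1) ^ 2 + 2) ^ 3 + (16 * (ℓ + 1) ^ 2 + 1) * (16 * (ℓ + 1) ^ 2) + 2 ≤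
      ℓ ^ 10 := by
    generalize 16 * (ℓ + 1) ^ 2 = j at hJ ⊢
    have h1 : (j + 2) ^ 3 ≤ (ℓ ^ 3) ^ 3 := Nat.pow_le_pow_left hJ 3
    have h2 : (j + 1) * j + 2 ≤ (j + 2) ^ 3 := by nlinarith [Nat.zero_le (j ^ 3)]
    calc 4 * (j + 2) ^ 3 + (j + 1) * j + 2 ≤ 5 * (ℓ ^ 3) ^ 3 := by omega
      _ = 5 * ℓ ^ 9 := by ring
      _ ≤ ℓ * ℓ ^ 9 := Nat.mul_le_mul_right _ (by omega)
      _ = ℓ ^ 10 := by ring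
  have hτ : (13 * ℓ) ^ 4 ≤ ℓ ^ 5 := by
    calc (13 * ℓ) ^ 4 = 28561 * ℓ ^ 4 := by ring
      _ ≤ ℓ * ℓ ^ 4 := Nat.mul_le_mul_right _ (by omega)
      _ = ℓ ^ 5 := by ring
  set v := Real.exp (9000 * y ^ 2) with hv
  set e := Real.exp (2000 * y ^ 2) with he
  have hxv : ∀ n ≤ 20, x ^ n ≤ v := by
    intro n hn
    rw [hpow, hv]
    have : (n : ℝ) ≤ 20 := by exact_mod_cast hn
    apply Real.exp_le_exp.2
    nlinarith
  have hv1 : 1 ≤ v := by simpa using hxv 0 (by norm_num)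
  have he1 : 1 ≤ e := Real.one_le_exp (by positivity)
  set V := ⌈v⌉₊ with hV
  set E := ⌈e⌉₊ with hE
  have hVv : v ≤ V := Nat.le_ceil _
  have hVv2 : (V : ℝ) ≤ 2 * v := by
    have := (Nat.ceil_lt_add_one (by linarith : 0 ≤ v)).le
    rw [← hV] at this; linarith
  have hEe : e ≤ E := Nat.le_ceil _
  have hEe2 : (E : ℝ) ≤ 2 * e := by
    have := (Nat.ceil_lt_add_one (by linarith : 0 ≤ e)).le
    rw [← hE] at this; linarith
  have hV' : ∀ n ≤ 20, ℓ ^ n ≤ V := by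
    intro n hn
    have := (hxv n hn).trans hVv
    rw [hxdef] at this
    exact_mod_cast this
  have hE1 : 1 ≤ E := by
    have : (1 : ℝ) ≤ E := he1.trans hEe
    exact_mod_cast this
  refine ⟨V, E, by omega, hE1, hτ.trans (hV' 5 (by norm_num)), hℓ2.trans ?_, ?_, ?_, ?_, ?_⟩
  · simpa using hV' 1 (by norm_num)
  · refine (Nat.pow_le_pow_left hP 2).trans ?_
    rw [← pow_mul]; exact hV' 20 le_rfl
  · have h1 : ((ℓ * (V + ℓ * (13 * ℓ) ^ 4) : ℕ) : ℝ) + 1 ≤ Real.exp (9001 * y ^ 2) := by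
      have h2 : ((13 * ℓ : ℕ) : ℝ) ^ 4 ≤ x ^ 5 := by rw [hxdef]; exact_mod_cast hτ
      have h3 : x * ((13 * ℓ : ℕ) : ℝ) ^ 4 ≤ v :=
        (mul_le_mul_of_nonneg_left h2 hx0.le).trans (by
          have := hxv 6 (by norm_num)
          calc x * x ^ 5 = x ^ 6 := by ring
            _ ≤ v := this)
      calc ((ℓ * (V + ℓ * (13 * ℓ) ^ 4) : ℕ) : ℝ) + 1
          = x * (V + x * ((13 * ℓ : ℕ) : ℝ) ^ 4) + 1 := by push_cast; rfl
        _ ≤ x * (2 * v + v) + x * v := by gcongr; nlinarith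
        _ = 4 * (x * v) := by ring
        _ ≤ x * (x * v) := by gcongr; linarith
        _ = Real.exp (2 * y + 9000 * y ^ 2) := by
          rw [← mul_assoc, ← sq, hpow 2, hv, ← Real.exp_add]; norm_num
        _ ≤ _ := Real.exp_le_exp.2 (by nlinarith)
    have h0 : (1 : ℝ) ≤ ((ℓ * (V + ℓ * (13 * ℓ) ^ 4) : ℕ) : ℝ) + 1 := by
      linarith [Nat.cast_nonneg (α := ℝ) (ℓ * (V + ℓ * (13 * ℓ) ^ 4))]
    have h2 := Real.log_le_log (by linarith) h1
    rw [Real.log_exp] at h2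
    have h3 := pow_le_pow_left₀ (Real.log_nonneg h0) h2 2
    nlinarith
  · have h1 : ((1 + (13 * ℓ) ^ 4 * ℓ ^ 2 : ℕ) : ℝ) + 1 ≤ x ^ 8 := by
      have : 1 + (13 * ℓ) ^ 4 * ℓ ^ 2 + 1 ≤ ℓ ^ 8 := by
        calc 1 + (13 * ℓ) ^ 4 * ℓ ^ 2 + 1 ≤ ℓ ^ 5 * ℓ ^ 2 + 2 := by
              have := Nat.mul_le_mul_right (ℓ ^ 2) hτ
              omega
          _ = ℓ ^ 7 + 2 := by ring
          _ ≤ 2 * ℓ ^ 7 := by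
            have : ℓ ^ 1 ≤ ℓ ^ 7 := Nat.pow_le_pow_right (by omega) (by norm_num)
            rw [pow_one] at this; omega
          _ ≤ ℓ * ℓ ^ 7 := Nat.mul_le_mul_right _ (by omega)
          _ = ℓ ^ 8 := by ring
      rw [hxdef]
      exact_mod_cast this
    have h0 : (1 : ℝ) ≤ ((1 + (13 * ℓ) ^ 4 * ℓ ^ 2 : ℕ) : ℝ) + 1 := by
      linarith [Nat.cast_nonneg (α := ℝ) (1 + (13 * ℓ) ^ 4 * ℓ ^ 2)]
    have h2 := Real.log_le_log (by linarith) h1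
    rw [Real.log_pow, ← hy] at h2
    have h3 := pow_le_pow_left₀ (Real.log_nonneg h0) h2 2
    have h4 : 2000 * y ^ 2 ≤ Real.log E := by
      rw [← Real.log_exp (2000 * y ^ 2)]
      exact Real.log_le_log (Real.exp_pos _) hEe
    push_cast at h3 ⊢
    nlinarith
  · refine params_aux hx hy2 hexp hlog4 ?_ hE1 hEe2 hVv
    rw [hxdef]; exact_mod_cast hJ

end

/-! ### Sums of reciprocals of indices -/

section
open Finset

theorem sum_inv_Icc_le (n : ℕ) : ∑ c ∈ Icc 1 n, (1 : ℝ) / c ≤ 1 + Real.log n := by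
  have h := harmonic_le_one_add_log n
  rw [harmonic_eq_sum_Icc] at h
  push_cast at h
  simpa [one_div] using h

/-- If each `m ∈ S` is at most `Y` and some multiple `b * m` with `b ≤ B` is divisible by `k`,
then `m = k * c / b` with `c ≤ B * Y`, so the reciprocals of `S` have a small sum. -/
theorem sum_inv_le_of_dvd {S : Finset ℕ} {k B Y : ℕ} (hk : 1 ≤ k)
    (h : ∀ m ∈ S, 1 ≤ m ∧ m ≤ Y ∧ ∃ b, 1 ≤ b ∧ b ≤ B ∧ k ∣ b * m) :
    ∑ m ∈ S, (1 : ℝ) / m ≤ (B : ℝ) ^ 2 * (1 + Real.log ((B * Y : ℕ))) / k := by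
  have hk0 : (0 : ℝ) < k := by exact_mod_cast hk
  choose! f hf using fun m hm => (h m hm).2.2
  have hc : ∀ m ∈ S, k * (f m * m / k) = f m * m := fun m hm => Nat.mul_div_cancel' (hf m hm).2.2
  have hmaps : ∀ m ∈ S, (f m, f m * m / k) ∈ Icc 1 B ×ˢ Icc 1 (B * Y) := by
    intro m hm
    obtain ⟨h1, h2, -⟩ := h m hm
    obtain ⟨h3, h4, h5⟩ := hf m hm
    simp only [mem_product, mem_Icc]
    refine ⟨⟨h3, h4⟩, Nat.div_pos (Nat.le_of_dvd (Nat.mul_pos h3 h1) h5) hk, ?_⟩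
    exact (Nat.div_le_self _ _).trans (Nat.mul_le_mul h4 h2)
  have hinj : Set.InjOn (fun m => (f m, f m * m / k)) S := by
    intro m hm m' hm' heq
    simp only [Prod.mk.injEq] at heq
    have h1 := hc m hm
    rw [heq.2, hc m' hm', heq.1] at h1
    exact (Nat.eq_of_mul_eq_mul_left (hf m' hm').1 h1).symm
  calc ∑ m ∈ S, (1 : ℝ) / m = ∑ m ∈ S, (f m : ℝ) / (k * (f m * m / k : ℕ)) := by
        refine sum_congr rfl fun m hm => ?_
        have h1 : (k : ℝ) * (f m * m / k : ℕ) = f m * m := by exact_mod_cast hc m hm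
        have h2 : (f m : ℝ) ≠ 0 := by
          have := (hf m hm).1
          exact_mod_cast (by omega : f m ≠ 0)
        rw [h1]
        field_simp
    _ = ∑ q ∈ S.image (fun m => (f m, f m * m / k)), (q.1 : ℝ) / (k * q.2) := by
        rw [sum_image hinj]
    _ ≤ ∑ q ∈ Icc 1 B ×ˢ Icc 1 (B * Y), (q.1 : ℝ) / (k * q.2) :=
        sum_le_sum_of_subset_of_nonneg (image_subset_iff.2 hmaps) fun _ _ _ => by positivity
    _ = (∑ b ∈ Icc 1 B, (b : ℝ)) * (∑ c ∈ Icc 1 (B * Y), (1 : ℝ) / c) / k := by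
        rw [sum_product, sum_mul_sum, sum_div]
        refine sum_congr rfl fun b _ => ?_
        rw [sum_div]
        refine sum_congr rfl fun c _ => ?_
        rw [mul_one_div, div_div, mul_comm (c : ℝ)]
    _ ≤ ((B : ℝ) * B) * (1 + Real.log ((B * Y : ℕ))) / k := by
        have h1 : ∑ b ∈ Icc 1 B, (b : ℝ) ≤ B * B := by
          calc ∑ b ∈ Icc 1 B, (b : ℝ) ≤ ∑ b ∈ Icc 1 B, (B : ℝ) :=
                sum_le_sum fun b hb => by exact_mod_cast (mem_Icc.1 hb).2
            _ = B * B := by simp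
        have h2 := sum_inv_Icc_le (B * Y)
        have h3 : 0 ≤ ∑ c ∈ Icc 1 (B * Y), (1 : ℝ) / c := sum_nonneg fun _ _ => by positivity
        gcongr
    _ = _ := by rw [sq]

/-- Writing `m = gcd(m, N) * c`, the sum is at most the product of the sum over the divisors `e ≥ E` of
`N` and the harmonic sum over `c ≤ Y`. -/
theorem sum_inv_le_of_gcd {S : Finset ℕ} {N Y : ℕ} {E : ℝ} (hN : N ≠ 0)
    (h : ∀ m ∈ S, 1 ≤ m ∧ m ≤ Y ∧ E ≤ (Nat.gcd m N : ℕ)) :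
    ∑ m ∈ S, (1 : ℝ) / m ≤
      (∑ e ∈ N.divisors with E ≤ (e : ℕ), (1 : ℝ) / e) * (1 + Real.log Y) := by
  have hc : ∀ m : ℕ, m.gcd N * (m / m.gcd N) = m := fun m =>
    Nat.mul_div_cancel' (Nat.gcd_dvd_left _ _)
  have hinj : Set.InjOn (fun m : ℕ => (m.gcd N, m / m.gcd N)) S := by
    intro m hm m' hm' heq
    simp only [Prod.mk.injEq] at heq
    rw [← hc m, ← hc m', heq.1, ← heq.1, heq.2, heq.1]
  have hmaps : ∀ m ∈ S, (m.gcd N, m / m.gcd N) ∈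
      ({e ∈ N.divisors | E ≤ (e : ℕ)} : Finset ℕ) ×ˢ Icc 1 Y := by
    intro m hm
    obtain ⟨h1, h2, h3⟩ := h m hm
    simp only [mem_product, mem_Icc, mem_filter, Nat.mem_divisors]
    have hg : 0 < m.gcd N := Nat.gcd_pos_of_pos_left _ h1
    exact ⟨⟨⟨Nat.gcd_dvd_right _ _, hN⟩, h3⟩, Nat.div_pos (Nat.gcd_le_left _ h1) hg,
      (Nat.div_le_self _ _).trans h2⟩
  calc ∑ m ∈ S, (1 : ℝ) / m = ∑ m ∈ S, (1 : ℝ) / (m.gcd N : ℕ) * (1 / (m / m.gcd N : ℕ)) := by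
        refine sum_congr rfl fun m _ => ?_
        rw [one_div_mul_one_div, ← Nat.cast_mul, hc]
    _ = ∑ q ∈ S.image (fun m : ℕ => (m.gcd N, m / m.gcd N)), (1 : ℝ) / q.1 * (1 / q.2) := by
        rw [sum_image hinj]
    _ ≤ ∑ q ∈ ({e ∈ N.divisors | E ≤ (e : ℕ)} : Finset ℕ) ×ˢ Icc 1 Y, (1 : ℝ) / q.1 * (1 / q.2) :=
        sum_le_sum_of_subset_of_nonneg (image_subset_iff.2 hmaps) fun _ _ _ => by positivity
    _ = (∑ e ∈ N.divisors with E ≤ (e : ℕ), (1 : ℝ) / e) * (∑ c ∈ Icc 1 Y, (1 : ℝ) / c) := by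
        rw [sum_product, sum_mul_sum]
    _ ≤ _ := mul_le_mul_of_nonneg_left (sum_inv_Icc_le Y) (sum_nonneg fun _ _ => by positivity)

/-- Rankin's bound with `log E ≥ (7 + a) * log (W + 1) ^ 2`. -/
theorem sum_inv_divisors_le_pow {w : ℕ} (hw : w ≠ 0) {W : ℕ} (hW : 60 ≤ W)
    (hcard : w.primeFactors.card ≤ W) {E : ℝ} (hE : 0 < E) (a : ℕ)
    (h : (7 + a) * Real.log (W + 1) ^ 2 ≤ Real.log E) :
    ∑ e ∈ w.divisors with E ≤ (e : ℕ), (1 : ℝ) / e ≤ 1 / (W + 1 : ℝ) ^ a := by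
  refine (sum_inv_divisors_le hw hW hcard hE).trans ?_
  have hW1 : (1 : ℝ) < W + 1 := by
    have : (60 : ℝ) ≤ W := by exact_mod_cast hW
    linarith
  have hl := Real.log_pos hW1
  set t := Real.log (W + 1) with ht
  have hWt : (W + 1 : ℝ) = Real.exp t := (Real.exp_log (by linarith)).symm
  rw [hWt, ← Real.exp_nat_mul, ← Real.exp_nat_mul, ← Real.exp_add, one_div, ← Real.exp_neg]
  refine Real.exp_le_exp.2 ?_
  have : (7 + a) * t ≤ Real.log E / t := by rw [le_div_iff₀ hl]; nlinarith
  rw [neg_div]; push_cast; linarith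

end

/-! ### The limit of the reciprocal sums -/

section
open MulAction Finset

/-- Separating the index `1` of the whole group, `T` is the set of indices of proper subgroups. -/
theorem HSJ_eq (G : Type*) [Group G] [Finite G] : ∃ T : Finset ℕ,
    (∀ m ∈ T, ∃ H : Subgroup G, H ≠ ⊤ ∧ H.index = m) ∧ HSJ G = 1 + ∑ m ∈ T, (1 : ℝ) / m := by
  have hfin : (Set.range (fun H : Subgroup G => H.index)).Finite := Set.toFinite _
  refine ⟨hfin.toFinset.erase 1, ?_, ?_⟩
  · intro m hm
    rw [mem_erase, Set.Finite.mem_toFinset] at hm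
    obtain ⟨h1, H, rfl⟩ := hm
    exact ⟨H, fun h => h1 (by rw [h]; exact Subgroup.index_top), rfl⟩
  · rw [HSJ, finsum_mem_eq_finite_toFinset_sum _ hfin]
    have h1 : 1 ∈ hfin.toFinset := by
      rw [Set.Finite.mem_toFinset]; exact ⟨⊤, Subgroup.index_top⟩
    rw [← add_sum_erase _ _ h1]; simp

theorem card_dvd_factorial_index {G : Type u} [Group G] [Finite G] [IsSimpleGroup G]
    {M : Subgroup G} (hM : M ≠ ⊤) : Nat.card G ∣ M.index.factorial := by
  have := faithful_quotient hM
  have h := Subgroup.card_dvd_of_injective (toPermHom G (G ⧸ M)) toPerm_injective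
  rwa [Nat.card_perm] at h

theorem movP_of_prime_dvd {G : Type u} [Group G] [Finite G] {Ω : Type u} [MulAction G Ω]
    [FaithfulSMul G Ω] {p : ℕ} (hp : p.Prime) (h : p ∣ Nat.card G) : MovP G Ω p := by
  have := Fact.mk hp
  obtain ⟨x, hx⟩ := exists_prime_orderOf_dvd_card' p h
  refine ⟨x, ?_, fun a => by rw [← hx, pow_orderOf_eq_one, one_smul]⟩
  by_contra! hcon
  have : x = 1 := FaithfulSMul.eq_of_smul_eq_smul (α := Ω) fun a => by rw [hcon a, one_smul]
  rw [this, orderOf_one] at hx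
  exact hp.one_lt.ne hx

/-- A simple group whose order has many prime divisors has a subgroup of moderate index mapping
onto an alternating group of large degree. The cycle lengths fed to `extracts` are the primes up to
`(13 * ℓ) ^ 2`: there are at least `13 * ℓ` of them, and their sum is at most `(13 * ℓ) ^ 4`. -/
theorem hasGiant_of_card_primeFactors {G : Type u} [Group G] [Finite G] [IsSimpleGroup G]
    {M : Subgroup G} (hM : M ≠ ⊤) {ℓ V n₀ : ℕ} (hn₀ : ∀ n ≥ n₀, Nat.sqrt n ≤ Nat.primeCounting n)
    (hℓn : n₀ ≤ ℓ) (hℓ : 1 ≤ ℓ) (hd : M.index ≤ 2 ^ ℓ) (hV : (13 * ℓ) ^ 4 ≤ V)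
    (hω : ℓ * (V + ℓ * (13 * ℓ) ^ 4) < (Nat.card G).primeFactors.card) :
    HasGiant G (2 ^ (1 + (13 * ℓ) ^ 4 * ℓ ^ 2)) V := by
  have := faithful_quotient hM
  have hd0 : 1 ≤ M.index := Nat.pos_of_ne_zero M.index_ne_zero_of_finite
  set K := (13 * ℓ) ^ 2 with hK
  have hlog : Nat.log 2 M.index ≤ ℓ := by
    have := Nat.log_mono_right (b := 2) hd
    rwa [Nat.log_pow (by norm_num)] at this
  have hR : (Finset.filter Nat.Prime (range (K + 1))).card = Nat.primeCounting K := by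
    rw [Nat.primeCounting, Nat.primeCounting', Nat.count_eq_card_filter_range]
  have hsub : Finset.filter Nat.Prime (range (K + 1)) ⊆ Icc 1 K := by
    intro p hp
    rw [mem_filter, mem_range] at hp
    exact mem_Icc.2 ⟨hp.2.one_lt.le, by omega⟩
  have hext := extracts.{u, u} (V := V) (D := M.index) (τ := (13 * ℓ) ^ 4) hd0
    (by
      have : 13 ^ 4 ≤ (13 * ℓ) ^ 4 := Nat.pow_le_pow_left (by omega) _
      omega) hV (Finset.filter Nat.Prime (range (K + 1)))
    (fun p hp => (mem_filter.1 hp).2)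
    (by
      calc ∑ p ∈ Finset.filter Nat.Prime (range (K + 1)), p ≤ ∑ p ∈ Icc 1 K, p :=
            sum_le_sum_of_subset hsub
        _ ≤ ∑ p ∈ Icc 1 K, K := sum_le_sum fun p hp => (mem_Icc.1 hp).2
        _ = (13 * ℓ) ^ 4 := by simp [hK]; ring)
    (by
      rw [hR]
      have h1 : n₀ ≤ K := by nlinarith
      have h2 := hn₀ K h1
      rw [show Nat.sqrt K = 13 * ℓ from Nat.sqrt_eq' _] at h2
      omega) ℓ
  have hcardΩ : Nat.card (G ⧸ M) = M.index := rfl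
  have hlogb : Real.logb 2 M.index ≤ ℓ := by
    rw [Real.logb_le_iff_le_rpow (by norm_num) (by exact_mod_cast hd0), Real.rpow_natCast]
    exact_mod_cast hd
  have hG : HasGiant G (2 * M.index ^ ((13 * ℓ) ^ 4 * ℓ)) V := by
    refine hext G (G ⧸ M) (Nat.card G).primeFactors ?_ hd le_rfl ?_
    · intro p hp
      exact ⟨Nat.prime_of_mem_primeFactors hp,
        movP_of_prime_dvd (Nat.prime_of_mem_primeFactors hp) (Nat.dvd_of_mem_primeFactors hp)⟩
    · rw [hcardΩ]
      have h1 : ((ℓ * (V + ℓ * (13 * ℓ) ^ 4) : ℕ) : ℝ) < (Nat.card G).primeFactors.card := by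
        exact_mod_cast hω
      refine lt_of_le_of_lt ?_ h1
      push_cast
      gcongr
  refine hG.mono ?_
  calc 2 * M.index ^ ((13 * ℓ) ^ 4 * ℓ) ≤ 2 * (2 ^ ℓ) ^ ((13 * ℓ) ^ 4 * ℓ) := by gcongr
    _ = 2 ^ (1 + (13 * ℓ) ^ 4 * ℓ ^ 2) := by rw [← pow_mul, pow_add, pow_one]; ring_nf

/-- Let `L` be a subgroup of moderate index that maps onto `Alt(k)`. The indices `m > 2 ^ J`, those
sharing a factor of at least `E` with `[G : L]`, and the remaining ones, for which `k` divides a small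
multiple of `m`, each contribute at most `1 / ℓ`. -/
theorem sum_le_of_hasGiant {G : Type u} [Group G] [Finite G] [IsSimpleGroup G] {T : Finset ℕ}
    (hT : ∀ m ∈ T, ∃ H : Subgroup G, H ≠ ⊤ ∧ H.index = m) {d ℓ V E W₂ J n₀ : ℕ}
    (hn₀ : ∀ n ≥ n₀, Nat.sqrt n ≤ Nat.primeCounting n) (hVn : n₀ ≤ V)
    (hJ : J = 16 * (ℓ + 1) ^ 2) (hW₂ : ℓ * (1 + J) ≤ W₂ + 1) (hW₂' : 60 ≤ W₂) (hE : 1 ≤ E)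
    (hℓ : 1 ≤ ℓ) (hd : d ≤ 2 ^ ℓ) (hd' : 60 ≤ d) (hdℓ : ℓ ≤ d)
    (hω : (Nat.card G).primeFactors.card ≤ d) (hG : HasGiant G (2 ^ W₂) V)
    (hV : (4 * (J + 2) ^ 3 + (J + 1) * J + 2) ^ 2 ≤ V)
    (hlogE : 20 * Real.log (W₂ + 1) ^ 2 ≤ Real.log E)
    (hB : ((((J + 1) * E : ℕ) : ℝ)) ^ 2 * (1 + Real.log (((J + 1) * E * 2 ^ J : ℕ))) / V ≤ 1 / ℓ) :
    ∑ m ∈ T, (1 : ℝ) / m ≤ 3 / ℓ := by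
  obtain ⟨k, hk, L, hL, φ, hφ⟩ := hG
  have hℓ0 : (0 : ℝ) < ℓ := by exact_mod_cast hℓ
  have hJ1 : 1 ≤ J := by rw [hJ]; nlinarith
  have hL0 : L.index ≠ 0 := L.index_ne_zero_of_finite
  have hmpos : ∀ m ∈ T, 1 ≤ m := by
    intro m hm
    obtain ⟨H, -, rfl⟩ := hT m hm
    exact Nat.pos_of_ne_zero H.index_ne_zero_of_finite
  have hlogY : Real.log ((2 ^ J : ℕ) : ℝ) = J * Real.log 2 := by
    rw [Nat.cast_pow, Real.log_pow]; norm_num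
  have hl1 := Real.log_two_gt_d9
  have hl2 := Real.log_two_lt_d9
  have hJr : (J : ℝ) = 16 * (ℓ + 1) ^ 2 := by rw [hJ]; push_cast; ring
  -- indices larger than `2 ^ J`
  have h1 : ∑ m ∈ T with 2 ^ J < m, (1 : ℝ) / m ≤ 1 / ℓ := by
    have hlogd : Real.log (d + 1) ≤ (ℓ + 1) * Real.log 2 := by
      have h : ((d : ℝ) + 1) ≤ 2 ^ (ℓ + 1) := by
        have : d + 1 ≤ 2 ^ (ℓ + 1) := by rw [pow_succ]; omega
        exact_mod_cast this
      have := Real.log_le_log (by positivity) h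
      rw [Real.log_pow] at this
      exact_mod_cast this
    have hlogd0 : 0 ≤ Real.log ((d : ℝ) + 1) := Real.log_nonneg (by linarith [Nat.cast_nonneg (α := ℝ) d])
    have h := sum_inv_divisors_le_pow (w := Nat.card G) Nat.card_pos.ne' hd' hω
      (E := ((2 ^ J : ℕ) : ℝ)) (by positivity) 1 (by
        rw [hlogY, hJr]
        have h3 := pow_le_pow_left₀ hlogd0 hlogd 2
        have h4 : 0 ≤ ((ℓ : ℝ) + 1) ^ 2 * Real.log 2 := by positivity
        push_cast
        nlinarith)
    refine le_trans (sum_le_sum_of_subset_of_nonneg ?_ fun _ _ _ => by positivity) (h.trans ?_)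
    · intro m hm
      rw [mem_filter] at hm
      obtain ⟨H, -, rfl⟩ := hT m hm.1
      rw [mem_filter, Nat.mem_divisors]
      exact ⟨⟨H.index_dvd_card, Nat.card_pos.ne'⟩, by exact_mod_cast hm.2.le⟩
    · rw [pow_one]
      have : (ℓ : ℝ) ≤ d := by exact_mod_cast hdℓ
      exact one_div_le_one_div_of_le hℓ0 (by linarith)
  -- indices sharing a large factor with `[G : L]`
  have h2 : ∑ m ∈ T with ¬ 2 ^ J < m ∧ E ≤ m.gcd L.index, (1 : ℝ) / m ≤ 1 / ℓ := by
    refine (sum_inv_le_of_gcd (N := L.index) (Y := 2 ^ J) (E := (E : ℝ)) hL0 ?_).trans ?_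
    · intro m hm
      rw [mem_filter] at hm
      exact ⟨hmpos m hm.1, not_lt.1 hm.2.1, by exact_mod_cast hm.2.2⟩
    · have hωL : L.index.primeFactors.card ≤ W₂ := by
        refine (card_primes_dvd_le_log _ (fun p hp => Nat.prime_of_mem_primeFactors hp) hL0
          (fun p hp => Nat.dvd_of_mem_primeFactors hp)).trans ?_
        have := Nat.log_mono_right (b := 2) hL
        rwa [Nat.log_pow (by norm_num)] at this
      have h := sum_inv_divisors_le_pow (w := L.index) hL0 hW₂' hωL (E := (E : ℝ))
        (by exact_mod_cast hE) 13 (by push_cast; linarith)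
      have hWr : (ℓ : ℝ) * (1 + J) ≤ W₂ + 1 := by exact_mod_cast hW₂
      have hW1 : (1 : ℝ) ≤ W₂ + 1 := by linarith [Nat.cast_nonneg (α := ℝ) W₂]
      have hpw : (W₂ + 1 : ℝ) ≤ (W₂ + 1 : ℝ) ^ 13 := le_self_pow₀ hW1 (by norm_num)
      have hY : 1 + Real.log ((2 ^ J : ℕ) : ℝ) ≤ 1 + J := by
        rw [hlogY]; nlinarith [Nat.cast_nonneg (α := ℝ) J]
      have hY0 : 0 ≤ 1 + Real.log ((2 ^ J : ℕ) : ℝ) := by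
        have := Real.log_natCast_nonneg (2 ^ J); linarith
      calc _ ≤ 1 / (W₂ + 1 : ℝ) ^ 13 * (1 + J) := mul_le_mul h hY hY0 (by positivity)
        _ ≤ 1 / ℓ := by
          rw [one_div_mul_eq_div, div_le_div_iff₀ (by positivity) hℓ0]
          linarith
  -- the remaining indices have a small multiple divisible by `k`
  have h3 : ∑ m ∈ T with ¬ 2 ^ J < m ∧ ¬ E ≤ m.gcd L.index, (1 : ℝ) / m ≤ 1 / ℓ := by
    have hπ : 4 * (J + 2) ^ 3 + (J + 1) * J + 2 ≤ Nat.primeCounting k :=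
      (Nat.le_sqrt'.2 (hV.trans hk)).trans (hn₀ k (hVn.trans hk))
    have hV1 : 1 ≤ V := le_trans (Nat.one_le_pow _ _ (by omega)) hV
    refine (sum_inv_le_of_dvd (k := k) (B := (J + 1) * E) (Y := 2 ^ J) (hV1.trans hk) ?_).trans
      (le_trans ?_ hB)
    · intro m hm
      rw [mem_filter] at hm
      obtain ⟨hm, hmY, hmE⟩ := hm
      refine ⟨hmpos m hm, not_lt.1 hmY, ?_⟩
      obtain ⟨H, hH, rfl⟩ := hT m hm
      obtain ⟨b, hb1, hb2, hb3⟩ := key_dvd hJ1 φ hφ hπ hH (not_lt.1 hmY)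
      exact ⟨b, hb1, hb2.trans (Nat.mul_le_mul_left _ (not_le.1 hmE).le), hb3⟩
    · have hkr : (V : ℝ) ≤ k := by exact_mod_cast hk
      have hV0 : (0 : ℝ) < V := by exact_mod_cast hV1
      have := Real.log_natCast_nonneg ((J + 1) * E * 2 ^ J)
      gcongr
  have hsplit : ∑ m ∈ T, (1 : ℝ) / m = ∑ m ∈ T with 2 ^ J < m, (1 : ℝ) / m +
      (∑ m ∈ T with ¬ 2 ^ J < m ∧ E ≤ m.gcd L.index, (1 : ℝ) / m +
        ∑ m ∈ T with ¬ 2 ^ J < m ∧ ¬ E ≤ m.gcd L.index, (1 : ℝ) / m) := by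
    rw [← sum_filter_add_sum_filter_not T (fun m => 2 ^ J < m)]
    congr 1
    rw [← sum_filter_add_sum_filter_not (T.filter fun m => ¬ 2 ^ J < m)
      (fun m => E ≤ m.gcd L.index), filter_filter, filter_filter]
  rw [hsplit]
  have : (3 : ℝ) / ℓ = 1 / ℓ + (1 / ℓ + 1 / ℓ) := by ring
  linarith

/-- As `|S| → ∞` over finite simple groups `S`, `𝒥(S) → 1`: for every `ε > 0` there is
an `N` such that every finite simple group of order greater than `N` satisfies
`𝒥(S) < 1 + ε`. -/
theorem HSJ_simple_tendsto_one :
    ∀ ε : ℝ, 0 < ε → ∃ N : ℕ, ∀ (S : Type u) [Group S] [Finite S],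
      IsSimpleGroup S → N < Nat.card S → HSJ S < 1 + ε := by
  intro ε hε
  obtain ⟨n₀, hn₀⟩ := sqrt_le_primeCounting
  obtain ⟨ℓ₁, hpar⟩ := params n₀
  set ℓ₀ := max (max ℓ₁ n₀) (⌈3 / ε⌉₊) with hℓ₀
  refine ⟨(2 ^ ℓ₀).factorial, ?_⟩
  intro S _ _ hS hcard
  obtain ⟨T, hT, hHSJ⟩ := HSJ_eq S
  -- a proper subgroup of minimal index `d`; since `|S|` divides `d!`, `d` is large
  obtain ⟨M, hM, hmin⟩ := Set.exists_min_image {H : Subgroup S | H ≠ ⊤} (fun H => H.index)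
    (Set.toFinite _) ⟨⊥, bot_ne_top⟩
  have hM : M ≠ ⊤ := hM
  have hmin : ∀ H : Subgroup S, H ≠ ⊤ → M.index ≤ H.index := fun H hH => hmin H hH
  set d := M.index with hd
  have hn := card_dvd_factorial_index hM
  rw [← hd] at hn
  have hdlt : 2 ^ ℓ₀ < d := by
    by_contra h
    have := (Nat.le_of_dvd (Nat.factorial_pos _) hn).trans (Nat.factorial_le (not_lt.1 h))
    omega
  set ℓ := Nat.clog 2 d with hℓ
  have hℓlt : ℓ₀ < ℓ := (Nat.lt_clog_iff_pow_lt (by norm_num)).2 hdlt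
  have hd2 : d ≤ 2 ^ ℓ := Nat.le_pow_clog (by norm_num) d
  have hd1 : 2 ^ (ℓ - 1) < d := (Nat.lt_clog_iff_pow_lt (by norm_num)).1 (by omega)
  have hℓ1 : ℓ₁ ≤ ℓ := (le_max_left _ _).trans ((le_max_left _ _).trans hℓlt.le)
  have hℓn : n₀ ≤ ℓ := (le_max_right _ _).trans ((le_max_left _ _).trans hℓlt.le)
  have hℓε : (3 : ℝ) / ε < ℓ := by
    have h1 : ⌈3 / ε⌉₊ < ℓ := lt_of_le_of_lt (le_max_right _ _) hℓlt
    exact lt_of_le_of_lt (Nat.le_ceil _) (by exact_mod_cast h1)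
  have hdℓ : ℓ ≤ d := by
    have := Nat.lt_two_pow_self (n := ℓ - 1)
    omega
  obtain ⟨V, E, h60, hE1, hτV, hVn, hV, hlogW, hlogE, hB⟩ := hpar ℓ hℓ1
  have hℓ0 : (0 : ℝ) < ℓ := by exact_mod_cast (by omega : 0 < ℓ)
  have hω : (Nat.card S).primeFactors.card ≤ d := by
    have hsub : (Nat.card S).primeFactors ⊆ Icc 1 d := by
      intro p hp
      have hpp := Nat.prime_of_mem_primeFactors hp
      exact mem_Icc.2 ⟨hpp.one_lt.le,
        hpp.dvd_factorial.1 ((Nat.dvd_of_mem_primeFactors hp).trans hn)⟩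
    simpa using card_le_card hsub
  have hmain : ∑ m ∈ T, (1 : ℝ) / m ≤ 3 / ℓ := by
    by_cases hcase : (Nat.card S).primeFactors.card ≤ ℓ * (V + ℓ * (13 * ℓ) ^ 4)
    -- few prime divisors: Rankin's bound for the divisors `m ≥ d` of `|S|` suffices
    · set W := ℓ * (V + ℓ * (13 * ℓ) ^ 4) with hW
      have hℓW : ℓ ≤ W := by
        have h1 : 1 ≤ (13 * ℓ) ^ 4 := Nat.one_le_pow _ _ (by omega)
        have : ℓ * 1 ≤ W := Nat.mul_le_mul_left _ (by omega)
        omega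
      have hd0 : (0 : ℝ) < d := by exact_mod_cast (by omega : 0 < d)
      have hlogd : (ℓ : ℝ) / 2 ≤ Real.log d := by
        have h1 : ((2 : ℝ) ^ (ℓ - 1)) ≤ d := by exact_mod_cast hd1.le
        have h2 := Real.log_le_log (by positivity) h1
        rw [Real.log_pow, Nat.cast_sub (by omega)] at h2
        have h3 := Real.log_two_gt_d9
        have h4 : (60 : ℝ) ≤ ℓ := by exact_mod_cast h60
        push_cast at h2
        nlinarith
      have h := sum_inv_divisors_le_pow (w := Nat.card S) Nat.card_pos.ne' (h60.trans hℓW) hcase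
        (E := (d : ℝ)) hd0 1 (by push_cast at hlogW ⊢; linarith)
      refine le_trans (sum_le_sum_of_subset_of_nonneg ?_ fun _ _ _ => by positivity) (h.trans ?_)
      · intro m hm
        obtain ⟨H, hH, rfl⟩ := hT m hm
        rw [mem_filter, Nat.mem_divisors]
        exact ⟨⟨H.index_dvd_card, Nat.card_pos.ne'⟩, by exact_mod_cast hmin H hH⟩
      · rw [pow_one]
        have h5 : (ℓ : ℝ) ≤ W := by exact_mod_cast hℓW
        rw [div_le_div_iff₀ (by positivity) hℓ0]
        linarith
    · have hG := hasGiant_of_card_primeFactors hM hn₀ hℓn (by omega) hd2 hτV (not_le.1 hcase)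
      refine sum_le_of_hasGiant hT hn₀ hVn rfl ?_ ?_ hE1 (by omega) hd2 (by omega) hdℓ hω hG hV
        hlogE hB
      · have h1 : (13 * ℓ) ^ 4 * ℓ ^ 2 = 28561 * ℓ ^ 3 * ℓ ^ 3 := by ring
        have h2 : 1 ≤ ℓ ^ 3 := Nat.one_le_pow _ _ (by omega)
        have h3 : 28561 * ℓ ^ 3 * 1 ≤ 28561 * ℓ ^ 3 * ℓ ^ 3 := Nat.mul_le_mul_left _ h2
        have h4 : ℓ * (1 + 16 * (ℓ + 1) ^ 2) ≤ 28561 * ℓ ^ 3 := by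
          have h5 : 1 + 16 * (ℓ + 1) ^ 2 ≤ 28561 * ℓ ^ 2 := by nlinarith
          calc _ ≤ ℓ * (28561 * ℓ ^ 2) := Nat.mul_le_mul_left _ h5
            _ = _ := by ring
        omega
      · have h1 : ℓ ^ 2 ≤ (13 * ℓ) ^ 4 * ℓ ^ 2 :=
          Nat.le_mul_of_pos_left _ (Nat.pow_pos (by omega))
        nlinarith
  rw [hHSJ]
  have : (3 : ℝ) / ℓ < ε := by
    rw [div_lt_iff₀ hε] at hℓε
    rw [div_lt_iff₀ hℓ0]; linarith
  linarith

end
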